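/- There exist absolute constants c > 0 and C > 0 such that the following holds for all sufficiently large N. Let A ⊆ [N] be a set with no non-zero square differences and density α = |A|/N with 0 < α ≤ e^{−e}, and set ν = exp(−c·log(1/α)/log log(1/α)). Then either (1) log(1/α) ≥ c·(log N)/(log log N), or (2) there exists an integer N' ≥ c·α^C·N and a set A' ⊆ [N'] with no non-zero square differences whose density α' = |A'|/N' satisfies α' ≥ (1 + ν/20)·α. -/

import Mathlib

/-- `A` has no non-zero square differences. -/
def NoSquareDiff (A : Finset ℕ) : Prop :=
  ∀ a ∈ A, ∀ b ∈ A, ∀ n : ℕ, 0 < n → a ≠ b + n ^ 2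

open Finset

theorem card_divisors_mul_le (m n : ℕ) :
    (m * n).divisors.card ≤ m.divisors.card * n.divisors.card := by
  rw [Nat.divisors_mul]
  exact Finset.card_mul_le

/-- Logarithmic moments of the divisor function. -/
theorem sum_card_divisors_pow_div_le (j X : ℕ) :
    ∑ n ∈ Icc 1 X, (n.divisors.card : ℝ) ^ j / n ≤ (1 + Real.log X) ^ 2 ^ j := by
  induction j with
  | zero =>
    have h := harmonic_le_one_add_log X
    rw [harmonic_eq_sum_Icc] at h
    push_cast at h
    simpa using h
  | succ j ih =>
    have h0 : (0 : ℝ) ≤ ∑ n ∈ Icc 1 X, (n.divisors.card : ℝ) ^ j / n :=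
      Finset.sum_nonneg fun n _ => by positivity
    calc ∑ n ∈ Icc 1 X, (n.divisors.card : ℝ) ^ (j + 1) / n
        ≤ ∑ n ∈ Icc 1 X, ∑ x ∈ n.divisorsAntidiagonal,
            ((x.1.divisors.card : ℝ) ^ j / x.1) * ((x.2.divisors.card : ℝ) ^ j / x.2) := by
          refine Finset.sum_le_sum fun n hn => ?_
          have hn1 : 1 ≤ n := (Finset.mem_Icc.1 hn).1
          have hcard : (n.divisors.card : ℝ) = ∑ x ∈ n.divisorsAntidiagonal, (1 : ℝ) := by
            rw [Finset.sum_const, nsmul_eq_mul, mul_one]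
            congr 1
            rw [← Nat.map_div_right_divisors, Finset.card_map]
          have : (n.divisors.card : ℝ) ^ (j + 1) / n =
              ∑ x ∈ n.divisorsAntidiagonal, (n.divisors.card : ℝ) ^ j / n := by
            rw [pow_succ, hcard, Finset.sum_const, Finset.sum_const, nsmul_eq_mul, nsmul_eq_mul]
            ring
          rw [this]
          refine Finset.sum_le_sum fun x hx => ?_
          have hx' := Nat.mem_divisorsAntidiagonal.1 hx
          rw [div_mul_div_comm, ← mul_pow, ← hx'.1]
          push_cast
          gcongr
          exact_mod_cast card_divisors_mul_le x.1 x.2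
      _ ≤ ∑ x ∈ Icc 1 X ×ˢ Icc 1 X,
            ((x.1.divisors.card : ℝ) ^ j / x.1) * ((x.2.divisors.card : ℝ) ^ j / x.2) := by
          rw [← Finset.sum_biUnion]
          · refine Finset.sum_le_sum_of_subset_of_nonneg ?_ fun x _ _ => by positivity
            intro x hx
            obtain ⟨n, hn, hx⟩ := Finset.mem_biUnion.1 hx
            have hx' := Nat.mem_divisorsAntidiagonal.1 hx
            have hn' := Finset.mem_Icc.1 hn
            have h1 : x.1 ≠ 0 := by rintro h; simp [h] at hx'; omega
            have h2 : x.2 ≠ 0 := by rintro h; simp [h] at hx'; omega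
            rw [Finset.mem_product, Finset.mem_Icc, Finset.mem_Icc]
            refine ⟨⟨by omega, ?_⟩, ⟨by omega, ?_⟩⟩
            · calc x.1 ≤ x.1 * x.2 := Nat.le_mul_of_pos_right _ (by omega)
                _ ≤ X := by omega
            · calc x.2 ≤ x.1 * x.2 := Nat.le_mul_of_pos_left _ (by omega)
                _ ≤ X := by omega
          · intro a _ b _ hab
            refine Finset.disjoint_left.2 fun x hx hx' => hab ?_
            rw [← (Nat.mem_divisorsAntidiagonal.1 hx).1, (Nat.mem_divisorsAntidiagonal.1 hx').1]
      _ = (∑ n ∈ Icc 1 X, (n.divisors.card : ℝ) ^ j / n) ^ 2 := by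
          rw [sq, Finset.sum_mul_sum, Finset.sum_product]
      _ ≤ ((1 + Real.log X) ^ 2 ^ j) ^ 2 := by gcongr
      _ = (1 + Real.log X) ^ 2 ^ (j + 1) := by rw [← pow_mul, pow_succ]

/-- The pointwise divisor bound coming from the logarithmic moments. -/
theorem card_divisors_pow_le (j n : ℕ) (hn : 1 ≤ n) :
    (n.divisors.card : ℝ) ^ j ≤ n * (1 + Real.log n) ^ 2 ^ j := by
  have h := sum_card_divisors_pow_div_le j n
  have h1 : (n.divisors.card : ℝ) ^ j / n ≤
      ∑ m ∈ Icc 1 n, (m.divisors.card : ℝ) ^ j / m :=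
    Finset.single_le_sum (f := fun m : ℕ => (m.divisors.card : ℝ) ^ j / m)
      (fun m _ => by positivity) (Finset.mem_Icc.2 ⟨hn, le_rfl⟩)
  have hn' : (0 : ℝ) < n := by exact_mod_cast hn
  have := (div_le_iff₀ hn').1 (h1.trans h)
  linarith

theorem sum_range_mul_eq {M : Type*} [AddCommMonoid M] (p l : ℕ) (F : ℕ → M) :
    ∑ x ∈ range (p * l), F x = ∑ y ∈ range l, ∑ j ∈ range p, F (y + l * j) := by
  induction p with
  | zero => simp
  | succ p ih =>
    rw [Nat.succ_mul, Finset.sum_range_add, ih]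
    simp_rw [Finset.sum_range_succ]
    rw [Finset.sum_add_distrib]
    congr 1
    refine Finset.sum_congr rfl fun y _ => ?_
    rw [Nat.add_comm, Nat.mul_comm]

/-- Sums of periodic functions over a full period are invariant under unit dilations. -/
theorem sum_range_mul_of_coprime {M : Type*} [AddCommMonoid M] (p u : ℕ) (hp : 0 < p)
    (hu : Nat.Coprime u p) (G : ℕ → M) (hG : Function.Periodic G p) :
    ∑ j ∈ range p, G (u * j) = ∑ j ∈ range p, G j := by
  have hmod : ∀ x, G x = G (x % p) := fun x => (hG.map_mod_nat x).symm
  have hinj : Set.InjOn (fun j => u * j % p) (range p : Set ℕ) := by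
    intro a ha b hb hab
    have ha' := Finset.mem_range.1 (Finset.mem_coe.1 ha)
    have hb' := Finset.mem_range.1 (Finset.mem_coe.1 hb)
    have h : u * a ≡ u * b [MOD p] := hab
    have h2 := Nat.ModEq.cancel_left_of_coprime (by rw [Nat.gcd_comm]; exact hu) h
    exact Nat.ModEq.eq_of_lt_of_lt h2 ha' hb'
  have himg : (range p).image (fun j => u * j % p) = range p := by
    apply Finset.eq_of_subset_of_card_le
    · intro x hx
      obtain ⟨j, _, rfl⟩ := Finset.mem_image.1 hx
      exact Finset.mem_range.2 (Nat.mod_lt _ hp)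
    · rw [Finset.card_image_of_injOn hinj]
  calc ∑ j ∈ range p, G (u * j) = ∑ j ∈ range p, G (u * j % p) :=
        Finset.sum_congr rfl fun j _ => hmod _
    _ = ∑ j ∈ (range p).image (fun j => u * j % p), G j := by
        rw [Finset.sum_image hinj]
    _ = _ := by rw [himg]

/-- Hölder's inequality with at least two factors, in terms of `ℓ²` norms. -/
theorem sum_prod_le_prod_sqrt {ι κ : Type*} [DecidableEq ι] (S : Finset ι) (T : Finset κ)
    (a : ι → κ → ℝ) (ha : ∀ i j, 0 ≤ a i j) {i₀ i₁ : ι} (h₀ : i₀ ∈ S) (h₁ : i₁ ∈ S)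
    (hne : i₀ ≠ i₁) :
    ∑ j ∈ T, ∏ i ∈ S, a i j ≤ ∏ i ∈ S, √(∑ j ∈ T, a i j ^ 2) := by
  have h₁' : i₁ ∈ S.erase i₀ := Finset.mem_erase.2 ⟨hne.symm, h₁⟩
  set R := (S.erase i₀).erase i₁
  have hsplit : ∀ f : ι → ℝ, ∏ i ∈ S, f i = f i₀ * f i₁ * ∏ i ∈ R, f i := fun f => by
    rw [← Finset.mul_prod_erase S f h₀, ← Finset.mul_prod_erase (S.erase i₀) f h₁', mul_assoc]
  have hle : ∀ i, ∀ j ∈ T, a i j ≤ √(∑ j ∈ T, a i j ^ 2) := fun i j hj =>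
    Real.le_sqrt_of_sq_le
      (Finset.single_le_sum (f := fun j => a i j ^ 2) (fun j _ => sq_nonneg _) hj)
  rw [hsplit]
  calc ∑ j ∈ T, ∏ i ∈ S, a i j
      ≤ ∑ j ∈ T, a i₀ j * a i₁ j * ∏ i ∈ R, √(∑ j ∈ T, a i j ^ 2) := by
        refine Finset.sum_le_sum fun j hj => ?_
        rw [hsplit]
        have := Finset.prod_le_prod (s := R) (fun i _ => ha i j) (fun i _ => hle i j hj)
        have h0 := ha i₀ j
        have h1 := ha i₁ j
        gcongr
    _ = (∑ j ∈ T, a i₀ j * a i₁ j) * ∏ i ∈ R, √(∑ j ∈ T, a i j ^ 2) := by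
        rw [Finset.sum_mul]
    _ ≤ _ := by
        gcongr
        exact Real.sum_mul_le_sqrt_mul_sqrt _ _ _

/-- A Finner type inequality: a product of nonnegative periodic functions, in which every prime
power dividing the common period divides at least two of the individual periods. -/
theorem sum_prod_le_prod_sqrt_of_periodic {ι : Type*} [Fintype ι] [DecidableEq ι] (l : ℕ)
    (hl : l ≠ 0) (q : ι → ℕ) (h : ι → ℕ → ℝ) (hq : ∀ i, q i ∣ l) (h0 : ∀ i x, 0 ≤ h i x)
    (hper : ∀ i, Function.Periodic (h i) (q i))
    (hcov : ∀ p e : ℕ, p.Prime → 1 ≤ e → p ^ e ∣ l → ∃ i j, i ≠ j ∧ p ^ e ∣ q i ∧ p ^ e ∣ q j) :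
    ∑ x ∈ range l, ∏ i, h i x ≤ ∏ i, √(∑ y ∈ range (q i), h i y ^ 2) := by
  induction l using Nat.strong_induction_on generalizing q h with
  | _ l ih =>
  by_cases hl1 : l = 1
  · subst hl1
    have : ∀ i, q i = 1 := fun i => Nat.dvd_one.1 (hq i)
    simp only [this, Finset.sum_range_one]
    exact Finset.prod_le_prod (fun i _ => h0 i 0) fun i _ => (Real.sqrt_sq (h0 i 0)).ge
  obtain ⟨p, hp, hpl⟩ := Nat.exists_prime_and_dvd hl1
  obtain ⟨v, m, hpm, hlm⟩ := Nat.exists_eq_pow_mul_and_not_dvd hl p hp.ne_one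
  obtain ⟨w, rfl⟩ : ∃ w, v = w + 1 := by
    refine ⟨v - 1, ?_⟩
    have : v ≠ 0 := by
      rintro rfl
      rw [pow_zero, one_mul] at hlm
      exact hpm (hlm ▸ hpl)
    omega
  set l' := p ^ w * m with hl'
  have hll' : l = p * l' := by rw [hlm, hl', pow_succ]; ring
  have hl'0 : l' ≠ 0 := by
    intro h
    rw [h, mul_zero] at hll'
    exact hl hll'
  have hl'l : l' < l := by
    rw [hll']
    have := hp.two_le
    have : 0 < l' := Nat.pos_of_ne_zero hl'0
    nlinarith
  have hnS : ∀ i, ¬ p ^ (w + 1) ∣ q i → q i ∣ l' := by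
    intro i hi
    have h1 := hq i
    rw [hlm] at h1
    obtain ⟨a, b, ha, hb, hab⟩ := (Nat.dvd_mul).1 h1
    obtain ⟨j, hj, rfl⟩ := (Nat.dvd_prime_pow hp).1 ha
    have hjw : j ≠ w + 1 := by
      rintro rfl
      exact hi ⟨b, hab.symm⟩
    rw [← hab]
    exact mul_dvd_mul (pow_dvd_pow p (by omega)) hb
  have hS : ∀ i, p ^ (w + 1) ∣ q i → ∃ b u, q i = p * (p ^ w * b) ∧ l' = (p ^ w * b) * u ∧
      u.Coprime p := by
    rintro i ⟨b, hb⟩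
    have h1 := hq i
    rw [hlm, hb] at h1
    obtain ⟨u, hu⟩ := Nat.dvd_of_mul_dvd_mul_left (pow_pos hp.pos _) h1
    refine ⟨b, u, by rw [hb, pow_succ]; ring, by rw [hl', hu]; ring, ?_⟩
    refine ((Nat.Prime.coprime_iff_not_dvd hp).2 fun h => hpm ?_).symm
    rw [hu]
    exact h.mul_left b
  set q' : ι → ℕ := fun i => if p ^ (w + 1) ∣ q i then q i / p else q i with hq'
  set h' : ι → ℕ → ℝ := fun i y => if p ^ (w + 1) ∣ q i then
    √(∑ j ∈ range p, h i (y + (q i / p) * j) ^ 2) else h i y with hh'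
  have hIH : ∑ x ∈ range l', ∏ i, h' i x ≤ ∏ i, √(∑ y ∈ range (q' i), h' i y ^ 2) := by
    refine ih l' hl'l hl'0 q' h' ?_ ?_ ?_ ?_
    · intro i
      by_cases hi : p ^ (w + 1) ∣ q i
      · obtain ⟨b, u, hb, hu, -⟩ := hS i hi
        simp only [hq', hi, if_true]
        rw [hb, Nat.mul_div_cancel_left _ hp.pos, hu]
        exact dvd_mul_right _ _
      · simp only [hq', hi, if_false]
        exact hnS i hi
    · intro i x
      by_cases hi : p ^ (w + 1) ∣ q i
      · simp only [hh', hi, if_true]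
        positivity
      · simp only [hh', hi, if_false]
        exact h0 i x
    · intro i y
      by_cases hi : p ^ (w + 1) ∣ q i
      · obtain ⟨b, u, hb, hu, -⟩ := hS i hi
        simp only [hh', hq', hi, if_true]
        congr 1
        have hqp : q i / p * p = q i := Nat.div_mul_cancel ((dvd_pow_self p (by omega)).trans hi)
        have e1 := Finset.sum_range_succ (fun j => h i (y + q i / p * j) ^ 2) p
        have e2 := Finset.sum_range_succ' (fun j => h i (y + q i / p * j) ^ 2) p
        have e3 : h i (y + q i / p * p) = h i (y + q i / p * 0) := by
          rw [hqp, mul_zero, add_zero]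
          exact hper i y
        rw [e3] at e1
        have e4 := e2.symm.trans e1
        rw [add_left_inj] at e4
        rw [← e4]
        refine Finset.sum_congr rfl fun j _ => ?_
        congr 2
        ring
      · simp only [hh', hq', hi, if_false]
        exact hper i y
    · intro p' e hp' he hdvd
      obtain ⟨i, j, hij, h1, h2⟩ := hcov p' e hp' he (hdvd.trans ⟨p, by rw [hll']; ring⟩)
      have key : ∀ i, p' ^ e ∣ q i → p' ^ e ∣ q' i := by
        intro i hi'
        by_cases hi : p ^ (w + 1) ∣ q i
        · obtain ⟨b, u, hb, hu, -⟩ := hS i hi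
          simp only [hq', hi, if_true]
          rw [hb, Nat.mul_div_cancel_left _ hp.pos]
          by_cases hpp : p' = p
          · subst hpp
            have hew : e ≤ w := by
              by_contra hcon
              have : p' ^ (w + 1) ∣ l' := (pow_dvd_pow p' (by omega)).trans hdvd
              rw [hl', pow_succ] at this
              exact hpm (Nat.dvd_of_mul_dvd_mul_left (pow_pos hp.pos _) this)
            exact (pow_dvd_pow p' hew).trans (dvd_mul_right _ _)
          · have hc : Nat.Coprime (p' ^ e) p :=
              Nat.Coprime.pow_left _ ((Nat.coprime_primes hp' hp).2 hpp)
            rw [hb] at hi'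
            exact hc.dvd_of_dvd_mul_left hi'
        · simp only [hq', hi, if_false]
          exact hi'
      exact ⟨i, j, hij, key i h1, key j h2⟩
  have hfin : ∀ i, ∑ y ∈ range (q' i), h' i y ^ 2 = ∑ y ∈ range (q i), h i y ^ 2 := by
    intro i
    by_cases hi : p ^ (w + 1) ∣ q i
    · have hqp : p * (q i / p) = q i := Nat.mul_div_cancel' ((dvd_pow_self p (by omega)).trans hi)
      simp only [hh', hq', hi, if_true]
      conv_rhs => rw [← hqp, sum_range_mul_eq]
      refine Finset.sum_congr rfl fun y _ => ?_
      rw [Real.sq_sqrt (by positivity)]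
    · simp only [hh', hq', hi, if_false]
  simp_rw [hfin] at hIH
  refine le_trans ?_ hIH
  rw [hll', sum_range_mul_eq]
  refine Finset.sum_le_sum fun y _ => ?_
  set S := Finset.univ.filter fun i => p ^ (w + 1) ∣ q i with hSdef
  have hsplit : ∀ f : ι → ℝ, ∏ i, f i = (∏ i ∈ S, f i) *
      ∏ i ∈ Finset.univ.filter (fun i => ¬ p ^ (w + 1) ∣ q i), f i := fun f =>
    (Finset.prod_filter_mul_prod_filter_not _ _ _).symm
  obtain ⟨i, j, hij, h1, h2⟩ := hcov p (w + 1) hp (by omega) ⟨m, hlm⟩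
  have hH := sum_prod_le_prod_sqrt S (range p) (fun i j => h i (y + l' * j))
    (fun i j => h0 i _) (i₀ := i) (i₁ := j) (by simp [hSdef, h1]) (by simp [hSdef, h2]) hij
  have hrest : ∀ j, ∏ i ∈ Finset.univ.filter (fun i => ¬ p ^ (w + 1) ∣ q i), h i (y + l' * j) =
      ∏ i ∈ Finset.univ.filter (fun i => ¬ p ^ (w + 1) ∣ q i), h' i y := by
    intro j
    refine Finset.prod_congr rfl fun i hi => ?_
    have hi' := (Finset.mem_filter.1 hi).2
    simp only [hh', hi', if_false]
    obtain ⟨u, hu⟩ := hnS i hi'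
    have := (hper i).nat_mul (u * j) y
    rw [← this]
    congr 1
    rw [hu]
    push_cast
    ring
  calc ∑ j ∈ range p, ∏ i, h i (y + l' * j)
      = (∑ j ∈ range p, ∏ i ∈ S, h i (y + l' * j)) *
        ∏ i ∈ Finset.univ.filter (fun i => ¬ p ^ (w + 1) ∣ q i), h' i y := by
        rw [Finset.sum_mul]
        refine Finset.sum_congr rfl fun j _ => ?_
        rw [hsplit, hrest]
    _ ≤ (∏ i ∈ S, √(∑ j ∈ range p, h i (y + l' * j) ^ 2)) *
        ∏ i ∈ Finset.univ.filter (fun i => ¬ p ^ (w + 1) ∣ q i), h' i y := by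
        refine mul_le_mul_of_nonneg_right hH (Finset.prod_nonneg fun i hi => ?_)
        simp only [hh', (Finset.mem_filter.1 hi).2, if_false]
        exact h0 i y
    _ = ∏ i, h' i y := by
        rw [hsplit]
        congr 1
        refine Finset.prod_congr rfl fun i hi => ?_
        have hi' := (Finset.mem_filter.1 hi).2
        simp only [hh', hi', if_true]
        congr 1
        obtain ⟨b, u, hb, hu, hup⟩ := hS i hi'
        have hqp : q i / p = p ^ w * b := by rw [hb, Nat.mul_div_cancel_left _ hp.pos]
        rw [hqp, ← sum_range_mul_of_coprime p u hp.pos hup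
          (fun j => h i (y + p ^ w * b * j) ^ 2)]
        · refine Finset.sum_congr rfl fun j _ => ?_
          rw [hu, mul_assoc]
        · intro j
          show h i (y + p ^ w * b * (j + p)) ^ 2 = _
          rw [show y + p ^ w * b * (j + p) = (y + p ^ w * b * j) + q i by rw [hb]; ring, hper i]

theorem exists_pow_dvd_of_pow_dvd_lcm {ι : Type*} [DecidableEq ι] {p e : ℕ} (hp : p.Prime)
    (he : 1 ≤ e) (s : Finset ι) (f : ι → ℕ) (hf : ∀ i ∈ s, f i ≠ 0) (h : p ^ e ∣ s.lcm f) :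
    ∃ i ∈ s, p ^ e ∣ f i := by
  induction s using Finset.induction_on with
  | empty =>
    rw [Finset.lcm_empty, Nat.dvd_one, Nat.pow_eq_one] at h
    have := hp.ne_one
    omega
  | insert a s ha ih =>
    have h1 : f a ≠ 0 := hf a (Finset.mem_insert_self _ _)
    have h2 : s.lcm f ≠ 0 :=
      Finset.lcm_ne_zero_iff.2 fun i hi => hf i (Finset.mem_insert_of_mem hi)
    rw [Finset.lcm_insert] at h
    change p ^ e ∣ Nat.lcm (f a) (s.lcm f) at h
    rw [hp.pow_dvd_iff_le_factorization (Nat.lcm_ne_zero h1 h2), Nat.factorization_lcm h1 h2,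
      Finsupp.sup_apply, le_sup_iff, ← hp.pow_dvd_iff_le_factorization h1,
      ← hp.pow_dvd_iff_le_factorization h2] at h
    rcases h with h | h
    · exact ⟨a, Finset.mem_insert_self _ _, h⟩
    · obtain ⟨i, hi, hdvd⟩ := ih (fun i hi => hf i (Finset.mem_insert_of_mem hi)) h
      exact ⟨i, Finset.mem_insert_of_mem hi, hdvd⟩

/-- Each entry of the tuple divides the least common multiple of the other entries. -/
def Admissible {n : ℕ} (t : Fin n → ℕ) : Prop :=
  ∀ i, t i ∣ (univ.erase i).lcm t

noncomputable instance {n : ℕ} : DecidablePred (Admissible (n := n)) := Classical.decPred _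

theorem Admissible.exists_pair {n : ℕ} {t : Fin n → ℕ} (ht : Admissible t) (h0 : ∀ i, t i ≠ 0)
    {p e : ℕ} (hp : p.Prime) (he : 1 ≤ e) (h : p ^ e ∣ univ.lcm t) :
    ∃ i j, i ≠ j ∧ p ^ e ∣ t i ∧ p ^ e ∣ t j := by
  obtain ⟨i, -, hi⟩ := exists_pow_dvd_of_pow_dvd_lcm hp he univ t (fun i _ => h0 i) h
  obtain ⟨j, hj, hj'⟩ := exists_pow_dvd_of_pow_dvd_lcm hp he (univ.erase i) t (fun i _ => h0 i)
    (hi.trans (ht i))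
  exact ⟨i, j, (Finset.ne_of_mem_erase hj).symm, hi, hj'⟩

theorem Admissible.lcm_sq_dvd_prod {n : ℕ} {t : Fin n → ℕ} (ht : Admissible t)
    (h0 : ∀ i, t i ≠ 0) : (univ.lcm t) ^ 2 ∣ ∏ i, t i := by
  have hl : univ.lcm t ≠ 0 := Finset.lcm_ne_zero_iff.2 fun i _ => h0 i
  rw [← Nat.factorization_prime_le_iff_dvd (pow_ne_zero 2 hl)
    (Finset.prod_ne_zero_iff.2 fun i _ => h0 i)]
  intro p hp
  rw [Nat.factorization_pow, Nat.factorization_prod fun i _ => h0 i, Finsupp.smul_apply,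
    Finset.sum_apply', smul_eq_mul]
  rcases Nat.eq_zero_or_pos ((univ.lcm t).factorization p) with h | h
  · simp [h]
  obtain ⟨i, j, hij, hi, hj⟩ := ht.exists_pair h0 hp h
    ((hp.pow_dvd_iff_le_factorization hl).2 le_rfl)
  rw [hp.pow_dvd_iff_le_factorization (h0 _)] at hi hj
  have := Finset.sum_le_sum_of_subset (f := fun i => (t i).factorization p)
    (Finset.subset_univ {i, j})
  rw [Finset.sum_pair hij] at this
  omega

theorem Admissible.lcm_le {k : ℕ} {t : Fin (2 * k) → ℕ} (ht : Admissible t)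
    (h0 : ∀ i, t i ≠ 0) {Z : ℕ} (hZ : ∀ i, t i ≤ Z) : univ.lcm t ≤ Z ^ k := by
  have h1 := Nat.le_of_dvd (Finset.prod_pos fun i _ => Nat.pos_of_ne_zero (h0 i))
    (ht.lcm_sq_dvd_prod h0)
  have h2 : ∏ i, t i ≤ Z ^ (2 * k) := by
    calc ∏ i, t i ≤ ∏ _i : Fin (2 * k), Z := Finset.prod_le_prod' fun i _ => hZ i
      _ = _ := by simp
  have h3 : (univ.lcm t) ^ 2 ≤ (Z ^ k) ^ 2 := by
    rw [← pow_mul, mul_comm k]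
    exact h1.trans h2
  exact (Nat.pow_le_pow_iff_left (by norm_num)).1 h3

theorem lcm_le_pow {n : ℕ} {t : Fin n → ℕ} (h0 : ∀ i, t i ≠ 0) {Z : ℕ} (hZ : ∀ i, t i ≤ Z) :
    univ.lcm t ≤ Z ^ n := by
  calc univ.lcm t ≤ ∏ i, t i :=
        Nat.le_of_dvd (Finset.prod_pos fun i _ => Nat.pos_of_ne_zero (h0 i))
          (Finset.lcm_dvd_prod _ _)
    _ ≤ ∏ _i : Fin n, Z := Finset.prod_le_prod' fun i _ => hZ i
    _ = _ := by simp

theorem sum_range_add_of_periodic {M : Type*} [AddCommGroup M] {F : ℕ → M} {l : ℕ}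
    (hF : Function.Periodic F l) (a : ℕ) :
    ∑ x ∈ range l, F (x + a) = ∑ x ∈ range l, F x := by
  induction a with
  | zero => simp
  | succ a ih =>
    rw [← ih]
    have e1 := Finset.sum_range_succ (fun j => F (j + a)) l
    have e2 := Finset.sum_range_succ' (fun j => F (j + a)) l
    have e3 : F (l + a) = F (0 + a) := by rw [add_comm l, hF, zero_add]
    rw [e3] at e1
    have e4 := e2.symm.trans e1
    rw [add_left_inj] at e4
    rw [← e4]
    refine Finset.sum_congr rfl fun j _ => ?_
    congr 1
    ring

theorem periodic_of_dvd {M : Type*} {F : ℕ → M} {q l : ℕ} (hF : Function.Periodic F q)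
    (h : q ∣ l) : Function.Periodic F l := by
  obtain ⟨u, rfl⟩ := h
  have := hF.nat_mul u
  rwa [mul_comm, Nat.cast_id] at this

/-- Sums of bounded periodic functions over an interval. -/
theorem abs_sum_range_le_of_periodic {F : ℕ → ℝ} {l : ℕ} (hl : 0 < l)
    (hF : Function.Periodic F l) {U : ℝ} (hU : ∀ x, |F x| ≤ U) (X : ℕ) :
    |∑ x ∈ range X, F x| ≤ X / l * |∑ x ∈ range l, F x| + l * U := by
  have h1 : ∀ m, ∑ x ∈ range (l * m), F x = m * ∑ x ∈ range l, F x := by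
    intro m
    rw [mul_comm, sum_range_mul_eq, Finset.mul_sum]
    refine Finset.sum_congr rfl fun y _ => ?_
    rw [Finset.sum_congr rfl (g := fun _ => F y), Finset.sum_const, Finset.card_range,
      nsmul_eq_mul]
    intro j _
    exact periodic_of_dvd hF (dvd_mul_right l j) y
  have hU0 : 0 ≤ U := (abs_nonneg _).trans (hU 0)
  rw [← Nat.div_add_mod X l, Finset.sum_range_add, h1]
  refine (abs_add_le _ _).trans (add_le_add ?_ ?_)
  · rw [abs_mul, Nat.abs_cast]
    refine mul_le_mul_of_nonneg_right ?_ (abs_nonneg _)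
    rw [Nat.div_add_mod]
    exact Nat.cast_div_le
  · refine (Finset.abs_sum_le_sum_abs _ _).trans ?_
    refine (Finset.sum_le_sum fun x _ => hU _).trans ?_
    rw [Finset.sum_const, Finset.card_range, nsmul_eq_mul]
    refine mul_le_mul_of_nonneg_right ?_ hU0
    exact_mod_cast (Nat.mod_lt X hl).le

theorem prod_periodic_lcm {n : ℕ} {t : Fin n → ℕ} {g : ℕ → ℕ → ℝ} (s : Finset (Fin n))
    (hper : ∀ i, Function.Periodic (g (t i)) (t i)) :
    Function.Periodic (fun x => ∏ i ∈ s, g (t i) x) (s.lcm t) := by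
  intro x
  refine Finset.prod_congr rfl fun i hi => ?_
  exact periodic_of_dvd (hper i) (Finset.dvd_lcm hi) x

/-- Correlations over a full period vanish for inadmissible tuples. -/
theorem sum_prod_eq_zero_of_not_admissible {n : ℕ} {t : Fin n → ℕ} {g : ℕ → ℕ → ℝ}
    (h0 : ∀ i, t i ≠ 0) (hper : ∀ i, Function.Periodic (g (t i)) (t i))
    (hvan : ∀ i d x, ¬ t i ∣ d → ∑ j ∈ range (t i), g (t i) (x + d * j) = 0)
    (ht : ¬ Admissible t) : ∑ x ∈ range (univ.lcm t), ∏ i, g (t i) x = 0 := by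
  simp only [Admissible, not_forall] at ht
  obtain ⟨i, hi⟩ := ht
  set l₁ := (univ.erase i).lcm t with hl₁
  have hF := prod_periodic_lcm (g := g) univ hper
  have hH := prod_periodic_lcm (g := g) (univ.erase i) hper
  have h1 : (t i : ℝ) * ∑ x ∈ range (univ.lcm t), ∏ i, g (t i) x = 0 := by
    calc (t i : ℝ) * ∑ x ∈ range (univ.lcm t), ∏ i, g (t i) x
        = ∑ j ∈ range (t i), ∑ x ∈ range (univ.lcm t), ∏ i, g (t i) (x + l₁ * j) := by
          rw [Finset.sum_congr rfl fun j _ =>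
            sum_range_add_of_periodic (F := fun x => ∏ i, g (t i) x) hF (l₁ * j)]
          simp
      _ = ∑ x ∈ range (univ.lcm t), (∏ i' ∈ univ.erase i, g (t i') x) *
            ∑ j ∈ range (t i), g (t i) (x + l₁ * j) := by
          rw [Finset.sum_comm]
          refine Finset.sum_congr rfl fun x _ => ?_
          rw [Finset.mul_sum]
          refine Finset.sum_congr rfl fun j _ => ?_
          rw [← Finset.mul_prod_erase univ _ (Finset.mem_univ i), mul_comm]
          congr 1
          exact periodic_of_dvd hH (dvd_mul_right l₁ j) x
      _ = 0 := Finset.sum_eq_zero fun x _ => by rw [hvan i l₁ x hi, mul_zero]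
  have := h0 i
  simpa [this] using h1

theorem Admissible.abs_sum_prod_le {n : ℕ} {t : Fin n → ℕ} (ht : Admissible t)
    (h0 : ∀ i, t i ≠ 0) {g : ℕ → ℕ → ℝ} (hper : ∀ i, Function.Periodic (g (t i)) (t i)) :
    |∑ x ∈ range (univ.lcm t), ∏ i, g (t i) x| ≤
      ∏ i, √(∑ y ∈ range (t i), g (t i) y ^ 2) := by
  have hl : univ.lcm t ≠ 0 := Finset.lcm_ne_zero_iff.2 fun i _ => h0 i
  refine (Finset.abs_sum_le_sum_abs _ _).trans ?_
  simp_rw [Finset.abs_prod]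
  refine (sum_prod_le_prod_sqrt_of_periodic (univ.lcm t) hl t (fun i x => |g (t i) x|)
    (fun i => Finset.dvd_lcm (Finset.mem_univ i)) (fun i x => abs_nonneg _) ?_ ?_).trans ?_
  · intro i x
    show |g (t i) (x + t i)| = _
    rw [hper i]
  · intro p e hp he h
    exact ht.exists_pair h0 hp he h
  · simp_rw [sq_abs]
    exact le_rfl

/-- Even moments of a sum of functions with vanishing sums along nontrivial progressions. -/
theorem sum_pow_le_sum_admissible (n X Z : ℕ) (𝒬 : Finset ℕ) (g : ℕ → ℕ → ℝ) (U : ℝ)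
    (h0 : ∀ q ∈ 𝒬, q ≠ 0) (hZ : ∀ q ∈ 𝒬, q ≤ Z)
    (hper : ∀ q ∈ 𝒬, Function.Periodic (g q) q)
    (hvan : ∀ q ∈ 𝒬, ∀ d x, ¬ q ∣ d → ∑ j ∈ range q, g q (x + d * j) = 0)
    (hU : ∀ q ∈ 𝒬, ∀ x, |g q x| ≤ U) :
    ∑ x ∈ range X, (∑ q ∈ 𝒬, g q x) ^ n ≤
      (∑ t ∈ (Fintype.piFinset fun _ : Fin n => 𝒬).filter Admissible,
        (X : ℝ) / (univ.lcm t : ℕ) * |∑ x ∈ range (univ.lcm t), ∏ i, g (t i) x|) +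
      (𝒬.card : ℝ) ^ n * (Z : ℝ) ^ n * U ^ n := by
  have key : ∀ t ∈ Fintype.piFinset fun _ : Fin n => 𝒬,
      |∑ x ∈ range X, ∏ i, g (t i) x| ≤
        (if Admissible t then (X : ℝ) / (univ.lcm t : ℕ) *
          |∑ x ∈ range (univ.lcm t), ∏ i, g (t i) x| else 0) + (Z : ℝ) ^ n * U ^ n := by
    intro t ht
    have ht' := Fintype.mem_piFinset.1 ht
    have hpos : ∀ i, t i ≠ 0 := fun i => h0 _ (ht' i)
    have hl : univ.lcm t ≠ 0 := Finset.lcm_ne_zero_iff.2 fun i _ => hpos i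
    have hF := prod_periodic_lcm (t := t) (g := g) univ (fun i => hper _ (ht' i))
    have hFU : ∀ x, |∏ i, g (t i) x| ≤ U ^ n := by
      intro x
      rw [Finset.abs_prod]
      calc ∏ i, |g (t i) x| ≤ ∏ _i : Fin n, U :=
            Finset.prod_le_prod (fun i _ => abs_nonneg _) fun i _ => hU _ (ht' i) x
        _ = U ^ n := by simp
    refine (abs_sum_range_le_of_periodic (Nat.pos_of_ne_zero hl) hF hFU X).trans ?_
    have hUn : 0 ≤ U ^ n := (abs_nonneg _).trans (hFU 0)
    refine add_le_add ?_ ?_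
    · split_ifs with hadm
      · exact le_rfl
      · rw [sum_prod_eq_zero_of_not_admissible hpos (fun i => hper _ (ht' i))
          (fun i => hvan _ (ht' i)) hadm]
        simp
    · refine mul_le_mul_of_nonneg_right ?_ hUn
      exact_mod_cast lcm_le_pow hpos fun i => hZ _ (ht' i)
  calc ∑ x ∈ range X, (∑ q ∈ 𝒬, g q x) ^ n
      = ∑ t ∈ Fintype.piFinset fun _ : Fin n => 𝒬, ∑ x ∈ range X, ∏ i, g (t i) x := by
        rw [Finset.sum_comm]
        refine Finset.sum_congr rfl fun x _ => ?_
        rw [Finset.sum_pow']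
    _ ≤ ∑ t ∈ Fintype.piFinset fun _ : Fin n => 𝒬,
        ((if Admissible t then (X : ℝ) / (univ.lcm t : ℕ) *
          |∑ x ∈ range (univ.lcm t), ∏ i, g (t i) x| else 0) + (Z : ℝ) ^ n * U ^ n) :=
        Finset.sum_le_sum fun t ht => (le_abs_self _).trans (key t ht)
    _ = _ := by
        rw [Finset.sum_add_distrib, Finset.sum_filter, Finset.sum_const, nsmul_eq_mul,
          Fintype.card_piFinset]
        simp [mul_assoc]

/-- The reciprocal sum of least common multiples over admissible tuples. -/
theorem sum_admissible_one_div_lcm_le (k Z : ℕ) (𝒬 : Finset ℕ)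
    (h0 : ∀ q ∈ 𝒬, q ≠ 0) (hQZ : ∀ q ∈ 𝒬, q ≤ Z) :
    ∑ t ∈ (Fintype.piFinset fun _ : Fin (2 * k) => 𝒬).filter Admissible,
      (1 : ℝ) / (univ.lcm t : ℕ) ≤ (1 + k * Real.log Z) ^ 4 ^ k := by
  have h1 := sum_card_divisors_pow_div_le (2 * k) (Z ^ k)
  rw [pow_mul 2 2 k] at h1
  norm_num at h1
  refine le_trans ?_ h1
  have hmaps : ∀ t ∈ (Fintype.piFinset fun _ : Fin (2 * k) => 𝒬).filter Admissible,
      univ.lcm t ∈ Icc 1 (Z ^ k) := by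
    intro t ht
    obtain ⟨ht1, ht2⟩ := Finset.mem_filter.1 ht
    have ht' := Fintype.mem_piFinset.1 ht1
    have hpos : ∀ i, t i ≠ 0 := fun i => h0 _ (ht' i)
    rw [Finset.mem_Icc]
    exact ⟨Nat.one_le_iff_ne_zero.2 (Finset.lcm_ne_zero_iff.2 fun i _ => hpos i),
      ht2.lcm_le hpos fun i => hQZ _ (ht' i)⟩
  rw [← Finset.sum_fiberwise_of_maps_to hmaps]
  refine Finset.sum_le_sum fun l hl => ?_
  have hl0 : l ≠ 0 := by have := (Finset.mem_Icc.1 hl).1; omega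
  rw [Finset.sum_congr rfl (g := fun _ => (1 : ℝ) / l), Finset.sum_const, nsmul_eq_mul,
    mul_one_div]
  · gcongr
    have hsub : (((Fintype.piFinset fun _ : Fin (2 * k) => 𝒬).filter Admissible).filter
        fun t => univ.lcm t = l) ⊆ Fintype.piFinset fun _ : Fin (2 * k) => l.divisors := by
      intro t ht
      rw [Fintype.mem_piFinset]
      intro i
      rw [Nat.mem_divisors]
      refine ⟨?_, hl0⟩
      rw [← (Finset.mem_filter.1 ht).2]
      exact Finset.dvd_lcm (Finset.mem_univ i)
    have := Finset.card_le_card hsub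
    rw [Fintype.card_piFinset] at this
    simp only [Finset.prod_const, Finset.card_univ, Fintype.card_fin] at this
    exact_mod_cast this
  · intro t ht
    rw [(Finset.mem_filter.1 ht).2]

theorem sum_gcd_rpow_le {R : Finset ℕ} {s : ℝ}
    (hR : ∀ e : ℕ, 1 ≤ e → ((R.filter fun r => e ∣ r).card : ℝ) * (e : ℝ) ^ s ≤ R.card)
    {l : ℕ} (hl : l ≠ 0) :
    ∑ r ∈ R, ((r.gcd l : ℕ) : ℝ) ^ s ≤ l.divisors.card * R.card := by
  calc ∑ r ∈ R, ((r.gcd l : ℕ) : ℝ) ^ s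
      ≤ ∑ r ∈ R, ∑ e ∈ l.divisors, if e ∣ r then (e : ℝ) ^ s else 0 := by
        refine Finset.sum_le_sum fun r _ => ?_
        have h := Finset.single_le_sum (s := l.divisors)
          (f := fun e : ℕ => if e ∣ r then (e : ℝ) ^ s else 0)
          (fun e _ => by split_ifs <;> positivity)
          (Nat.mem_divisors.2 ⟨Nat.gcd_dvd_right r l, hl⟩)
        simpa [Nat.gcd_dvd_left r l] using h
    _ = ∑ e ∈ l.divisors, ((R.filter fun r => e ∣ r).card : ℝ) * (e : ℝ) ^ s := by
        rw [Finset.sum_comm]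
        refine Finset.sum_congr rfl fun e _ => ?_
        rw [← Finset.sum_filter, Finset.sum_const, nsmul_eq_mul]
    _ ≤ ∑ _e ∈ l.divisors, (R.card : ℝ) :=
        Finset.sum_le_sum fun e he => hR e (Nat.pos_of_mem_divisors he)
    _ = _ := by rw [Finset.sum_const, nsmul_eq_mul]

theorem card_divisors_prod_le {n : ℕ} (t : Fin n → ℕ) :
    (∏ i, t i).divisors.card ≤ ∏ i, (t i).divisors.card := by
  induction n with
  | zero => simp
  | succ n ih =>
    rw [Fin.prod_univ_succ, Fin.prod_univ_succ]
    exact (card_divisors_mul_le _ _).trans (Nat.mul_le_mul_left _ (ih _))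

theorem card_divisors_lcm_le {n : ℕ} {t : Fin n → ℕ} (h0 : ∀ i, t i ≠ 0) {T : ℕ}
    (hT : ∀ i, (t i).divisors.card ≤ T) : (univ.lcm t).divisors.card ≤ T ^ n := by
  calc (univ.lcm t).divisors.card ≤ (∏ i, t i).divisors.card :=
        Finset.card_le_card (Nat.divisors_subset_of_dvd
          (Finset.prod_ne_zero_iff.2 fun i _ => h0 i) (Finset.lcm_dvd_prod _ _))
    _ ≤ ∏ i, (t i).divisors.card := card_divisors_prod_le t
    _ ≤ ∏ _i : Fin n, T := Finset.prod_le_prod' fun i _ => hT i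
    _ = T ^ n := by simp

theorem lcm_univ_cons {n : ℕ} (r : ℕ) (t : Fin n → ℕ) :
    univ.lcm (Fin.cons r t : Fin (n + 1) → ℕ) = Nat.lcm r (univ.lcm t) := by
  refine Nat.dvd_antisymm ?_ ?_
  · refine Finset.lcm_dvd fun i _ => ?_
    refine Fin.cases ?_ (fun j => ?_) i
    · exact Nat.dvd_lcm_left _ _
    · exact (Finset.dvd_lcm (Finset.mem_univ j)).trans (Nat.dvd_lcm_right _ _)
  · refine Nat.lcm_dvd ?_ (Finset.lcm_dvd fun j _ => ?_)
    · exact Finset.dvd_lcm (f := (Fin.cons r t : Fin (n + 1) → ℕ)) (Finset.mem_univ 0)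
    · exact Finset.dvd_lcm (f := (Fin.cons r t : Fin (n + 1) → ℕ)) (Finset.mem_univ j.succ)

theorem sum_piFinset_succ {M : Type*} [AddCommMonoid M] (R : Finset ℕ) (n : ℕ)
    (F : (Fin (n + 1) → ℕ) → M) :
    ∑ t ∈ Fintype.piFinset fun _ : Fin (n + 1) => R, F t =
      ∑ t ∈ Fintype.piFinset fun _ : Fin n => R, ∑ r ∈ R, F (Fin.cons r t) := by
  rw [← Finset.sum_product']
  refine Finset.sum_nbij' (fun t => (Fin.tail t, t 0)) (fun p => Fin.cons p.2 p.1) ?_ ?_ ?_ ?_ ?_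
  · intro t ht
    have ht' := Fintype.mem_piFinset.1 ht
    exact Finset.mem_product.2 ⟨Fintype.mem_piFinset.2 fun i => ht' _, ht' 0⟩
  · rintro ⟨t, r⟩ hp
    obtain ⟨h1, h2⟩ := Finset.mem_product.1 hp
    exact Fintype.mem_piFinset.2 fun i => Fin.cases h2 (fun j => Fintype.mem_piFinset.1 h1 j) i
  · intro t _
    exact Fin.cons_self_tail t
  · rintro ⟨t, r⟩ _
    simp
  · intro t _
    rw [Fin.cons_self_tail]

theorem sum_prod_div_lcm_rpow_le {R : Finset ℕ} {s : ℝ}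
    (hR : ∀ e : ℕ, 1 ≤ e → ((R.filter fun r => e ∣ r).card : ℝ) * (e : ℝ) ^ s ≤ R.card)
    (h0 : ∀ r ∈ R, r ≠ 0) {T : ℕ} (hT1 : 1 ≤ T) (hT : ∀ r ∈ R, r.divisors.card ≤ T) (n : ℕ) :
    ∑ t ∈ Fintype.piFinset fun _ : Fin n => R,
      ((∏ i, (t i : ℝ)) / (univ.lcm t : ℕ)) ^ s ≤ (R.card : ℝ) ^ n * (T : ℝ) ^ n ^ 2 := by
  induction n with
  | zero => simp
  | succ n ih =>
    rw [sum_piFinset_succ]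
    have hT1' : (1 : ℝ) ≤ T := by exact_mod_cast hT1
    calc ∑ t ∈ Fintype.piFinset fun _ : Fin n => R, ∑ r ∈ R,
          ((∏ i, ((Fin.cons r t : Fin (n + 1) → ℕ) i : ℝ)) /
            (univ.lcm (Fin.cons r t : Fin (n + 1) → ℕ) : ℕ)) ^ s
        = ∑ t ∈ Fintype.piFinset fun _ : Fin n => R,
          ((∏ i, (t i : ℝ)) / (univ.lcm t : ℕ)) ^ s *
            ∑ r ∈ R, ((r.gcd (univ.lcm t) : ℕ) : ℝ) ^ s := by
          refine Finset.sum_congr rfl fun t ht => ?_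
          rw [Finset.mul_sum]
          refine Finset.sum_congr rfl fun r hr => ?_
          have ht' := Fintype.mem_piFinset.1 ht
          have hl : univ.lcm t ≠ 0 := Finset.lcm_ne_zero_iff.2 fun i _ => h0 _ (ht' i)
          have hr0 := h0 r hr
          rw [← Real.mul_rpow (by positivity) (by positivity), lcm_univ_cons]
          congr 1
          rw [Fin.prod_univ_succ]
          simp only [Fin.cons_zero, Fin.cons_succ]
          have h1 : ((r.gcd (univ.lcm t) : ℕ) : ℝ) * ((r.lcm (univ.lcm t) : ℕ) : ℝ) =
              r * (univ.lcm t : ℕ) := by exact_mod_cast Nat.gcd_mul_lcm r (univ.lcm t)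
          have h2 : ((r.lcm (univ.lcm t) : ℕ) : ℝ) ≠ 0 := by
            exact_mod_cast Nat.lcm_ne_zero hr0 hl
          have h3 : ((univ.lcm t : ℕ) : ℝ) ≠ 0 := by exact_mod_cast hl
          field_simp
          linear_combination (-∏ i, (t i : ℝ)) * h1
      _ ≤ ∑ t ∈ Fintype.piFinset fun _ : Fin n => R,
          ((∏ i, (t i : ℝ)) / (univ.lcm t : ℕ)) ^ s * ((T : ℝ) ^ n * R.card) := by
          refine Finset.sum_le_sum fun t ht => ?_
          have ht' := Fintype.mem_piFinset.1 ht
          have hl : univ.lcm t ≠ 0 := Finset.lcm_ne_zero_iff.2 fun i _ => h0 _ (ht' i)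
          refine mul_le_mul_of_nonneg_left ?_ (by positivity)
          refine (sum_gcd_rpow_le hR hl).trans ?_
          gcongr
          exact_mod_cast card_divisors_lcm_le (fun i => h0 _ (ht' i)) fun i => hT _ (ht' i)
      _ ≤ ((R.card : ℝ) ^ n * (T : ℝ) ^ n ^ 2) * ((T : ℝ) ^ n * R.card) := by
          rw [← Finset.sum_mul]
          gcongr
      _ = (R.card : ℝ) ^ (n + 1) * (T : ℝ) ^ (n ^ 2 + n) := by
          rw [pow_add, pow_succ]
          ring
      _ ≤ _ := by
          gcongr
          nlinarith

/-- Admissible tuples are rare in a set which is not concentrated on multiples. -/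
theorem card_admissible_mul_le {R : Finset ℕ} {s : ℝ} (hs : 0 ≤ s)
    (hR : ∀ e : ℕ, 1 ≤ e → ((R.filter fun r => e ∣ r).card : ℝ) * (e : ℝ) ^ s ≤ R.card)
    {Y : ℝ} (hY0 : 0 < Y) (hY : ∀ r ∈ R, Y ≤ r) {T : ℕ} (hT1 : 1 ≤ T)
    (hT : ∀ r ∈ R, r.divisors.card ≤ T) (k : ℕ) :
    (((Fintype.piFinset fun _ : Fin (2 * k) => R).filter Admissible).card : ℝ) * (Y ^ k) ^ s ≤
      (R.card : ℝ) ^ (2 * k) * (T : ℝ) ^ (2 * k) ^ 2 := by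
  have h0 : ∀ r ∈ R, r ≠ 0 := by
    rintro r hr rfl
    have := hY 0 hr
    simp at this
    linarith
  refine le_trans ?_ (sum_prod_div_lcm_rpow_le hR h0 hT1 hT (2 * k))
  rw [← nsmul_eq_mul, ← Finset.sum_const]
  refine le_trans (Finset.sum_le_sum fun t ht => ?_)
    (Finset.sum_le_sum_of_subset_of_nonneg (Finset.filter_subset _ _) fun t _ _ => by positivity)
  obtain ⟨ht1, ht2⟩ := Finset.mem_filter.1 ht
  have ht' := Fintype.mem_piFinset.1 ht1
  have hpos : ∀ i, t i ≠ 0 := fun i => h0 _ (ht' i)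
  have hl : 0 < univ.lcm t := Nat.pos_of_ne_zero (Finset.lcm_ne_zero_iff.2 fun i _ => hpos i)
  refine Real.rpow_le_rpow (by positivity) ?_ hs
  have hsq : ((univ.lcm t : ℕ) : ℝ) ^ 2 ≤ ∏ i, (t i : ℝ) := by
    exact_mod_cast Nat.le_of_dvd (Finset.prod_pos fun i _ => Nat.pos_of_ne_zero (hpos i))
      (ht2.lcm_sq_dvd_prod hpos)
  have hprod : (Y ^ k) ^ 2 ≤ ∏ i, (t i : ℝ) := by
    calc (Y ^ k) ^ 2 = ∏ _i : Fin (2 * k), Y := by simp [← pow_mul, mul_comm]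
      _ ≤ _ := Finset.prod_le_prod (fun _ _ => hY0.le) fun i _ => hY _ (ht' i)
  have hl' : (0 : ℝ) < (univ.lcm t : ℕ) := by exact_mod_cast hl
  rw [le_div_iff₀ hl']
  have hP : 0 ≤ ∏ i, (t i : ℝ) := by positivity
  have h1 := Real.le_sqrt_of_sq_le hsq
  have h2 := Real.le_sqrt_of_sq_le hprod
  calc Y ^ k * (univ.lcm t : ℕ) ≤ √(∏ i, (t i : ℝ)) * √(∏ i, (t i : ℝ)) := by gcongr
    _ = _ := Real.mul_self_sqrt hP

theorem card_admissible_le_card_image_div {d n : ℕ} (hd : 0 < d) (𝒬 : Finset ℕ)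
    (h : ∀ q ∈ 𝒬, d ∣ q) :
    ((Fintype.piFinset fun _ : Fin n => 𝒬).filter Admissible).card ≤
      ((Fintype.piFinset fun _ : Fin n => 𝒬.image (· / d)).filter Admissible).card := by
  refine Finset.card_le_card_of_injOn (fun t i => t i / d) ?_ ?_
  · intro t ht
    obtain ⟨ht1, ht2⟩ := Finset.mem_filter.1 (Finset.mem_coe.1 ht)
    have ht' := Fintype.mem_piFinset.1 ht1
    refine Finset.mem_coe.2 (Finset.mem_filter.2 ⟨Fintype.mem_piFinset.2 fun i =>
      Finset.mem_image_of_mem _ (ht' i), fun i => ?_⟩)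
    refine Nat.dvd_of_mul_dvd_mul_left hd ?_
    rw [Nat.mul_div_cancel' (h _ (ht' i))]
    refine (ht2 i).trans (Finset.lcm_dvd fun j hj => ?_)
    rw [← Nat.mul_div_cancel' (h _ (ht' j))]
    exact mul_dvd_mul_left d (Finset.dvd_lcm (f := fun i => t i / d) hj)
  · intro t ht t' ht' heq
    have h1 := Fintype.mem_piFinset.1 (Finset.mem_filter.1 (Finset.mem_coe.1 ht)).1
    have h2 := Fintype.mem_piFinset.1 (Finset.mem_filter.1 (Finset.mem_coe.1 ht')).1
    funext i
    have h3 : t i / d = t' i / d := congrFun heq i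
    rw [← Nat.mul_div_cancel' (h _ (h1 i)), h3, Nat.mul_div_cancel' (h _ (h2 i))]

/-- Every set contains the multiples of some `d` among its elements as a rich subset whose
quotients by `d` are not concentrated on multiples. -/
theorem exists_dvd_card_admissible_le {s : ℝ} (hs : 0 ≤ s) {𝒬 : Finset ℕ} (h𝒬 : 𝒬.Nonempty)
    {Y : ℝ} (hY0 : 0 < Y) (hY : ∀ q ∈ 𝒬, Y ≤ q) {T : ℕ} (hT : ∀ q ∈ 𝒬, q.divisors.card ≤ T) :
    ∃ d : ℕ, 1 ≤ d ∧ (𝒬.filter fun q => d ∣ q).Nonempty ∧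
      (𝒬.card : ℝ) ≤ ((𝒬.filter fun q => d ∣ q).card : ℝ) * (d : ℝ) ^ s ∧
      ∀ k : ℕ, (((Fintype.piFinset fun _ : Fin (2 * k) => 𝒬.filter fun q => d ∣ q).filter
        Admissible).card : ℝ) * ((Y / d) ^ k) ^ s ≤
          ((𝒬.filter fun q => d ∣ q).card : ℝ) ^ (2 * k) * (T : ℝ) ^ (2 * k) ^ 2 := by
  have h0 : ∀ r ∈ 𝒬, 0 < r := by
    intro r hr
    rcases Nat.eq_zero_or_pos r with rfl | h
    · have := hY 0 hr
      simp at this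
      linarith
    · exact h
  have hT1 : 1 ≤ T := by
    obtain ⟨q, hq⟩ := h𝒬
    refine le_trans ?_ (hT q hq)
    exact Finset.card_pos.2 ⟨1, Nat.mem_divisors.2 ⟨one_dvd _, (h0 q hq).ne'⟩⟩
  set F : ℕ → ℝ := fun d => ((𝒬.filter fun q => d ∣ q).card : ℝ) * (d : ℝ) ^ s with hF
  have hF1 : F 1 = 𝒬.card := by simp [hF]
  obtain ⟨d, hd, hmax⟩ := Finset.exists_max_image (Icc 1 (max 1 (𝒬.sup id))) F
    ⟨1, Finset.mem_Icc.2 ⟨le_rfl, le_max_left _ _⟩⟩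
  have hmax' : ∀ e, 1 ≤ e → F e ≤ F d := by
    intro e he
    by_cases hee : e ∈ Icc 1 (max 1 (𝒬.sup id))
    · exact hmax e hee
    · have hz : F e = 0 := by
        simp only [hF]
        rw [Finset.filter_eq_empty_iff.2, Finset.card_empty, Nat.cast_zero, zero_mul]
        intro q hq hdvd
        refine hee (Finset.mem_Icc.2 ⟨he, ?_⟩)
        exact ((Nat.le_of_dvd (h0 q hq) hdvd).trans
          (Finset.le_sup (f := id) hq)).trans (le_max_right _ _)
      rw [hz]
      simp only [hF]
      positivity
  have hd1 : 1 ≤ d := (Finset.mem_Icc.1 hd).1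
  have hcard := hmax' 1 le_rfl
  rw [hF1] at hcard
  set 𝒬d := 𝒬.filter fun q => d ∣ q with h𝒬d
  have hdvd : ∀ q ∈ 𝒬d, d ∣ q := fun q hq => (Finset.mem_filter.1 hq).2
  have hne : 𝒬d.Nonempty := by
    rw [Finset.nonempty_iff_ne_empty]
    intro he
    have h1 : (0 : ℝ) < 𝒬.card := by exact_mod_cast Finset.card_pos.2 h𝒬
    simp only [hF, ← h𝒬d, he, Finset.card_empty, Nat.cast_zero, zero_mul] at hcard
    linarith
  refine ⟨d, hd1, hne, hcard, fun k => ?_⟩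
  have hinj : Set.InjOn (· / d) (𝒬d : Set ℕ) := by
    intro a ha b hb hab
    have h3 : a / d = b / d := hab
    rw [← Nat.mul_div_cancel' (hdvd a ha), h3, Nat.mul_div_cancel' (hdvd b hb)]
  have hRcard : (𝒬d.image (· / d)).card = 𝒬d.card := Finset.card_image_of_injOn hinj
  have hd0 : (0 : ℝ) < d := by exact_mod_cast hd1
  have hmain := card_admissible_mul_le (R := 𝒬d.image (· / d)) hs ?_ (Y := Y / d)
    (by positivity) ?_ hT1 ?_ k
  · rw [hRcard] at hmain
    refine le_trans ?_ hmain
    refine mul_le_mul_of_nonneg_right ?_ (by positivity)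
    exact_mod_cast card_admissible_le_card_image_div hd1 𝒬d hdvd
  · intro e he
    rw [hRcard]
    have h1 := hmax' (d * e) (Nat.mul_pos hd1 he)
    have h2 : ((𝒬d.image (· / d)).filter fun r => e ∣ r).card ≤
        (𝒬.filter fun q => d * e ∣ q).card := by
      refine Finset.card_le_card_of_injOn (fun r => d * r) ?_ ?_
      · intro r hr
        obtain ⟨hr1, hr2⟩ := Finset.mem_filter.1 (Finset.mem_coe.1 hr)
        obtain ⟨q, hq, rfl⟩ := Finset.mem_image.1 hr1
        refine Finset.mem_coe.2 (Finset.mem_filter.2 ⟨?_, mul_dvd_mul_left d hr2⟩)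
        show d * (q / d) ∈ 𝒬
        rw [Nat.mul_div_cancel' (hdvd q hq)]
        exact (Finset.mem_filter.1 hq).1
      · intro a _ b _ hab
        exact Nat.eq_of_mul_eq_mul_left hd1 hab
    simp only [hF] at h1
    push_cast at h1
    rw [Real.mul_rpow (by positivity) (by positivity)] at h1
    have hds : (0 : ℝ) < (d : ℝ) ^ s := Real.rpow_pos_of_pos hd0 s
    refine le_of_mul_le_mul_right ?_ hds
    calc (((𝒬d.image (· / d)).filter fun r => e ∣ r).card : ℝ) * (e : ℝ) ^ s * (d : ℝ) ^ s
        ≤ ((𝒬.filter fun q => d * e ∣ q).card : ℝ) * (e : ℝ) ^ s * (d : ℝ) ^ s := by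
          gcongr
      _ ≤ _ := by
          rw [mul_assoc, mul_comm ((e : ℝ) ^ s)]
          exact h1
  · intro r hr
    obtain ⟨q, hq, rfl⟩ := Finset.mem_image.1 hr
    have h1 := hY q (Finset.mem_filter.1 hq).1
    rw [Nat.cast_div (hdvd q hq) hd0.ne']
    gcongr
  · intro r hr
    obtain ⟨q, hq, rfl⟩ := Finset.mem_image.1 hr
    have hq' := (Finset.mem_filter.1 hq).1
    exact (Finset.card_le_card (Nat.divisors_subset_of_dvd (h0 q hq').ne'
      (Nat.div_dvd_of_dvd (hdvd q hq)))).trans (hT q hq')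

/-- The additive character `x ↦ exp (2 π i x)`. -/
noncomputable def ee (x : ℝ) : ℂ := Complex.exp (2 * Real.pi * Complex.I * x)

theorem ee_add (x y : ℝ) : ee (x + y) = ee x * ee y := by
  simp only [ee, ← Complex.exp_add]
  push_cast
  ring_nf

theorem ee_zero : ee 0 = 1 := by simp [ee]

theorem norm_ee (x : ℝ) : ‖ee x‖ = 1 := by
  rw [ee, show 2 * (Real.pi : ℂ) * Complex.I * (x : ℂ) = ((2 * Real.pi * x : ℝ) : ℂ) * Complex.I by
    push_cast; ring]
  exact Complex.norm_exp_ofReal_mul_I _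

theorem conj_ee (x : ℝ) : (starRingEnd ℂ) (ee x) = ee (-x) := by
  simp only [ee, ← Complex.exp_conj]
  congr 1
  simp [Complex.conj_ofReal, map_ofNat]

theorem ee_eq_one_iff (x : ℝ) : ee x = 1 ↔ ∃ n : ℤ, x = n := by
  rw [ee, Complex.exp_eq_one_iff]
  have h : (2 * Real.pi * Complex.I : ℂ) ≠ 0 := by simp [Real.pi_ne_zero]
  refine exists_congr fun n => ?_
  rw [mul_comm, mul_left_inj' h]
  norm_cast

theorem ee_int (n : ℤ) : ee n = 1 := (ee_eq_one_iff _).2 ⟨n, rfl⟩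

theorem ee_nat (n : ℕ) : ee n = 1 := (ee_eq_one_iff _).2 ⟨n, by simp⟩

theorem ee_add_int (x : ℝ) (n : ℤ) : ee (x + n) = ee x := by rw [ee_add, ee_int, mul_one]

theorem ee_nat_mul (n : ℕ) (x : ℝ) : ee (n * x) = ee x ^ n := by
  simp only [ee]
  rw [← Complex.exp_nat_mul]
  push_cast
  ring_nf

theorem sum_ee_mul_div (q : ℕ) (hq : 0 < q) (m : ℤ) :
    ∑ j ∈ range q, ee (m * j / q) = if (q : ℤ) ∣ m then (q : ℂ) else 0 := by
  have hq' : (q : ℝ) ≠ 0 := by exact_mod_cast hq.ne'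
  have h1 : ∀ j : ℕ, ee (m * j / q) = ee (m / q) ^ j := fun j => by
    rw [← ee_nat_mul]
    congr 1
    ring
  simp_rw [h1]
  have h2 : ee ((m : ℝ) / q) = 1 ↔ (q : ℤ) ∣ m := by
    rw [ee_eq_one_iff]
    refine exists_congr fun n => ?_
    rw [div_eq_iff hq', mul_comm]
    norm_cast
  split_ifs with h
  · rw [h2.2 h]
    simp
  · have hne : ee ((m : ℝ) / q) ≠ 1 := fun hh => h (h2.1 hh)
    rw [geom_sum_eq hne, ← ee_nat_mul, mul_div_cancel₀ _ hq', ee_int, sub_self, zero_div]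

theorem sum_range_eq_sum_divisors_coprime {M : Type*} [AddCommMonoid M] (q : ℕ) (hq : 0 < q)
    (F : ℝ → M) :
    ∑ a ∈ range q, F (a / q) =
      ∑ d ∈ q.divisors, ∑ a ∈ (range d).filter (fun a => a.Coprime d), F (a / d) := by
  rw [Finset.sum_sigma']
  refine Finset.sum_nbij' (fun a => ⟨q / q.gcd a, a / q.gcd a⟩) (fun x => x.2 * (q / x.1))
    ?_ ?_ ?_ ?_ ?_
  · intro a ha
    have hg : 0 < q.gcd a := Nat.gcd_pos_of_pos_left a hq
    have ha' := Finset.mem_range.1 ha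
    simp only [Finset.mem_sigma, Nat.mem_divisors, Finset.mem_filter, Finset.mem_range]
    refine ⟨⟨Nat.div_dvd_of_dvd (Nat.gcd_dvd_left q a), hq.ne'⟩, ?_, ?_⟩
    · exact Nat.div_lt_div_of_lt_of_dvd (Nat.gcd_dvd_left q a) ha'
    · exact (Nat.coprime_div_gcd_div_gcd hg).symm
  · rintro ⟨d, a⟩ hx
    simp only [Finset.mem_sigma, Nat.mem_divisors, Finset.mem_filter, Finset.mem_range] at hx ⊢
    obtain ⟨⟨⟨u, rfl⟩, -⟩, had, hc⟩ := hx
    have hd : 0 < d := by omega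
    rw [Nat.mul_div_cancel_left _ hd]
    have hu : 0 < u := Nat.pos_of_mul_pos_left hq
    exact Nat.mul_lt_mul_of_pos_right had hu
  · intro a ha
    have hg : 0 < q.gcd a := Nat.gcd_pos_of_pos_left a hq
    simp only
    rw [Nat.div_div_self (Nat.gcd_dvd_left q a) hq.ne', Nat.div_mul_cancel (Nat.gcd_dvd_right q a)]
  · rintro ⟨d, a⟩ hx
    simp only [Finset.mem_sigma, Nat.mem_divisors, Finset.mem_filter, Finset.mem_range] at hx
    obtain ⟨⟨⟨u, rfl⟩, -⟩, had, hc⟩ := hx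
    have hd : 0 < d := by omega
    have hu : 0 < u := Nat.pos_of_mul_pos_left hq
    simp only
    rw [Nat.mul_div_cancel_left _ hd, Nat.gcd_mul_right, Nat.gcd_comm, hc, one_mul,
      Nat.mul_div_cancel _ hu, Nat.mul_div_cancel _ hu]
  · intro a ha
    have hg : 0 < q.gcd a := Nat.gcd_pos_of_pos_left a hq
    have hg' : ((q.gcd a : ℕ) : ℝ) ≠ 0 := by exact_mod_cast hg.ne'
    simp only
    rw [Nat.cast_div (Nat.gcd_dvd_left q a) hg', Nat.cast_div (Nat.gcd_dvd_right q a) hg',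
      div_div_div_cancel_right₀ hg']

/-- The exponential sum of a finite set. -/
noncomputable def expSum (B : Finset ℕ) (θ : ℝ) : ℂ := ∑ y ∈ B, ee (y * θ)

/-- The residues coprime to `q`. -/
def units (q : ℕ) : Finset ℕ := (range q).filter fun a => a.Coprime q

theorem mem_units {q a : ℕ} : a ∈ units q ↔ a < q ∧ a.Coprime q := by
  rw [units, Finset.mem_filter, Finset.mem_range]

/-- The projection of (the indicator function of) `B` to the primitive frequencies with
denominator `q`. -/
noncomputable def proj (B : Finset ℕ) (X q x : ℕ) : ℝ :=
  (∑ a ∈ units q, ee (x * (a / q)) * (starRingEnd ℂ) (expSum B (a / q))).re / X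

/-- The normalized energy of `B` on the primitive frequencies with denominator `q`. -/
noncomputable def energy (B : Finset ℕ) (X q : ℕ) : ℝ :=
  (∑ a ∈ units q, ‖expSum B (a / q)‖ ^ 2) / (X : ℝ) ^ 2

theorem energy_nonneg (B : Finset ℕ) (X q : ℕ) : 0 ≤ energy B X q := by
  unfold energy; positivity

theorem sum_proj (B : Finset ℕ) (X q : ℕ) (hX : X ≠ 0) :
    ∑ y ∈ B, proj B X q y = X * energy B X q := by
  have hX' : (X : ℝ) ≠ 0 := by exact_mod_cast hX
  simp only [proj, energy]
  rw [← Finset.sum_div, ← Complex.re_sum, Finset.sum_comm]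
  have : ∀ a ∈ units q, ∑ y ∈ B, ee (y * (a / q)) * (starRingEnd ℂ) (expSum B (a / q)) =
      ((‖expSum B (a / q)‖ ^ 2 : ℝ) : ℂ) := by
    intro a _
    rw [← Finset.sum_mul]
    have := Complex.mul_conj' (expSum B (a / q))
    push_cast
    exact this
  rw [Finset.sum_congr rfl this, ← Complex.ofReal_sum, Complex.ofReal_re]
  field_simp

theorem proj_periodic (B : Finset ℕ) (X q : ℕ) : Function.Periodic (proj B X q) q := by
  intro x
  rcases Nat.eq_zero_or_pos q with rfl | hq
  · simp
  have hq' : (q : ℝ) ≠ 0 := by exact_mod_cast hq.ne'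
  simp only [proj]
  congr 2
  refine Finset.sum_congr rfl fun a _ => ?_
  congr 1
  push_cast
  rw [add_mul, mul_div_cancel₀ _ hq', ee_add, ee_nat, mul_one]

theorem sum_proj_progression (B : Finset ℕ) (X q : ℕ) (hq : 0 < q) (d x : ℕ) (hd : ¬ q ∣ d) :
    ∑ j ∈ range q, proj B X q (x + d * j) = 0 := by
  simp only [proj]
  rw [← Finset.sum_div, ← Complex.re_sum, Finset.sum_comm, Finset.sum_eq_zero]
  · simp
  intro a ha
  rw [← Finset.sum_mul]
  have h1 : ∀ j ∈ range q, ee (((x + d * j : ℕ) : ℝ) * (a / q)) =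
      ee (x * (a / q)) * ee (((d * a : ℕ) : ℤ) * j / q) := by
    intro j _
    rw [← ee_add]
    congr 1
    push_cast
    ring
  rw [Finset.sum_congr rfl h1, ← Finset.mul_sum, sum_ee_mul_div q hq, if_neg, mul_zero, zero_mul]
  intro h
  rw [Int.natCast_dvd_natCast] at h
  exact hd ((mem_units.1 ha).2.symm.dvd_of_dvd_mul_right h)

/-- Bessel's inequality modulo `q`. -/
theorem sum_norm_sq_sum_ee (q : ℕ) (hq : 0 < q) (S : Finset ℕ) (hS : S ⊆ range q) (w : ℕ → ℂ) :
    ∑ x ∈ range q, ‖∑ a ∈ S, ee (x * (a / q)) * w a‖ ^ 2 = q * ∑ a ∈ S, ‖w a‖ ^ 2 := by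
  have hc : ((∑ x ∈ range q, ‖∑ a ∈ S, ee (x * (a / q)) * w a‖ ^ 2 : ℝ) : ℂ) =
      ((q * ∑ a ∈ S, ‖w a‖ ^ 2 : ℝ) : ℂ) := by
    push_cast
    calc ∑ x ∈ range q, (‖∑ a ∈ S, ee (x * (a / q)) * w a‖ : ℂ) ^ 2
        = ∑ x ∈ range q, ∑ a ∈ S, ∑ b ∈ S,
            (w a * (starRingEnd ℂ) (w b)) * ee (((a : ℤ) - b : ℤ) * x / q) := by
          refine Finset.sum_congr rfl fun x _ => ?_
          rw [← Complex.mul_conj', map_sum, Finset.sum_mul_sum]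
          refine Finset.sum_congr rfl fun a _ => Finset.sum_congr rfl fun b _ => ?_
          rw [map_mul, conj_ee, show (((a : ℤ) - b : ℤ) : ℝ) * x / q =
            x * (a / q) + -(x * (b / q)) by push_cast; ring, ee_add]
          ring
      _ = ∑ a ∈ S, ∑ b ∈ S, (w a * (starRingEnd ℂ) (w b)) *
            (if (q : ℤ) ∣ ((a : ℤ) - b) then (q : ℂ) else 0) := by
          rw [Finset.sum_comm]
          refine Finset.sum_congr rfl fun a _ => ?_
          rw [Finset.sum_comm]
          refine Finset.sum_congr rfl fun b _ => ?_
          rw [← Finset.mul_sum, sum_ee_mul_div q hq]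
      _ = ∑ a ∈ S, (q : ℂ) * (‖w a‖ : ℂ) ^ 2 := by
          refine Finset.sum_congr rfl fun a ha => ?_
          rw [Finset.sum_eq_single_of_mem a ha]
          · rw [sub_self, if_pos (dvd_zero _), Complex.mul_conj']
            ring
          · intro b hb hba
            rw [if_neg, mul_zero]
            intro h
            have h1 := Finset.mem_range.1 (hS ha)
            have h2 := Finset.mem_range.1 (hS hb)
            have h3 := (Nat.modEq_iff_dvd.2 h)
            exact hba (Nat.ModEq.eq_of_lt_of_lt h3 h2 h1)
      _ = _ := by rw [Finset.mul_sum]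
  exact_mod_cast hc

theorem sum_proj_sq_le (B : Finset ℕ) (X q : ℕ) (hq : 0 < q) :
    ∑ x ∈ range q, proj B X q x ^ 2 ≤ q * energy B X q := by
  have h := sum_norm_sq_sum_ee q hq (units q) (Finset.filter_subset _ _)
    (fun a => (starRingEnd ℂ) (expSum B (a / q)))
  simp only [RCLike.norm_conj] at h
  simp only [proj, energy, div_pow]
  rw [← Finset.sum_div, ← mul_div_assoc, ← h]
  refine div_le_div_of_nonneg_right (Finset.sum_le_sum fun x _ => ?_) (by positivity)
  rw [← sq_abs]
  gcongr
  exact Complex.abs_re_le_norm _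

/-- The number of elements of `B` in each residue class modulo `d ≤ Z` is at most `β X / d`. -/
def ClassBound (B : Finset ℕ) (X Z : ℕ) (β : ℝ) : Prop :=
  ∀ d, 1 ≤ d → d ≤ Z → ∀ x, (d : ℝ) * (B.filter fun y => y ≡ x [MOD d]).card ≤ β * X

theorem ClassBound.card_le {B : Finset ℕ} {X Z : ℕ} {β : ℝ} (h : ClassBound B X Z β)
    (hZ : 1 ≤ Z) : (B.card : ℝ) ≤ β * X := by
  have := h 1 le_rfl hZ 0
  simpa [Nat.modEq_one] using this

theorem sum_divisors_proj (B : Finset ℕ) (X q x : ℕ) (hq : 0 < q) :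
    ∑ d ∈ q.divisors, proj B X d x =
      (q : ℝ) * (B.filter fun y => y ≡ x [MOD q]).card / X := by
  simp only [proj]
  rw [← Finset.sum_div, ← Complex.re_sum]
  congr 1
  have h1 := sum_range_eq_sum_divisors_coprime q hq
    (fun θ : ℝ => ee (x * θ) * (starRingEnd ℂ) (expSum B θ))
  change _ = ∑ d ∈ q.divisors, ∑ a ∈ units d, _ at h1
  rw [← h1]
  have h2 : ∑ a ∈ range q, ee (x * (a / q)) * (starRingEnd ℂ) (expSum B (a / q)) =
      (((q : ℝ) * (B.filter fun y => y ≡ x [MOD q]).card : ℝ) : ℂ) := by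
    calc ∑ a ∈ range q, ee (x * (a / q)) * (starRingEnd ℂ) (expSum B (a / q))
        = ∑ y ∈ B, ∑ a ∈ range q, ee ((((x : ℤ) - y : ℤ) : ℝ) * a / q) := by
          rw [Finset.sum_comm]
          refine Finset.sum_congr rfl fun a _ => ?_
          rw [expSum, map_sum, Finset.mul_sum]
          refine Finset.sum_congr rfl fun y _ => ?_
          rw [conj_ee, ← ee_add]
          congr 1
          push_cast
          ring
      _ = ∑ y ∈ B, if y ≡ x [MOD q] then (q : ℂ) else 0 := by
          refine Finset.sum_congr rfl fun y _ => ?_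
          rw [sum_ee_mul_div q hq]
          simp only [Nat.modEq_iff_dvd]
      _ = _ := by
          rw [← Finset.sum_filter, Finset.sum_const, nsmul_eq_mul]
          push_cast
          ring
  rw [h2, Complex.ofReal_re]

theorem abs_proj_le {B : Finset ℕ} {X Z : ℕ} {β : ℝ} (h : ClassBound B X Z β) (hX : 0 < X)
    {q : ℕ} (hq : 0 < q) (hqZ : q ≤ Z) (x : ℕ) : |proj B X q x| ≤ q.divisors.card * β := by
  have hX' : (0 : ℝ) < X := by exact_mod_cast hX
  have h1 := (ArithmeticFunction.sum_eq_iff_sum_mul_moebius_eq (R := ℝ)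
    (f := fun d => proj B X d x)
    (g := fun d => (d : ℝ) * (B.filter fun y => y ≡ x [MOD d]).card / X)).1
    (fun n hn => sum_divisors_proj B X n x hn) q hq
  rw [← h1]
  refine (Finset.abs_sum_le_sum_abs _ _).trans ?_
  have h2 : ∀ y ∈ q.divisorsAntidiagonal, |((ArithmeticFunction.moebius y.1 : ℤ) : ℝ) *
      ((y.2 : ℝ) * (B.filter fun z => z ≡ x [MOD y.2]).card / X)| ≤ β := by
    intro y hy
    obtain ⟨hy1, hy2⟩ := Nat.mem_divisorsAntidiagonal.1 hy
    have hy3 : 0 < y.2 := Nat.pos_of_ne_zero fun h0 => by simp [h0] at hy1; omega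
    have hy4 : y.2 ≤ Z := (Nat.le_of_dvd hq ⟨y.1, by rw [← hy1, mul_comm]⟩).trans hqZ
    have h3 := h y.2 hy3 hy4 x
    rw [abs_mul]
    have h4 : |((ArithmeticFunction.moebius y.1 : ℤ) : ℝ)| ≤ 1 := by
      exact_mod_cast ArithmeticFunction.abs_moebius_le_one (n := y.1)
    have h5 : (y.2 : ℝ) * (B.filter fun z => z ≡ x [MOD y.2]).card / X ≤ β := by
      rw [div_le_iff₀ hX']
      exact h3
    rw [abs_of_nonneg (a := (y.2 : ℝ) * (B.filter fun z => z ≡ x [MOD y.2]).card / X)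
      (by positivity)]
    calc _ ≤ 1 * ((y.2 : ℝ) * (B.filter fun z => z ≡ x [MOD y.2]).card / X) := by gcongr
      _ ≤ β := by rw [one_mul]; exact h5
  refine (Finset.sum_le_sum h2).trans ?_
  rw [Finset.sum_const, nsmul_eq_mul, ← Nat.map_div_right_divisors, Finset.card_map]

theorem sum_norm_expSum_sq (B : Finset ℕ) (q : ℕ) (hq : 0 < q) :
    ∑ a ∈ range q, ‖expSum B (a / q)‖ ^ 2 =
      q * ∑ x ∈ range q, ((B.filter fun y => y ≡ x [MOD q]).card : ℝ) ^ 2 := by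
  have hq' : (q : ℝ) ≠ 0 := by exact_mod_cast hq.ne'
  have h := sum_norm_sq_sum_ee q hq (range q) (Finset.Subset.refl _)
    (fun x => ((B.filter fun y => y ≡ x [MOD q]).card : ℂ))
  simp only [RCLike.norm_natCast] at h
  rw [← h]
  refine Finset.sum_congr rfl fun a _ => ?_
  congr 2
  rw [expSum, ← Finset.sum_fiberwise_of_maps_to (s := B) (t := range q) (g := fun y => y % q)
    (fun y _ => Finset.mem_range.2 (Nat.mod_lt y hq))]
  refine Finset.sum_congr rfl fun x hx => ?_
  have hfil : (B.filter fun y => y % q = x) = B.filter fun y => y ≡ x [MOD q] := by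
    refine Finset.filter_congr fun y _ => ?_
    rw [Nat.ModEq, Nat.mod_eq_of_lt (Finset.mem_range.1 hx)]
  rw [hfil, Finset.sum_congr rfl (g := fun _ => ee (a * (x / q))), Finset.sum_const, nsmul_eq_mul,
    mul_comm]
  intro y hy
  have hy' := (Finset.mem_filter.1 hy).2
  obtain ⟨c, hc⟩ := Nat.modEq_iff_dvd.1 hy'.symm
  have hc' : (y : ℝ) = x + q * c := by
    have : (y : ℤ) = x + q * c := by linarith
    exact_mod_cast this
  rw [hc', show ((x : ℝ) + q * c) * (a / q) = a * (x / q) + ((c * a : ℤ) : ℝ) by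
    push_cast; field_simp, ee_add_int]

/-- The energy at a single denominator is controlled by the deficiency in density. -/
theorem energy_le {B : Finset ℕ} {X Z : ℕ} {β : ℝ} (h : ClassBound B X Z β)
    {q : ℕ} (hq : 2 ≤ q) (hqZ : q ≤ Z) :
    energy B X q ≤ B.card * (β * X - B.card) / (X : ℝ) ^ 2 := by
  have hq0 : 0 < q := by omega
  rw [energy]
  refine div_le_div_of_nonneg_right ?_ (by positivity)
  have h1 : ∑ a ∈ units q, ‖expSum B (a / q)‖ ^ 2 + (B.card : ℝ) ^ 2 ≤
      ∑ a ∈ range q, ‖expSum B (a / q)‖ ^ 2 := by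
    rw [← Finset.add_sum_erase (range q) _ (Finset.mem_range.2 hq0), add_comm]
    refine add_le_add ?_ ?_
    · simp [expSum, ee_zero]
    · refine Finset.sum_le_sum_of_subset_of_nonneg ?_ fun _ _ _ => by positivity
      intro a ha
      obtain ⟨ha1, ha2⟩ := mem_units.1 ha
      refine Finset.mem_erase.2 ⟨?_, Finset.mem_range.2 ha1⟩
      rintro rfl
      rw [Nat.coprime_zero_left] at ha2
      omega
  rw [sum_norm_expSum_sq B q hq0] at h1
  have h2 : (q : ℝ) * ∑ x ∈ range q, ((B.filter fun y => y ≡ x [MOD q]).card : ℝ) ^ 2 ≤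
      β * X * B.card := by
    calc (q : ℝ) * ∑ x ∈ range q, ((B.filter fun y => y ≡ x [MOD q]).card : ℝ) ^ 2
        = ∑ x ∈ range q, (q * (B.filter fun y => y ≡ x [MOD q]).card : ℝ) *
            (B.filter fun y => y ≡ x [MOD q]).card := by
          rw [Finset.mul_sum]
          refine Finset.sum_congr rfl fun x _ => by ring
      _ ≤ ∑ x ∈ range q, β * X * (B.filter fun y => y ≡ x [MOD q]).card := by
          refine Finset.sum_le_sum fun x _ => ?_
          exact mul_le_mul_of_nonneg_right (h q hq0 hqZ x) (by positivity)
      _ = β * X * B.card := by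
          rw [← Finset.mul_sum]
          congr 1
          rw [Finset.card_eq_sum_card_fiberwise (s := B) (t := range q) (f := fun y => y % q)
            (fun y _ => Finset.mem_coe.2 (Finset.mem_range.2 (Nat.mod_lt y hq0)))]
          push_cast
          refine Finset.sum_congr rfl fun x hx => ?_
          congr 2
          refine Finset.filter_congr fun y _ => ?_
          rw [Nat.ModEq, Nat.mod_eq_of_lt (Finset.mem_range.1 hx)]
  nlinarith

theorem pow_sum_le_card_pow_mul_sum {ι : Type*} (s : Finset ι) (f : ι → ℝ) (k : ℕ)
    (hk : 1 ≤ k) : (∑ i ∈ s, f i) ^ (2 * k) ≤ (s.card : ℝ) ^ (2 * k - 1) *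
      ∑ i ∈ s, f i ^ (2 * k) := by
  obtain ⟨n, hn⟩ : ∃ n, 2 * k = n + 1 := ⟨2 * k - 1, by omega⟩
  have heven : Even (2 * k) := even_two_mul k
  rw [← heven.pow_abs]
  have h1 : |∑ i ∈ s, f i| ^ (2 * k) ≤ (∑ i ∈ s, |f i|) ^ (2 * k) := by
    gcongr
    exact Finset.abs_sum_le_sum_abs _ _
  refine h1.trans ?_
  rcases s.eq_empty_or_nonempty with rfl | hs
  · have : 2 * k ≠ 0 := by omega
    simp [this]
  have h2 := pow_sum_div_card_le_sum_pow (s := s) (f := fun i => |f i|)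
    (fun i _ => abs_nonneg _) n
  have hc : (0 : ℝ) < (s.card : ℝ) ^ n := by
    have : (0 : ℝ) < s.card := by exact_mod_cast Finset.card_pos.2 hs
    positivity
  rw [div_le_iff₀ hc, ← hn] at h2
  simp_rw [heven.pow_abs] at h2
  rw [show 2 * k - 1 = n by omega]
  linarith

/-- The moment method bound for the total energy over a set of denominators. -/
theorem sum_energy_pow_le {B : Finset ℕ} {X Z : ℕ} {β : ℝ} (hβ : 0 ≤ β)
    (h : ClassBound B X Z β) (hX : 0 < X)
    (hZ : 1 ≤ Z) (hB : B ⊆ range X) {𝒬 : Finset ℕ} (h0 : ∀ q ∈ 𝒬, q ≠ 0) (h𝒬Z : ∀ q ∈ 𝒬, q ≤ Z)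
    {T : ℕ} (hT : ∀ q ∈ 𝒬, q.divisors.card ≤ T) {k : ℕ} (hk : 1 ≤ k) :
    (∑ q ∈ 𝒬, energy B X q) ^ (2 * k) ≤ β ^ (2 * k - 1) *
      ((∑ t ∈ (Fintype.piFinset fun _ : Fin (2 * k) => 𝒬).filter Admissible,
        (1 : ℝ) / (univ.lcm t : ℕ) * |∑ x ∈ range (univ.lcm t), ∏ i, proj B X (t i) x|) +
      (𝒬.card : ℝ) ^ (2 * k) * (Z : ℝ) ^ (2 * k) * (T * β) ^ (2 * k) / X) := by
  have hX' : (0 : ℝ) < X := by exact_mod_cast hX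
  have h1 := sum_pow_le_sum_admissible (2 * k) X Z 𝒬 (proj B X) (T * β) h0 h𝒬Z
    (fun q _ => proj_periodic B X q)
    (fun q hq d x hd => sum_proj_progression B X q (Nat.pos_of_ne_zero (h0 q hq)) d x hd)
    (fun q hq x => (abs_proj_le h hX (Nat.pos_of_ne_zero (h0 q hq)) (h𝒬Z q hq) x).trans
      (mul_le_mul_of_nonneg_right (by exact_mod_cast hT q hq) hβ))
  have h2 : ∑ y ∈ B, ∑ q ∈ 𝒬, proj B X q y = X * ∑ q ∈ 𝒬, energy B X q := by
    rw [Finset.sum_comm, Finset.mul_sum]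
    exact Finset.sum_congr rfl fun q _ => sum_proj B X q hX.ne'
  have h3 := pow_sum_le_card_pow_mul_sum B (fun y => ∑ q ∈ 𝒬, proj B X q y) k hk
  rw [h2] at h3
  have h4 : ∑ y ∈ B, (∑ q ∈ 𝒬, proj B X q y) ^ (2 * k) ≤
      ∑ y ∈ range X, (∑ q ∈ 𝒬, proj B X q y) ^ (2 * k) :=
    Finset.sum_le_sum_of_subset_of_nonneg hB fun _ _ _ => (even_two_mul k).pow_nonneg _
  have h5 := h.card_le hZ
  have hS0 : 0 ≤ ∑ y ∈ range X, (∑ q ∈ 𝒬, proj B X q y) ^ (2 * k) :=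
    Finset.sum_nonneg fun _ _ => (even_two_mul k).pow_nonneg _
  have h6 := (h3.trans (mul_le_mul_of_nonneg_left h4 (by positivity))).trans
    (mul_le_mul (pow_le_pow_left₀ (Nat.cast_nonneg _) h5 _) h1 hS0 (by positivity))
  refine le_of_mul_le_mul_left ?_ (pow_pos hX' (2 * k))
  rw [← mul_pow]
  refine h6.trans (le_of_eq ?_)
  obtain ⟨n, hn⟩ : ∃ n, 2 * k = n + 1 := ⟨2 * k - 1, by omega⟩
  rw [show 2 * k - 1 = n by omega, hn, mul_pow, pow_succ (X : ℝ) n, mul_add, mul_add, mul_add]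
  congr 1
  · rw [Finset.mul_sum, Finset.mul_sum, Finset.mul_sum]
    refine Finset.sum_congr rfl fun t _ => ?_
    ring
  · field_simp

theorem sum_energy_pow_le_of_energy_le {B : Finset ℕ} {X Z : ℕ} {β : ℝ} (hβ : 0 ≤ β)
    (h : ClassBound B X Z β) (hX : 0 < X)
    (hZ : 1 ≤ Z) (hB : B ⊆ range X) {𝒬 : Finset ℕ} (h0 : ∀ q ∈ 𝒬, q ≠ 0) (h𝒬Z : ∀ q ∈ 𝒬, q ≤ Z)
    {r : ℝ} (hr : ∀ q ∈ 𝒬, energy B X q ≤ r) (hr0 : 0 ≤ r) {k : ℕ} (hk : 1 ≤ k) :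
    (∑ q ∈ 𝒬, energy B X q) ^ (2 * k) ≤ β ^ (2 * k - 1) *
      ((Z * r) ^ k * (1 + k * Real.log Z) ^ 4 ^ k +
        (Z : ℝ) ^ (4 * k) * (Z * β) ^ (2 * k) / X) := by
  refine (sum_energy_pow_le hβ h hX hZ hB h0 h𝒬Z (T := Z)
    (fun q hq => (Nat.card_divisors_le_self q).trans (h𝒬Z q hq)) hk).trans ?_
  refine mul_le_mul_of_nonneg_left (add_le_add ?_ ?_) (by positivity)
  · have h1 := sum_admissible_one_div_lcm_le k Z 𝒬 h0 h𝒬Z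
    calc _ ≤ ∑ t ∈ (Fintype.piFinset fun _ : Fin (2 * k) => 𝒬).filter Admissible,
          (1 : ℝ) / (univ.lcm t : ℕ) * (Z * r) ^ k := by
          refine Finset.sum_le_sum fun t ht => ?_
          obtain ⟨ht1, ht2⟩ := Finset.mem_filter.1 ht
          have ht' := Fintype.mem_piFinset.1 ht1
          refine mul_le_mul_of_nonneg_left ?_ (by positivity)
          refine (ht2.abs_sum_prod_le (fun i => h0 _ (ht' i))
            (fun i => proj_periodic B X (t i))).trans ?_
          calc ∏ i, √(∑ y ∈ range (t i), proj B X (t i) y ^ 2)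
              ≤ ∏ _i : Fin (2 * k), √(Z * r) := by
                refine Finset.prod_le_prod (fun i _ => Real.sqrt_nonneg _) fun i _ => ?_
                refine Real.sqrt_le_sqrt ((sum_proj_sq_le B X (t i)
                  (Nat.pos_of_ne_zero (h0 _ (ht' i)))).trans ?_)
                have h2 : (t i : ℝ) ≤ Z := by exact_mod_cast h𝒬Z _ (ht' i)
                exact mul_le_mul h2 (hr _ (ht' i)) (energy_nonneg _ _ _) (by positivity)
            _ = (Z * r) ^ k := by
                rw [Finset.prod_const, Finset.card_univ, Fintype.card_fin, pow_mul,
                  Real.sq_sqrt (by positivity)]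
      _ ≤ _ := by
          rw [← Finset.sum_mul, mul_comm]
          exact mul_le_mul_of_nonneg_left h1 (by positivity)
  · have h3 : (𝒬.card : ℝ) ≤ Z := by
      have : 𝒬 ⊆ Icc 1 Z := fun q hq =>
        Finset.mem_Icc.2 ⟨Nat.one_le_iff_ne_zero.2 (h0 q hq), h𝒬Z q hq⟩
      have := Finset.card_le_card this
      rw [Nat.card_Icc] at this
      exact_mod_cast this
    rw [show 4 * k = 2 * k + 2 * k by ring, pow_add]
    gcongr

theorem sum_energy_pow_le_card_admissible {B : Finset ℕ} {X Z : ℕ} {β : ℝ} (hβ : 0 ≤ β)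
    (h : ClassBound B X Z β) (hX : 0 < X)
    (hZ : 1 ≤ Z) (hB : B ⊆ range X) {𝒬 : Finset ℕ} (h0 : ∀ q ∈ 𝒬, q ≠ 0) (h𝒬Z : ∀ q ∈ 𝒬, q ≤ Z)
    {T : ℕ} (hT : ∀ q ∈ 𝒬, q.divisors.card ≤ T) {k : ℕ} (hk : 1 ≤ k) :
    (∑ q ∈ 𝒬, energy B X q) ^ (2 * k) ≤ β ^ (2 * k - 1) *
      ((((Fintype.piFinset fun _ : Fin (2 * k) => 𝒬).filter Admissible).card : ℝ) *
        (T * β) ^ (2 * k) +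
      (𝒬.card : ℝ) ^ (2 * k) * (Z : ℝ) ^ (2 * k) * (T * β) ^ (2 * k) / X) := by
  refine (sum_energy_pow_le hβ h hX hZ hB h0 h𝒬Z hT hk).trans ?_
  refine mul_le_mul_of_nonneg_left (add_le_add ?_ le_rfl) (by positivity)
  rw [← nsmul_eq_mul, ← Finset.sum_const]
  refine Finset.sum_le_sum fun t ht => ?_
  obtain ⟨ht1, ht2⟩ := Finset.mem_filter.1 ht
  have ht' := Fintype.mem_piFinset.1 ht1
  have hl : (0 : ℝ) < (univ.lcm t : ℕ) := by
    exact_mod_cast Nat.pos_of_ne_zero (Finset.lcm_ne_zero_iff.2 fun i _ => h0 _ (ht' i))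
  rw [one_div, inv_mul_le_iff₀ hl]
  refine (Finset.abs_sum_le_sum_abs _ _).trans ?_
  calc ∑ x ∈ range (univ.lcm t), |∏ i, proj B X (t i) x|
      ≤ ∑ x ∈ range (univ.lcm t), (T * β) ^ (2 * k) := by
        refine Finset.sum_le_sum fun x _ => ?_
        rw [Finset.abs_prod]
        calc ∏ i, |proj B X (t i) x| ≤ ∏ _i : Fin (2 * k), (T * β : ℝ) := by
              refine Finset.prod_le_prod (fun i _ => abs_nonneg _) fun i _ => ?_
              refine (abs_proj_le h hX (Nat.pos_of_ne_zero (h0 _ (ht' i)))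
                (h𝒬Z _ (ht' i)) x).trans ?_
              exact mul_le_mul_of_nonneg_right (by exact_mod_cast hT _ (ht' i)) hβ
          _ = _ := by simp
    _ = _ := by rw [Finset.sum_const, Finset.card_range, nsmul_eq_mul]

theorem norm_ee_sub_one (x : ℝ) : ‖ee x - 1‖ = 2 * |Real.sin (Real.pi * x)| := by
  rw [ee, show 2 * (Real.pi : ℂ) * Complex.I * (x : ℂ) = Complex.I * ((2 * Real.pi * x : ℝ) : ℂ) by
    push_cast; ring, Complex.norm_exp_I_mul_ofReal_sub_one, norm_mul, Real.norm_eq_abs,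
    Real.norm_eq_abs, show 2 * Real.pi * x / 2 = Real.pi * x by ring]
  norm_num

theorem norm_ee_sub_one_le (x : ℝ) : ‖ee x - 1‖ ≤ 2 * Real.pi * |x| := by
  rw [norm_ee_sub_one]
  have h := Real.abs_sin_le_abs (x := Real.pi * x)
  rw [abs_mul, abs_of_pos Real.pi_pos] at h
  linarith

theorem le_norm_ee_sub_one (x : ℝ) : 4 * |x - round x| ≤ ‖ee x - 1‖ := by
  have h1 : ee x = ee (x - round x) := by
    have h := ee_add_int (x - round x) (round x)
    rwa [sub_add_cancel] at h
  have h2 := abs_sub_round x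
  have h3 : |Real.pi * (x - round x)| ≤ Real.pi / 2 := by
    rw [abs_mul, abs_of_pos Real.pi_pos]
    nlinarith [Real.pi_pos]
  have h4 := Real.mul_abs_le_abs_sin h3
  rw [h1, norm_ee_sub_one]
  rw [abs_mul, abs_of_pos Real.pi_pos, ← mul_assoc, div_mul_cancel₀ _ Real.pi_ne_zero] at h4
  linarith

theorem norm_sum_ee_le (φ : ℝ) {η : ℝ} (hη : 0 < η) (h : η ≤ |φ - round φ|) (k : ℕ) :
    ‖∑ n ∈ range k, ee (n * φ)‖ ≤ 1 / (2 * η) := by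
  have h1 := le_norm_ee_sub_one φ
  have h2 : 0 < ‖ee φ - 1‖ := by linarith
  have hne : ee φ ≠ 1 := fun h => by simp [h] at h2
  simp_rw [ee_nat_mul]
  rw [geom_sum_eq hne, norm_div, div_le_div_iff₀ h2 (by positivity)]
  have h3 : ‖ee φ ^ k - 1‖ ≤ 2 := by
    refine (norm_sub_le _ _).trans ?_
    rw [norm_pow, norm_ee]
    norm_num
  nlinarith [norm_nonneg (ee φ ^ k - 1)]

theorem norm_sum_sq_le_differencing (z : ℕ → ℂ) (M : ℕ) :
    ‖∑ n ∈ range M, z n‖ ^ 2 ≤ ∑ n ∈ range M, ‖z n‖ ^ 2 +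
      2 * ∑ h ∈ Ico 1 M, ‖∑ n ∈ range (M - h), z (n + h) * (starRingEnd ℂ) (z n)‖ := by
  have h1 : ∀ M : ℕ, ‖∑ n ∈ range M, z n‖ ^ 2 = ∑ n ∈ range M, ‖z n‖ ^ 2 +
      2 * (∑ m ∈ range M, ∑ n ∈ range m, z m * (starRingEnd ℂ) (z n)).re := by
    intro M
    induction M with
    | zero => simp
    | succ M ih =>
      rw [sum_range_succ, sum_range_succ, sum_range_succ, add_comm (∑ n ∈ range M, z n),
        ← Complex.normSq_eq_norm_sq, Complex.normSq_add, Complex.normSq_eq_norm_sq,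
        Complex.normSq_eq_norm_sq, ih, Complex.add_re, map_sum, mul_sum]
      ring
  have h2 : ∑ m ∈ range M, ∑ n ∈ range m, z m * (starRingEnd ℂ) (z n) =
      ∑ h ∈ Ico 1 M, ∑ n ∈ range (M - h), z (n + h) * (starRingEnd ℂ) (z n) := by
    rw [sum_sigma', sum_sigma']
    refine sum_nbij' (fun p => ⟨p.1 - p.2, p.2⟩) (fun p => ⟨p.2 + p.1, p.2⟩) ?_ ?_ ?_ ?_ ?_
    · rintro ⟨a, b⟩ h
      simp only [mem_sigma, mem_range, mem_Ico] at h ⊢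
      omega
    · rintro ⟨a, b⟩ h
      simp only [mem_sigma, mem_range, mem_Ico] at h ⊢
      omega
    · rintro ⟨a, b⟩ h
      simp only [mem_sigma, mem_range] at h
      simp only [Sigma.mk.injEq, heq_eq_eq, and_true]
      omega
    · rintro ⟨a, b⟩ h
      simp only [mem_sigma, mem_range, mem_Ico] at h
      simp only [Sigma.mk.injEq, heq_eq_eq, and_true]
      omega
    · rintro ⟨a, b⟩ h
      simp only [mem_sigma, mem_range] at h
      simp only
      rw [show b + (a - b) = a by omega]
  rw [h1, h2]
  gcongr
  exact (Complex.re_le_norm _).trans (norm_sum_le _ _)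

/-- The quadratic Weyl sum over the squares of `1, …, M`. -/
noncomputable def weylSum (M : ℕ) (θ : ℝ) : ℂ := ∑ n ∈ range M, ee (((n : ℝ) + 1) ^ 2 * θ)

theorem norm_weylSum_sq_le (M : ℕ) (θ : ℝ) :
    ‖weylSum M θ‖ ^ 2 ≤ M + 2 * ∑ h ∈ Ico 1 M, ‖∑ n ∈ range (M - h), ee (n * (h * (2 * θ)))‖ := by
  refine (norm_sum_sq_le_differencing _ _).trans ?_
  simp only [norm_ee, one_pow, sum_const, card_range, nsmul_eq_mul, mul_one]
  gcongr with h hh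
  refine le_of_eq ?_
  have : ∀ n : ℕ, ee (((n + h : ℕ) + 1 : ℝ) ^ 2 * θ) * (starRingEnd ℂ) (ee (((n : ℝ) + 1) ^ 2 * θ)) =
      ee (n * (h * (2 * θ))) * ee ((h ^ 2 + 2 * h) * θ) := fun n => by
    rw [conj_ee, ← ee_add, ← ee_add]
    congr 1
    push_cast
    ring
  simp_rw [this]
  rw [← sum_mul, norm_mul, norm_ee, mul_one]

theorem le_abs_mul_sub_of_not_dvd {M q : ℕ} {a h z : ℤ} {ψ : ℝ} (hM : 0 < M) (hq : 0 < q)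
    (hc : IsCoprime a (q : ℤ)) (hψ : |ψ - a / q| ≤ 1 / (2 * M * q)) (hh : |h| ≤ M)
    (hd : ¬(q : ℤ) ∣ h) : 1 / (2 * (q : ℝ)) ≤ |h * ψ - z| := by
  have hq' : (0 : ℝ) < q := by exact_mod_cast hq
  have hM' : (0 : ℝ) < M := by exact_mod_cast hM
  have h0 : h * a - z * q ≠ 0 := fun h0 => hd (by
    have : (q : ℤ) ∣ h * a := ⟨z, by linarith⟩
    exact hc.symm.dvd_of_dvd_mul_right this)
  have h1 : (1 : ℝ) ≤ |(h * a - z * q : ℝ)| := by exact_mod_cast Int.one_le_abs h0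
  have h2 : 1 / (q : ℝ) ≤ |(h : ℝ) * (a / q) - z| := by
    rw [show (h : ℝ) * (a / q) - z = (h * a - z * q) / q by field_simp, abs_div, abs_of_pos hq']
    gcongr
  have hh' : |(h : ℝ)| ≤ M := by exact_mod_cast hh
  have h3 : |(h : ℝ) * (ψ - a / q)| ≤ 1 / (2 * q) := by
    rw [abs_mul]
    calc |(h : ℝ)| * |ψ - a / q| ≤ M * (1 / (2 * M * q)) := by gcongr
      _ = 1 / (2 * q) := by field_simp
  have h4 : (h : ℝ) * (a / q) - z = (h * ψ - z) - h * (ψ - a / q) := by ring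
  have h5 := abs_sub (h * ψ - z) ((h : ℝ) * (ψ - a / q))
  rw [← h4] at h5
  have h6 : 1 / (q : ℝ) = 1 / (2 * q) + 1 / (2 * q) := by field_simp; norm_num
  linarith

theorem card_filter_abs_sub_round_lt_le {M q : ℕ} {a : ℤ} {ψ η : ℝ} (hM : 0 < M) (hq : 0 < q)
    (hc : IsCoprime a (q : ℤ)) (hψ : |ψ - a / q| ≤ 1 / (2 * M * q)) (hη : 0 ≤ η) :
    (((Ico 1 M).filter fun h : ℕ => |h * ψ - round (h * ψ)| < η).card : ℝ) ≤
      ((M : ℝ) / q + 1) * (4 * q * η + 3) := by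
  have hq' : (0 : ℝ) < q := by exact_mod_cast hq
  set H := (Ico 1 M).filter fun h : ℕ => |h * ψ - round (h * ψ)| < η with hH
  set c : ℤ := ⌈2 * (q : ℝ) * η⌉ with hcdef
  have hc0 : 0 ≤ c := Int.ceil_nonneg (by positivity)
  have hcard : H.card ≤ (range (M / q + 1) ×ˢ Icc (-c) c).card := by
    refine card_le_card_of_injOn
      (fun h : ℕ => (h / q, ⌊2 * (q : ℝ) * (h * ψ - round (h * ψ))⌋)) ?_ ?_
    · intro h hh
      simp only [hH, coe_filter, mem_Ico, Set.mem_ofPred_eq] at hh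
      simp only [coe_product, Set.mem_prod, mem_coe, mem_range, mem_Icc]
      have h1 := abs_lt.1 hh.2
      have h2 := Int.le_ceil (2 * (q : ℝ) * η)
      refine ⟨Nat.lt_succ_of_le (Nat.div_le_div_right hh.1.2.le), Int.le_floor.2 ?_, ?_⟩
      · push_cast
        nlinarith
      · have : ⌊2 * (q : ℝ) * (h * ψ - round (h * ψ))⌋ ≤ ⌊(c : ℝ)⌋ := Int.floor_mono (by nlinarith)
        simpa using this
    · intro h hh h' hh' he
      simp only [hH, coe_filter, mem_Ico, Set.mem_ofPred_eq] at hh hh'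
      simp only [Prod.mk.injEq] at he
      by_contra hne
      have hd : ¬(q : ℤ) ∣ (h : ℤ) - h' := by
        intro hd
        have h1 : h % q = h' % q := by
          have h2 : (h : ℤ) % q = h' % q := Int.emod_eq_emod_iff_emod_sub_eq_zero.2 (Int.emod_eq_zero_of_dvd hd)
          exact_mod_cast h2
        exact hne (by rw [← Nat.div_add_mod h q, ← Nat.div_add_mod h' q, he.1, h1])
      have h1 := le_abs_mul_sub_of_not_dvd (z := round (h * ψ) - round (h' * ψ)) hM hq hc hψ
        (abs_le.2 ⟨by omega, by omega⟩) hd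
      have h2 := Int.abs_sub_lt_one_of_floor_eq_floor he.2
      rw [← mul_sub, abs_mul, abs_of_pos (by positivity)] at h2
      push_cast at h1
      rw [show ((h : ℝ) - h') * ψ - (round (h * ψ) - round (h' * ψ)) =
        (h * ψ - round (h * ψ)) - (h' * ψ - round (h' * ψ)) by ring] at h1
      rw [div_le_iff₀ (by positivity)] at h1
      linarith
  rw [card_product, card_range, Int.card_Icc] at hcard
  have h1 : ((M / q : ℕ) : ℝ) ≤ (M : ℝ) / q := Nat.cast_div_le
  have h2 : (((c + 1 - -c).toNat : ℕ) : ℝ) = 2 * c + 1 := by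
    have : (((c + 1 - -c).toNat : ℕ) : ℤ) = 2 * c + 1 := by
      rw [Int.toNat_of_nonneg (by omega)]; ring
    exact_mod_cast this
  have h3 := (Int.ceil_lt_add_one (2 * (q : ℝ) * η)).le
  have hc0' : (0 : ℝ) ≤ c := by exact_mod_cast hc0
  calc (H.card : ℝ) ≤ ((M / q + 1) * (c + 1 - -c).toNat : ℕ) := by exact_mod_cast hcard
    _ = ((M / q : ℕ) + 1) * (2 * c + 1) := by push_cast [h2]; ring
    _ ≤ (M / q + 1) * (4 * q * η + 3) := by gcongr ?_ * ?_ <;> linarith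

theorem card_filter_abs_sub_round_lt_mul_le {M q : ℕ} {a : ℤ} {ψ η : ℝ} (hM : 0 < M) (hq : 0 < q)
    (hc : IsCoprime a (q : ℤ)) (hψ : |ψ - a / q| ≤ 1 / (2 * M * q)) (hη : 0 ≤ η)
    (hηq : η ≤ 1 / (2 * q)) :
    (((Ico 1 M).filter fun h : ℕ => |h * ψ - round (h * ψ)| < η).card : ℝ) * (q * |ψ - a / q|) ≤
      η := by
  have hq' : (1 : ℝ) ≤ q := by exact_mod_cast hq
  have hM' : (0 : ℝ) < M := by exact_mod_cast hM
  set H := (Ico 1 M).filter fun h : ℕ => |h * ψ - round (h * ψ)| < η with hH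
  rcases H.eq_empty_or_nonempty with h0 | h0
  · simpa [h0] using hη
  have hmem : ∀ h ∈ H, q ∣ h ∧ (h : ℝ) * |ψ - a / q| < η := by
    intro h hh
    simp only [hH, mem_filter, mem_Ico] at hh
    have hd : (q : ℤ) ∣ h := by
      by_contra hd
      have h1 := le_abs_mul_sub_of_not_dvd (z := round (h * ψ)) hM hq hc hψ
        (h := h) (abs_le.2 ⟨by omega, by omega⟩) hd
      push_cast at h1
      linarith
    refine ⟨by exact_mod_cast hd, ?_⟩
    obtain ⟨w, hw⟩ := hd
    have hw' : (h : ℝ) = q * w := by exact_mod_cast hw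
    have h1 : (h : ℝ) * ψ - round (h * ψ) = h * (ψ - a / q) - (round (h * ψ) - w * a : ℤ) := by
      push_cast
      rw [hw']
      field_simp
      ring
    have h2 : |(h : ℝ) * (ψ - a / q)| ≤ 1 / (2 * q) := by
      have : (h : ℝ) ≤ M := by exact_mod_cast hh.1.2.le
      rw [abs_mul, abs_of_nonneg (Nat.cast_nonneg h)]
      calc (h : ℝ) * |ψ - a / q| ≤ M * (1 / (2 * M * q)) := by gcongr
        _ = 1 / (2 * q) := by field_simp
    have h3 : 1 / (2 * (q : ℝ)) ≤ 1 / 2 := by gcongr; linarith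
    have h4 := hh.2
    rw [h1] at h4
    have h5 : round (h * ψ) - w * a = 0 := by
      by_contra hne
      have h6 : (1 : ℝ) ≤ |((round (h * ψ) - w * a : ℤ) : ℝ)| := by
        exact_mod_cast Int.one_le_abs hne
      have h7 := abs_sub_abs_le_abs_sub ((round (h * ψ) - w * a : ℤ) : ℝ) (h * (ψ - a / q))
      rw [abs_sub_comm] at h7
      linarith
    rwa [h5, Int.cast_zero, sub_zero, abs_mul, abs_of_nonneg (Nat.cast_nonneg h)] at h4
  set m := H.max' h0
  have hm := hmem m (H.max'_mem h0)
  have hcard : H.card ≤ m / q := by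
    refine (card_le_card_of_injOn (t := Ioc 0 (m / q)) (fun h => h / q) ?_ ?_).trans (by simp)
    · intro h hh
      have h1 := hmem h hh
      have h2 : 1 ≤ h := by
        simp only [hH, coe_filter, mem_Ico, Set.mem_ofPred_eq] at hh
        exact hh.1.1
      simp only [coe_Ioc, Set.mem_Ioc]
      exact ⟨Nat.div_pos (Nat.le_of_dvd h2 h1.1) hq, Nat.div_le_div_right (H.le_max' h hh)⟩
    · intro h hh h' hh' he
      rw [← Nat.div_mul_cancel (hmem h hh).1, ← Nat.div_mul_cancel (hmem h' hh').1]
      simp only at he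
      rw [he]
  have h1 : (H.card : ℝ) * q ≤ m := by
    exact_mod_cast (Nat.mul_le_mul_right q hcard).trans (Nat.div_mul_le_self m q)
  calc (H.card : ℝ) * (q * |ψ - a / q|) = (H.card * q) * |ψ - a / q| := by ring
    _ ≤ m * |ψ - a / q| := by gcongr
    _ ≤ η := hm.2.le

theorem le_card_filter_of_le_norm_weylSum {M : ℕ} {θ δ : ℝ} (hδ : 0 < δ) (hM : 4 ≤ δ ^ 2 * M)
    (h : δ * M ≤ ‖weylSum M θ‖) :
    δ ^ 2 * M / 8 ≤ (((Ico 1 M).filter fun h : ℕ =>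
      |h * (2 * θ) - round (h * (2 * θ))| < 2 / (δ ^ 2 * M)).card : ℝ) := by
  have hM0 : (0 : ℝ) < M := by
    by_contra hM0
    nlinarith [sq_nonneg δ]
  set η := 2 / (δ ^ 2 * M) with hη
  have hη0 : 0 < η := by positivity
  have h1 : ∑ h ∈ Ico 1 M, ‖∑ n ∈ range (M - h), ee (n * (h * (2 * θ)))‖ ≤
      (((Ico 1 M).filter fun h : ℕ => |h * (2 * θ) - round (h * (2 * θ))| < η).card : ℝ) * M +
        M * (1 / (2 * η)) := by
    rw [← sum_filter_add_sum_filter_not (Ico 1 M)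
      (fun h : ℕ => |h * (2 * θ) - round (h * (2 * θ))| < η)]
    refine add_le_add ?_ ?_
    · rw [← nsmul_eq_mul]
      refine sum_le_card_nsmul _ _ _ fun h _ => (norm_sum_le _ _).trans ?_
      simp only [norm_ee, sum_const, card_range, nsmul_eq_mul, mul_one]
      exact_mod_cast Nat.sub_le M h
    · refine (sum_le_card_nsmul _ _ (1 / (2 * η)) fun h hh => ?_).trans ?_
      · rw [mem_filter, not_lt] at hh
        exact norm_sum_ee_le _ hη0 hh.2 _
      · rw [nsmul_eq_mul]
        gcongr
        refine (card_filter_le _ _).trans ?_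
        simp
  have h2 := norm_weylSum_sq_le M θ
  have h3 : (δ * M) ^ 2 ≤ ‖weylSum M θ‖ ^ 2 := by gcongr
  have h4 : 1 / (2 * η) = δ ^ 2 * M / 4 := by rw [hη]; field_simp; norm_num
  rw [h4] at h1
  have h5 : (M : ℝ) * (δ ^ 2 * M / 2) ≤ M * (1 + 2 * (((Ico 1 M).filter fun h : ℕ =>
      |h * (2 * θ) - round (h * (2 * θ))| < η).card : ℝ)) := by nlinarith
  have h6 := le_of_mul_le_mul_left h5 hM0
  linarith

theorem exists_rat_approx_of_le_norm_weylSum {M : ℕ} {θ δ : ℝ} (hδ : 0 < δ) (hδ1 : δ ≤ 1)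
    (hM : 62208 ≤ δ ^ 4 * M) (h : δ * M ≤ ‖weylSum M θ‖) :
    ∃ (q : ℕ) (a : ℤ), 0 < q ∧ IsCoprime a (q : ℤ) ∧ q * δ ^ 2 ≤ 144 ∧
      |2 * θ - a / q| ≤ 16 / (δ ^ 4 * M ^ 2) ∧ ‖weylSum M θ‖ ^ 2 * q ≤ 3 * M ^ 2 := by
  have hδ2 : δ ^ 4 ≤ δ ^ 2 := pow_le_pow_of_le_one hδ.le hδ1 (by norm_num)
  have hM0 : (0 : ℝ) < M := by
    by_contra hM0
    nlinarith [sq_nonneg (δ ^ 2)]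
  have hM2 : 62208 ≤ δ ^ 2 * M := hM.trans (by gcongr)
  have hM0' : 0 < M := by exact_mod_cast hM0
  obtain ⟨r, hr, hrM⟩ := Real.exists_rat_abs_sub_le_and_den_le (2 * θ) (n := 2 * M) (by omega)
  have hc : IsCoprime r.num (r.den : ℤ) := Rat.isCoprime_num_den r
  have hq : 0 < r.den := r.den_pos
  have hrr : (r : ℝ) = r.num / r.den := by exact_mod_cast (Rat.num_div_den r).symm
  rw [hrr] at hr
  generalize r.num = a at *
  generalize r.den = q at *
  have hq' : (1 : ℝ) ≤ q := by exact_mod_cast hq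
  have hqM : (q : ℝ) ≤ 2 * M := by exact_mod_cast hrM
  have hψ : |2 * θ - a / q| ≤ 1 / (2 * M * q) := by
    refine hr.trans ?_
    push_cast
    gcongr
    linarith
  have hlow := le_card_filter_of_le_norm_weylSum hδ (by linarith) h
  have hq144 : q * δ ^ 2 ≤ 144 := by
    have hup := hlow.trans (card_filter_abs_sub_round_lt_le hM0' hq hc hψ (by positivity))
    have h1 : ((M : ℝ) / q + 1) ≤ 3 * M / q := by
      rw [div_add_one (by positivity)]
      gcongr
      linarith
    have h2 : ((M : ℝ) / q + 1) * (4 * q * (2 / (δ ^ 2 * M)) + 3) ≤ 24 / δ ^ 2 + 9 * M / q := by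
      calc _ ≤ 3 * M / q * (4 * q * (2 / (δ ^ 2 * M)) + 3) := by gcongr
        _ = _ := by field_simp; ring
    have h3 : 24 / δ ^ 2 ≤ δ ^ 2 * M / 16 := by
      rw [div_le_iff₀ (by positivity)]
      nlinarith
    have h4 : δ ^ 2 * M / 16 ≤ 9 * M / q := by linarith
    rw [div_le_div_iff₀ (by norm_num) (by positivity)] at h4
    have h5 : (M : ℝ) * (q * δ ^ 2) ≤ M * 144 := by nlinarith
    exact le_of_mul_le_mul_left h5 hM0
  refine ⟨q, a, hq, hc, hq144, ?_, ?_⟩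
  · have hηq : 2 / (δ ^ 2 * M) ≤ 1 / (2 * (q : ℝ)) := by
      rw [div_le_div_iff₀ (by positivity) (by positivity)]
      have : (q : ℝ) * δ ^ 2 * 4 ≤ δ ^ 4 * M := by linarith
      have h2 : δ ^ 2 * (q * 4) ≤ δ ^ 2 * (δ ^ 2 * M) := by nlinarith
      have := le_of_mul_le_mul_left h2 (by positivity)
      linarith
    have hup := card_filter_abs_sub_round_lt_mul_le hM0' hq hc hψ (by positivity) hηq
    have h1 : δ ^ 2 * M / 8 * |2 * θ - a / q| ≤ 2 / (δ ^ 2 * M) := by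
      refine le_trans ?_ hup
      gcongr
      nlinarith [abs_nonneg (2 * θ - a / q)]
    rw [le_div_iff₀ (by positivity)] at h1 ⊢
    nlinarith
  · have hS := norm_weylSum_sq_le M θ
    have h1 : ∑ h ∈ Ico 1 M, ‖∑ n ∈ range (M - h), ee (n * (h * (2 * θ)))‖ ≤
        ((M : ℝ) / q) * M + M * q := by
      rw [← sum_filter_add_sum_filter_not (Ico 1 M) (fun h : ℕ => q ∣ h)]
      refine add_le_add ?_ ?_
      · refine (sum_le_card_nsmul _ _ (M : ℝ) fun h _ => (norm_sum_le _ _).trans ?_).trans ?_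
        · simp only [norm_ee, sum_const, card_range, nsmul_eq_mul, mul_one]
          exact_mod_cast Nat.sub_le M h
        · rw [nsmul_eq_mul]
          gcongr
          have : ((Ico 1 M).filter fun h : ℕ => q ∣ h).card ≤ M / q := by
            rw [← Nat.Ioc_filter_dvd_card_eq_div]
            refine card_le_card fun h hh => ?_
            simp only [mem_filter, mem_Ico, mem_Ioc] at hh ⊢
            exact ⟨⟨by omega, by omega⟩, hh.2⟩
          exact (Nat.cast_le.2 this).trans Nat.cast_div_le
      · refine (sum_le_card_nsmul _ _ (q : ℝ) fun h hh => ?_).trans ?_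
        · simp only [mem_filter, mem_Ico] at hh
          have hd := le_abs_mul_sub_of_not_dvd (z := round (h * (2 * θ))) hM0' hq hc hψ
            (h := h) (abs_le.2 ⟨by omega, by omega⟩) (by exact_mod_cast hh.2)
          push_cast at hd
          refine (norm_sum_ee_le _ (by positivity) hd _).trans (le_of_eq ?_)
          field_simp
        · rw [nsmul_eq_mul]
          gcongr
          refine (card_filter_le _ _).trans ?_
          simp
    have h2 : 3 * (q : ℝ) ^ 2 ≤ M := by
      have : (q * δ ^ 2) ^ 2 ≤ 144 ^ 2 := by gcongr
      have h3 : δ ^ 4 * (3 * (q : ℝ) ^ 2) ≤ δ ^ 4 * M := by nlinarith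
      exact le_of_mul_le_mul_left h3 (by positivity)
    calc ‖weylSum M θ‖ ^ 2 * q ≤ (M + 2 * (M / q * M + M * q)) * q := by
          gcongr
          linarith
      _ = 2 * M ^ 2 + M * (q + 2 * q ^ 2) := by field_simp; ring
      _ ≤ 2 * M ^ 2 + M * M := by
          gcongr
          nlinarith
      _ = 3 * M ^ 2 := by ring

theorem exists_units_approx_of_le_norm_weylSum {M K : ℕ} {θ δ : ℝ} (hδ : 0 < δ) (hδ1 : δ ≤ 1)
    (hM : 62208 ≤ δ ^ 4 * M) (hK : 288 ≤ K * δ ^ 2) (h : δ * M ≤ ‖weylSum M θ‖) :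
    ∃ q ∈ Icc 1 K, ∃ a ∈ units q, ∃ z : ℤ, |θ - a / q - z| ≤ 8 / (δ ^ 4 * M ^ 2) ∧
      ‖weylSum M θ‖ ^ 2 * q ≤ 6 * M ^ 2 := by
  obtain ⟨q, a, hq, -, hqδ, hθ, hS⟩ := exists_rat_approx_of_le_norm_weylSum hδ hδ1 hM h
  set r : ℚ := Rat.divInt a (2 * q : ℕ) with hr
  have hq' : (0 : ℝ) < q := by exact_mod_cast hq
  have hden : r.den ≤ 2 * q := by
    have : (r.den : ℤ) ∣ (2 * q : ℕ) := Rat.den_dvd _ _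
    exact Nat.le_of_dvd (by omega) (by exact_mod_cast this)
  have hden' : (r.den : ℝ) ≤ 2 * q := by exact_mod_cast hden
  have hpos : (0 : ℤ) < r.den := by exact_mod_cast r.den_pos
  have hpos' : (0 : ℝ) < r.den := by exact_mod_cast r.den_pos
  have hval : (r.num : ℝ) / r.den = a / (2 * q) := by
    have h1 : (r : ℝ) = r.num / r.den := by exact_mod_cast (Rat.num_div_den r).symm
    rw [← h1, hr, Rat.divInt_eq_div]
    push_cast
    ring
  have hmod : ((r.num % r.den).toNat : ℤ) = r.num % r.den :=
    Int.toNat_of_nonneg (Int.emod_nonneg _ hpos.ne')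
  refine ⟨r.den, ?_, (r.num % r.den).toNat, ?_, r.num / r.den, ?_, ?_⟩
  · rw [mem_Icc]
    refine ⟨r.den_pos, ?_⟩
    have h1 : δ ^ 2 * (r.den : ℝ) ≤ δ ^ 2 * K := by nlinarith [sq_nonneg δ]
    exact_mod_cast le_of_mul_le_mul_left h1 (by positivity)
  · rw [mem_units]
    constructor
    · have := Int.emod_lt_of_pos r.num hpos
      omega
    · rw [← Nat.isCoprime_iff_coprime, hmod]
      have h1 := Rat.isCoprime_num_den r
      rw [← Int.emod_add_mul_ediv r.num r.den] at h1
      exact IsCoprime.of_add_mul_left_left h1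
  · have h1 : ((r.num % r.den).toNat : ℝ) = ((r.num % r.den : ℤ) : ℝ) := by
      rw [← hmod]; norm_cast
    have h2 : (r.num : ℝ) = ((r.num % r.den : ℤ) : ℝ) + r.den * ((r.num / r.den : ℤ) : ℝ) := by
      exact_mod_cast (Int.emod_add_mul_ediv r.num r.den).symm
    have h3 : θ - ((r.num % r.den).toNat : ℝ) / r.den - ((r.num / r.den : ℤ) : ℝ) =
        (2 * θ - a / q) / 2 := by
      rw [h1]
      have : (2 * θ - a / q) / 2 = θ - a / (2 * q) := by field_simp
      rw [this, ← hval]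
      rw [h2]
      field_simp
      ring
    rw [h3, abs_div, abs_two, div_le_iff₀ (by norm_num)]
    refine hθ.trans (le_of_eq ?_)
    ring
  · nlinarith [sq_nonneg ‖weylSum M θ‖]

/-- The linear exponential sum over `0, …, X - 1`. -/
noncomputable def linSum (X : ℕ) (β : ℝ) : ℂ := ∑ z ∈ range X, ee (z * β)

theorem linSum_sub_int (X : ℕ) (β : ℝ) (n : ℤ) : linSum X (β - n) = linSum X β := by
  refine sum_congr rfl fun z _ => ?_
  rw [← ee_add_int (z * (β - n)) (z * n)]
  congr 1
  push_cast
  ring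

theorem le_norm_linSum {X : ℕ} {β : ℝ} (h : 16 * X * |β| ≤ 1) : (X : ℝ) / 2 ≤ ‖linSum X β‖ := by
  have h1 : ‖(X : ℂ) - linSum X β‖ ≤ X / 2 := by
    have : (X : ℂ) - linSum X β = ∑ z ∈ range X, (1 - ee (z * β)) := by
      simp [linSum, sum_sub_distrib]
    rw [this]
    refine (norm_sum_le _ _).trans ?_
    refine (sum_le_card_nsmul _ _ (1 / 2 : ℝ) fun z hz => ?_).trans ?_
    · rw [norm_sub_rev]
      refine (norm_ee_sub_one_le _).trans ?_
      have hz' : (z : ℝ) ≤ X := by exact_mod_cast (mem_range.1 hz).le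
      rw [abs_mul, abs_of_nonneg (Nat.cast_nonneg z)]
      have := Real.pi_lt_four
      calc 2 * Real.pi * (z * |β|) ≤ 2 * 4 * (X * |β|) := by gcongr
        _ ≤ 1 / 2 := by linarith
    · simp; linarith
  have h2 := norm_sub_norm_le (X : ℂ) ((X : ℂ) - linSum X β)
  rw [sub_sub_cancel, Complex.norm_natCast] at h2
  linarith

theorem norm_weylSum_le_sum_units {M K X : ℕ} {δ : ℝ} (hδ : 0 < δ) (hδ1 : δ ≤ 1)
    (hM : 62208 ≤ δ ^ 4 * M) (hK : 288 ≤ K * δ ^ 2) (hX : 0 < X) (hXM : 128 * X ≤ δ ^ 4 * M ^ 2)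
    (θ : ℝ) :
    ‖weylSum M θ‖ ≤ δ * M + ∑ q ∈ Icc 1 K, ∑ a ∈ units q,
      12 * M / X ^ 2 * (√q)⁻¹ * ‖linSum X (θ - a / q)‖ ^ 2 := by
  have hX' : (0 : ℝ) < X := by exact_mod_cast hX
  have hM0 : (0 : ℝ) < M := by
    by_contra hM0
    nlinarith [sq_nonneg (δ ^ 2)]
  rcases le_or_gt ‖weylSum M θ‖ (δ * M) with h | h
  · refine h.trans (le_add_of_nonneg_right ?_)
    positivity
  obtain ⟨q, hq, a, ha, z, hz, hS⟩ := exists_units_approx_of_le_norm_weylSum hδ hδ1 hM hK h.le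
  have hq' : (0 : ℝ) < q := by exact_mod_cast (mem_Icc.1 hq).1
  have h1 : ‖weylSum M θ‖ ≤ 12 * M / X ^ 2 * (√q)⁻¹ * ‖linSum X (θ - a / q)‖ ^ 2 := by
    have h2 : (X : ℝ) / 2 ≤ ‖linSum X (θ - a / q)‖ := by
      rw [← linSum_sub_int _ _ z]
      refine le_norm_linSum ?_
      rw [le_div_iff₀ (by positivity)] at hz
      have hp : 0 < δ ^ 4 * (M : ℝ) ^ 2 := by positivity
      have h3 : (δ ^ 4 * (M : ℝ) ^ 2) * (16 * X * |θ - a / q - z|) ≤ (δ ^ 4 * (M : ℝ) ^ 2) * 1 := by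
        nlinarith
      exact le_of_mul_le_mul_left h3 hp
    have h3 : ‖weylSum M θ‖ * √q ≤ 3 * M := by
      refine abs_le_of_sq_le_sq' ?_ (by positivity) |>.2
      rw [mul_pow, Real.sq_sqrt hq'.le]
      nlinarith
    calc ‖weylSum M θ‖ ≤ 3 * M / √q := by rwa [le_div_iff₀ (by positivity)]
      _ = 12 * M / X ^ 2 * (√q)⁻¹ * (X / 2) ^ 2 := by field_simp; norm_num
      _ ≤ _ := by gcongr
  calc ‖weylSum M θ‖ ≤ 12 * M / X ^ 2 * (√q)⁻¹ * ‖linSum X (θ - a / q)‖ ^ 2 := h1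
    _ ≤ ∑ a ∈ units q, 12 * M / X ^ 2 * (√q)⁻¹ * ‖linSum X (θ - a / q)‖ ^ 2 :=
        single_le_sum (f := fun a : ℕ => 12 * M / X ^ 2 * (√q)⁻¹ * ‖linSum X (θ - a / q)‖ ^ 2)
          (fun _ _ => by positivity) ha
    _ ≤ ∑ q ∈ Icc 1 K, ∑ a ∈ units q, 12 * M / X ^ 2 * (√q)⁻¹ * ‖linSum X (θ - a / q)‖ ^ 2 :=
        single_le_sum (f := fun q : ℕ => ∑ a ∈ units q,
          12 * M / X ^ 2 * (√q)⁻¹ * ‖linSum X (θ - a / q)‖ ^ 2) (fun _ _ => by positivity) hq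
    _ ≤ _ := le_add_of_nonneg_left (by positivity)

/-- The exponential sum with coefficients `f 0, …, f N`. -/
noncomputable def coeffSum (f : ℕ → ℝ) (N : ℕ) (θ : ℝ) : ℂ :=
  ∑ y ∈ range (N + 1), ee (y * θ) * f y

/-- The sum of `f` over the window of length `X` ending at `t`, twisted by the frequency `β`. -/
noncomputable def window (f : ℕ → ℝ) (X : ℕ) (β : ℝ) (t : ℕ) : ℂ :=
  ∑ z ∈ (range X).filter (· ≤ t), ee (-(z * β)) * f (t - z)

theorem sum_norm_coeffSum_sq (f : ℕ → ℝ) {N P : ℕ} (hP : N < P) :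
    ∑ r ∈ range P, ‖coeffSum f N (r / P)‖ ^ 2 = P * ∑ y ∈ range (N + 1), f y ^ 2 := by
  have h := sum_norm_sq_sum_ee P (by omega) (range (N + 1)) (range_subset_range.2 hP)
    (fun y => (f y : ℂ))
  simp only [Complex.norm_real, Real.norm_eq_abs, sq_abs] at h
  rw [← h]
  refine sum_congr rfl fun r _ => ?_
  congr 2
  refine sum_congr rfl fun y _ => ?_
  rw [mul_div_left_comm]

theorem coeffSum_mul_linSum (f : ℕ → ℝ) {N P X : ℕ} (hf : ∀ y, N < y → f y = 0) (hP : N + X ≤ P)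
    (β θ : ℝ) : coeffSum f N θ * linSum X (θ - β) =
      ∑ t ∈ range P, ee (t * θ) * window f X β t := by
  simp only [window, mul_sum, sum_filter]
  rw [sum_comm, linSum, mul_sum]
  refine sum_congr rfl fun z hz => ?_
  rw [mem_range] at hz
  have h1 : ∑ t ∈ range P, (if z ≤ t then ee (t * θ) * (ee (-(z * β)) * f (t - z)) else 0) =
      ∑ y ∈ range (P - z), ee ((y + z : ℕ) * θ) * (ee (-(z * β)) * f y) := by
    rw [← sum_filter]
    refine (sum_nbij' (fun y => y + z) (fun t => t - z) ?_ ?_ ?_ ?_ ?_).symm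
    · intro y hy
      simp only [mem_range, mem_filter] at hy ⊢
      omega
    · intro t ht
      simp only [mem_range, mem_filter] at ht ⊢
      omega
    · intro y _
      simp
    · intro t ht
      simp only [mem_range, mem_filter] at ht
      omega
    · intro y _
      simp
  simp_rw [mul_ite, mul_zero]
  rw [h1, coeffSum, sum_mul]
  refine sum_subset_zero_on_sdiff (range_subset_range.2 (by omega)) ?_ ?_
  · intro y hy
    simp only [mem_sdiff, mem_range] at hy
    rw [hf y (by omega)]
    simp
  · intro y _
    have : ee ((y + z : ℕ) * θ) * ee (-(z * β)) = ee (y * θ) * ee (z * (θ - β)) := by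
      rw [← ee_add, ← ee_add]
      congr 1
      push_cast
      ring
    rw [← mul_assoc, this]
    ring

theorem sum_norm_coeffSum_sq_mul_norm_linSum_sq (f : ℕ → ℝ) {N P X : ℕ}
    (hf : ∀ y, N < y → f y = 0) (hP0 : 0 < P) (hP : N + X ≤ P) (β : ℝ) :
    ∑ r ∈ range P, ‖coeffSum f N (r / P)‖ ^ 2 * ‖linSum X (r / P - β)‖ ^ 2 =
      P * ∑ t ∈ range P, ‖window f X β t‖ ^ 2 := by
  rw [← sum_norm_sq_sum_ee P hP0 (range P) (Subset.refl _) (window f X β)]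
  refine sum_congr rfl fun r _ => ?_
  rw [← mul_pow, ← norm_mul, coeffSum_mul_linSum f hf hP]
  congr 2
  refine sum_congr rfl fun y _ => ?_
  rw [mul_div_left_comm]

theorem sum_norm_coeffSum_sq_mul_weylSum (f : ℕ → ℝ) {N P M : ℕ} (hf : ∀ y, N < y → f y = 0)
    (hP : N + M ^ 2 < P) :
    ∑ r ∈ range P, ((‖coeffSum f N (r / P)‖ ^ 2 : ℝ) : ℂ) * weylSum M (r / P) =
      ((P * ∑ n ∈ range M, ∑ x ∈ range (N + 1), f x * f (x + (n + 1) ^ 2) : ℝ) : ℂ) := by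
  have hP0 : 0 < P := by omega
  have h1 : ∀ r : ℕ, ((‖coeffSum f N (r / P)‖ ^ 2 : ℝ) : ℂ) * weylSum M (r / P) =
      ∑ n ∈ range M, ∑ x ∈ range (N + 1), ∑ y ∈ range (N + 1),
        (f x * f y : ℂ) * ee (((x - y + (n + 1) ^ 2 : ℤ) : ℝ) * r / P) := by
    intro r
    have h2 : ((‖coeffSum f N (r / P)‖ ^ 2 : ℝ) : ℂ) =
        coeffSum f N (r / P) * (starRingEnd ℂ) (coeffSum f N (r / P)) := by
      rw [Complex.mul_conj, Complex.normSq_eq_norm_sq]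
    rw [h2, coeffSum, map_sum, sum_mul_sum, weylSum, mul_sum]
    refine sum_congr rfl fun n _ => ?_
    rw [sum_mul]
    refine sum_congr rfl fun x _ => ?_
    rw [sum_mul]
    refine sum_congr rfl fun y _ => ?_
    rw [map_mul, conj_ee, Complex.conj_ofReal]
    have h3 : ee (((x - y + (n + 1) ^ 2 : ℤ) : ℝ) * r / P) =
        ee (x * (r / P)) * ee (-(y * (r / P))) * ee (((n : ℝ) + 1) ^ 2 * (r / P)) := by
      rw [← ee_add, ← ee_add]
      congr 1
      push_cast
      ring
    rw [h3]
    ring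
  simp_rw [h1]
  rw [sum_comm]
  push_cast
  rw [mul_sum]
  refine sum_congr rfl fun n hn => ?_
  rw [sum_comm, mul_sum]
  refine sum_congr rfl fun x hx => ?_
  rw [sum_comm]
  simp_rw [← mul_sum]
  rw [mem_range] at hn hx
  have hn2 : (n + 1) ^ 2 ≤ M ^ 2 := Nat.pow_le_pow_left hn 2
  have h4 : ∀ y ∈ range (N + 1), (f x * f y : ℂ) *
      ∑ r ∈ range P, ee (((x - y + (n + 1) ^ 2 : ℤ) : ℝ) * r / P) =
      if y = x + (n + 1) ^ 2 then (P : ℂ) * (f x * f y) else 0 := by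
    intro y hy
    rw [mem_range] at hy
    rw [sum_ee_mul_div P hP0]
    have h5 : (P : ℤ) ∣ (x - y + (n + 1) ^ 2) ↔ y = x + (n + 1) ^ 2 := by
      constructor
      · intro hd
        have h6 : ((x : ℤ) - y + ((n + 1) ^ 2 : ℕ)) = 0 := by
          refine Int.eq_zero_of_abs_lt_dvd (m := (P : ℤ)) (by push_cast; exact hd) ?_
          rw [abs_lt]
          constructor <;> omega
        omega
      · rintro rfl
        push_cast
        simp
    simp only [h5]
    split_ifs <;> ring
  push_cast at h4
  rw [sum_congr rfl h4, sum_ite_eq']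
  split_ifs with h6
  · rfl
  · rw [mem_range] at h6
    rw [hf (x + (n + 1) ^ 2) (by omega)]
    simp

theorem neg_sum_mul_le_sum_window (f : ℕ → ℝ) {N P M K X : ℕ} {δ : ℝ}
    (hf : ∀ y, N < y → f y = 0) (hPM : N + M ^ 2 < P) (hPX : N + X ≤ P)
    (hδ : 0 < δ) (hδ1 : δ ≤ 1)
    (hM : 62208 ≤ δ ^ 4 * M) (hK : 288 ≤ K * δ ^ 2) (hX : 0 < X) (hXM : 128 * X ≤ δ ^ 4 * M ^ 2) :
    -∑ n ∈ range M, ∑ x ∈ range (N + 1), f x * f (x + (n + 1) ^ 2) ≤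
      δ * M * ∑ y ∈ range (N + 1), f y ^ 2 + 12 * M / X ^ 2 *
        ∑ q ∈ Icc 1 K, (√q)⁻¹ * ∑ a ∈ units q, ∑ t ∈ range P, ‖window f X (a / q) t‖ ^ 2 := by
  have hP0 : (0 : ℝ) < P := by exact_mod_cast (by omega : 0 < P)
  have h1 : P * -∑ n ∈ range M, ∑ x ∈ range (N + 1), f x * f (x + (n + 1) ^ 2) ≤
      ∑ r ∈ range P, ‖coeffSum f N (r / P)‖ ^ 2 * ‖weylSum M (r / P)‖ := by
    have h2 := congrArg norm (sum_norm_coeffSum_sq_mul_weylSum f hf hPM)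
    rw [Complex.norm_real, Real.norm_eq_abs] at h2
    rw [mul_neg]
    refine (neg_le_abs _).trans ?_
    rw [← h2]
    refine (norm_sum_le _ _).trans (le_of_eq (sum_congr rfl fun r _ => ?_))
    rw [norm_mul, Complex.norm_real, Real.norm_of_nonneg (by positivity)]
  have h3 : ∑ r ∈ range P, ‖coeffSum f N (r / P)‖ ^ 2 * ‖weylSum M (r / P)‖ ≤
      P * (δ * M * ∑ y ∈ range (N + 1), f y ^ 2 + 12 * M / X ^ 2 *
        ∑ q ∈ Icc 1 K, (√q)⁻¹ * ∑ a ∈ units q, ∑ t ∈ range P, ‖window f X (a / q) t‖ ^ 2) := by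
    calc _ ≤ ∑ r ∈ range P, ‖coeffSum f N (r / P)‖ ^ 2 * (δ * M + ∑ q ∈ Icc 1 K, ∑ a ∈ units q,
          12 * M / X ^ 2 * (√q)⁻¹ * ‖linSum X (r / P - a / q)‖ ^ 2) := by
          gcongr
          exact norm_weylSum_le_sum_units hδ hδ1 hM hK hX hXM _
      _ = δ * M * ∑ r ∈ range P, ‖coeffSum f N (r / P)‖ ^ 2 + ∑ q ∈ Icc 1 K, ∑ a ∈ units q,
          12 * M / X ^ 2 * (√q)⁻¹ *
            ∑ r ∈ range P, ‖coeffSum f N (r / P)‖ ^ 2 * ‖linSum X (r / P - a / q)‖ ^ 2 := by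
          simp_rw [mul_add, sum_add_distrib, mul_sum]
          congr 1
          · exact sum_congr rfl fun _ _ => mul_comm _ _
          · rw [sum_comm]
            refine sum_congr rfl fun q _ => ?_
            rw [sum_comm]
            refine sum_congr rfl fun a _ => sum_congr rfl fun r _ => ?_
            ring
      _ = _ := by
          rw [sum_norm_coeffSum_sq f (by omega)]
          simp_rw [sum_norm_coeffSum_sq_mul_norm_linSum_sq f hf (by omega : 0 < P) hPX]
          simp_rw [mul_add, mul_sum]
          congr 1
          · exact sum_congr rfl fun _ _ => by ring
          · refine sum_congr rfl fun q _ => sum_congr rfl fun a _ => sum_congr rfl fun r _ => ?_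
            ring
  exact le_of_mul_le_mul_left (h1.trans h3) hP0

/-- `A` has density at most `β` on every progression of length at least `n₀` whose common
difference is a square. -/
def ProgBound (A : Finset ℕ) (n₀ : ℕ) (β : ℝ) : Prop :=
  ∀ d : ℕ, 1 ≤ d → ∀ x : ℤ, ∀ n : ℕ, n₀ ≤ n →
    (((Icc 1 n).filter fun j : ℕ => ∃ a ∈ A, (a : ℤ) = x + d ^ 2 * j).card : ℝ) ≤ β * n

/-- The elements `z` of `{0, …, X - 1}` with `t - z ∈ A`. -/
def winSet (A : Finset ℕ) (X t : ℕ) : Finset ℕ := (range X).filter fun z => z ≤ t ∧ t - z ∈ A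

theorem mem_winSet {A : Finset ℕ} {X t z : ℕ} :
    z ∈ winSet A X t ↔ z < X ∧ z ≤ t ∧ t - z ∈ A := by
  rw [winSet, mem_filter, mem_range]

theorem winSet_subset_range (A : Finset ℕ) (X t : ℕ) : winSet A X t ⊆ range X := filter_subset _ _

theorem card_winSet_le (A : Finset ℕ) (X t : ℕ) : (winSet A X t).card ≤ X :=
  (card_le_card (winSet_subset_range A X t)).trans (card_range X).le

theorem sum_card_winSet {A : Finset ℕ} {N X : ℕ} (hA : A ⊆ Icc 1 N) :
    ∑ t ∈ range (N + X), (winSet A X t).card = A.card * X := by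
  have h1 : ∀ t, (winSet A X t).card = ∑ z ∈ range X, if z ≤ t ∧ t - z ∈ A then 1 else 0 :=
    fun t => by rw [winSet, card_filter]
  simp_rw [h1]
  rw [sum_comm]
  have h2 : ∀ z ∈ range X, (∑ t ∈ range (N + X), if z ≤ t ∧ t - z ∈ A then 1 else 0) = A.card := by
    intro z hz
    rw [mem_range] at hz
    rw [← card_filter]
    refine card_nbij' (fun t => t - z) (fun y => y + z) ?_ ?_ ?_ ?_
    · intro t ht
      simp only [coe_filter, Set.mem_ofPred_eq] at ht
      exact ht.2.2
    · intro y hy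
      have := mem_Icc.1 (hA hy)
      simp only [coe_filter, Set.mem_ofPred_eq, mem_range]
      refine ⟨by omega, by omega, ?_⟩
      rw [Nat.add_sub_cancel]
      exact hy
    · intro t ht
      simp only [coe_filter, Set.mem_ofPred_eq] at ht
      dsimp only
      omega
    · intro y _
      dsimp only
      omega
  rw [sum_congr rfl h2, sum_const, card_range, smul_eq_mul, mul_comm]

theorem ProgBound.card_winSet_filter_mod_le {A : Finset ℕ} {n₀ : ℕ} {β : ℝ} (h : ProgBound A n₀ β)
    {d X : ℕ} (hd : 1 ≤ d) (hX : n₀ * d ^ 2 ≤ X) (t s : ℕ) :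
    (((winSet A X t).filter fun z => z % d ^ 2 = s).card : ℝ) ≤ β * (X / d ^ 2 + 1 : ℕ) := by
  have hd2 : 0 < d ^ 2 := by positivity
  set n := X / d ^ 2 + 1 with hn
  refine le_trans ?_ (h d hd (t - s - d ^ 2 * n) n (Nat.le_succ_of_le ((Nat.le_div_iff_mul_le hd2).2 hX)))
  rw [Nat.cast_le]
  refine card_le_card_of_injOn (fun z => n - z / d ^ 2) ?_ ?_
  · intro z hz
    simp only [coe_filter, Set.mem_ofPred_eq, mem_winSet, mem_Icc] at hz ⊢
    have h1 : z / d ^ 2 ≤ X / d ^ 2 := Nat.div_le_div_right hz.1.1.le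
    refine ⟨⟨Nat.sub_pos_of_lt (Nat.lt_succ_of_le h1), Nat.sub_le _ _⟩, t - z, hz.1.2.2, ?_⟩
    have h2 := Nat.div_add_mod z (d ^ 2)
    rw [hz.2] at h2
    push_cast [Nat.cast_sub hz.1.2.1, Nat.cast_sub (show z / d ^ 2 ≤ n by omega)]
    have h3 : (z : ℤ) = d ^ 2 * (z / d ^ 2 : ℕ) + s := by exact_mod_cast h2.symm
    push_cast at h3
    linarith
  · intro z hz z' hz' he
    simp only [coe_filter, Set.mem_ofPred_eq, mem_winSet] at hz hz' he
    have h1 : z / d ^ 2 ≤ X / d ^ 2 := Nat.div_le_div_right hz.1.1.le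
    have h2 : z' / d ^ 2 ≤ X / d ^ 2 := Nat.div_le_div_right hz'.1.1.le
    rw [← Nat.div_add_mod z (d ^ 2), ← Nat.div_add_mod z' (d ^ 2), hz.2, hz'.2,
      show z / d ^ 2 = z' / d ^ 2 by omega]

theorem ProgBound.classBound {A : Finset ℕ} {n₀ : ℕ} {β β' : ℝ} (h : ProgBound A n₀ β) (hβ : 0 ≤ β)
    {X Z : ℕ} (hX : n₀ * Z ^ 2 ≤ X) (hβ' : β * (X + Z ^ 2) ≤ β' * X) (t : ℕ) :
    ClassBound (winSet A X t) X Z β' := by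
  intro d hd hdZ x
  have hd' : (0 : ℝ) < d := by exact_mod_cast hd
  have hd2 : 0 < d ^ 2 := by positivity
  have hdZ2 : d ^ 2 ≤ Z ^ 2 := Nat.pow_le_pow_left hdZ 2
  have h1 := card_eq_sum_card_fiberwise (s := (winSet A X t).filter fun y => y ≡ x [MOD d])
    (t := range d) (f := fun z => (z % d ^ 2) / d) (fun z _ => by
      simp only [mem_coe, mem_range]
      rw [Nat.div_lt_iff_lt_mul hd]
      have := Nat.mod_lt z hd2
      rwa [sq] at this ⊢)
  have h2 : ∀ i ∈ range d, ((((winSet A X t).filter fun y => y ≡ x [MOD d]).filter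
      fun z => (z % d ^ 2) / d = i).card : ℝ) ≤ β * (X / d ^ 2 + 1) := by
    intro i _
    have h3 := h.card_winSet_filter_mod_le hd (le_trans (by gcongr) hX) t (d * i + x % d)
    refine le_trans ?_ (h3.trans ?_)
    · rw [Nat.cast_le]
      refine card_le_card fun z hz => ?_
      simp only [mem_filter] at hz ⊢
      refine ⟨hz.1.1, ?_⟩
      have h4 : z % d ^ 2 % d = z % d := Nat.mod_mod_of_dvd z (Dvd.intro_left _ (by ring : d * d = d ^ 2))
      rw [← Nat.div_add_mod (z % d ^ 2) d, hz.2, h4]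
      exact congrArg _ hz.1.2
    · gcongr
      push_cast
      gcongr
      exact_mod_cast Nat.cast_div_le (α := ℝ) (m := X) (n := d ^ 2)
  have hdZ' : (d : ℝ) ^ 2 ≤ (Z : ℝ) ^ 2 := by exact_mod_cast hdZ2
  calc (d : ℝ) * ((winSet A X t).filter fun y => y ≡ x [MOD d]).card
      ≤ d * (d * (β * (X / d ^ 2 + 1))) := by
        gcongr
        rw [h1]
        push_cast
        refine (sum_le_card_nsmul _ _ _ h2).trans ?_
        rw [card_range, nsmul_eq_mul]
    _ = β * (X + d ^ 2) := by field_simp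
    _ ≤ β * (X + Z ^ 2) := by gcongr
    _ ≤ β' * X := hβ'

theorem ProgBound.card_filter_le {A : Finset ℕ} {n₀ N : ℕ} {β : ℝ} (h : ProgBound A n₀ β)
    (hA : A ⊆ Icc 1 N) {m : ℕ} (hm : n₀ ≤ m) : ((A.filter (· ≤ m)).card : ℝ) ≤ β * m := by
  refine le_trans ?_ (h 1 le_rfl 0 m hm)
  rw [Nat.cast_le]
  refine card_le_card fun a ha => ?_
  rw [mem_filter] at ha ⊢
  exact ⟨mem_Icc.2 ⟨(mem_Icc.1 (hA ha.1)).1, ha.2⟩, a, ha.1, by simp⟩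

theorem ProgBound.card_filter_lt_add_le {A : Finset ℕ} {n₀ N : ℕ} {β : ℝ} (h : ProgBound A n₀ β)
    (hA : A ⊆ Icc 1 N) {m : ℕ} (hm : n₀ ≤ m) : ((A.filter (N < · + m)).card : ℝ) ≤ β * m := by
  refine le_trans ?_ (h 1 le_rfl (N - m) m hm)
  rw [Nat.cast_le]
  refine card_le_card_of_injOn (fun a => a + m - N) ?_ ?_
  · intro a ha
    simp only [coe_filter, Set.mem_ofPred_eq] at ha
    have := mem_Icc.1 (hA ha.1)
    simp only [coe_filter, Set.mem_ofPred_eq, mem_Icc]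
    refine ⟨by omega, a, ha.1, ?_⟩
    push_cast [Nat.cast_sub (show N ≤ a + m by omega)]
    ring
  · intro a ha a' ha' he
    simp only [coe_filter, Set.mem_ofPred_eq] at ha ha' he
    omega

/-- The balanced function of `A` in `{1, …, N}`. -/
noncomputable def balanced (A : Finset ℕ) (N : ℕ) (α : ℝ) (y : ℕ) : ℝ :=
  (if y ∈ A then 1 else 0) - α * if y ∈ Icc 1 N then 1 else 0

theorem balanced_eq_zero {A : Finset ℕ} {N : ℕ} {α : ℝ} (hA : A ⊆ Icc 1 N) {y : ℕ} (hy : N < y) :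
    balanced A N α y = 0 := by
  have h1 : y ∉ Icc 1 N := by rw [mem_Icc]; omega
  rw [balanced, if_neg h1, if_neg fun h => h1 (hA h)]
  ring

theorem Icc_one_subset_range_succ (N : ℕ) : Icc 1 N ⊆ range (N + 1) := fun y hy => by
  rw [mem_Icc] at hy
  rw [mem_range]
  omega

theorem sum_balanced_sq_le {A : Finset ℕ} {N : ℕ} {α : ℝ} (hA : A ⊆ Icc 1 N)
    (hα : (A.card : ℝ) = α * N) : ∑ y ∈ range (N + 1), balanced A N α y ^ 2 ≤ α * N := by
  have h1 : ∀ y, balanced A N α y ^ 2 =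
      (1 - 2 * α) * (if y ∈ A then 1 else 0) + α ^ 2 * if y ∈ Icc 1 N then 1 else 0 := by
    intro y
    rw [balanced]
    by_cases h : y ∈ A
    · rw [if_pos h, if_pos (hA h)]; ring
    · rw [if_neg h]; split_ifs <;> ring
  simp_rw [h1]
  rw [sum_add_distrib, ← mul_sum, ← mul_sum, sum_boole, sum_boole, filter_mem_eq_inter,
    filter_mem_eq_inter, inter_eq_right.2 (Icc_one_subset_range_succ N),
    inter_eq_right.2 (hA.trans (Icc_one_subset_range_succ N)), hα, Nat.card_Icc,
    Nat.add_sub_cancel]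
  nlinarith [sq_nonneg α, Nat.cast_nonneg (α := ℝ) N]

theorem sum_balanced_mul_balanced_le {A : Finset ℕ} {N n₀ m s : ℕ} {α β : ℝ} (hA : A ⊆ Icc 1 N)
    (hα0 : 0 ≤ α) (hα : (A.card : ℝ) = α * N) (h : ProgBound A n₀ β) (hβ : β ≤ 2 * α)
    (hs : ∀ a ∈ A, a + s ∉ A) (hsm : s ≤ m) (hm : n₀ ≤ m) (hmN : 8 * m ≤ N) :
    ∑ x ∈ range (N + 1), balanced A N α x * balanced A N α (x + s) ≤ -(α ^ 2 * N / 2) := by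
  have hAr := hA.trans (Icc_one_subset_range_succ N)
  have h1 : ∀ x, balanced A N α x * balanced A N α (x + s) =
      -(α * (if x ∈ A ∧ x + s ∈ Icc 1 N then 1 else 0)) -
        α * (if x ∈ Icc 1 N ∧ x + s ∈ A then 1 else 0) +
        α ^ 2 * (if x ∈ Icc 1 N ∧ x + s ∈ Icc 1 N then 1 else 0) := by
    intro x
    rw [balanced, balanced]
    by_cases hx : x ∈ A
    · rw [if_pos hx, if_pos (hA hx), if_neg (hs x hx)]
      simp only [hx, hA hx, hs x hx, true_and, and_false, if_false]
      ring
    · simp only [hx, false_and, if_false]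
      by_cases h2 : x ∈ Icc 1 N
      · simp only [h2, true_and, if_true]
        ring
      · simp only [h2, false_and, if_false]
        ring
  have hmN' : 8 * (m : ℝ) ≤ N := by exact_mod_cast hmN
  have hβm : β * m ≤ α * N / 4 := by nlinarith [Nat.cast_nonneg (α := ℝ) m]
  have h2 : α * N - α * N / 4 ≤ (((range (N + 1)).filter fun x => x ∈ A ∧ x + s ∈ Icc 1 N).card : ℝ) := by
    have h3 : A.card ≤ ((range (N + 1)).filter fun x => x ∈ A ∧ x + s ∈ Icc 1 N).card +
        (A.filter (N < · + m)).card := by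
      refine (card_le_card fun a ha => ?_).trans (card_union_le _ _)
      have h4 := mem_Icc.1 (hA ha)
      simp only [mem_union, mem_filter, mem_Icc]
      by_cases h5 : N < a + m
      · exact Or.inr ⟨ha, h5⟩
      · exact Or.inl ⟨hAr ha, ha, by omega, by omega⟩
    have h4 := h.card_filter_lt_add_le hA hm
    have h5 : (A.card : ℝ) ≤ ((range (N + 1)).filter fun x => x ∈ A ∧ x + s ∈ Icc 1 N).card +
        (A.filter (N < · + m)).card := by exact_mod_cast h3
    linarith
  have h3 : α * N - α * N / 4 ≤ (((range (N + 1)).filter fun x => x ∈ Icc 1 N ∧ x + s ∈ A).card : ℝ) := by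
    have h3 : A.card ≤ ((range (N + 1)).filter fun x => x ∈ Icc 1 N ∧ x + s ∈ A).card +
        (A.filter (· ≤ m)).card := by
      have : A.card ≤ ((((range (N + 1)).filter fun x => x ∈ Icc 1 N ∧ x + s ∈ A).image (· + s)) ∪
        (A.filter (· ≤ m))).card := by
        refine card_le_card fun a ha => ?_
        have h4 := mem_Icc.1 (hA ha)
        simp only [mem_union, mem_image, mem_filter, mem_Icc, mem_range]
        by_cases h5 : a ≤ m
        · exact Or.inr ⟨ha, h5⟩
        · refine Or.inl ⟨a - s, ⟨by omega, ⟨by omega, by omega⟩, ?_⟩, by omega⟩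
          rwa [Nat.sub_add_cancel (by omega)]
      exact this.trans ((card_union_le _ _).trans (Nat.add_le_add_right card_image_le _))
    have h4 := h.card_filter_le hA hm
    have h5 : (A.card : ℝ) ≤ ((range (N + 1)).filter fun x => x ∈ Icc 1 N ∧ x + s ∈ A).card +
        (A.filter (· ≤ m)).card := by exact_mod_cast h3
    linarith
  have h4 : (((range (N + 1)).filter fun x => x ∈ Icc 1 N ∧ x + s ∈ Icc 1 N).card : ℝ) ≤ N := by
    have : ((range (N + 1)).filter fun x => x ∈ Icc 1 N ∧ x + s ∈ Icc 1 N) ⊆ Icc 1 N :=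
      fun x hx => (mem_filter.1 hx).2.1
    have := card_le_card this
    rw [Nat.card_Icc, Nat.add_sub_cancel] at this
    exact_mod_cast this
  simp_rw [h1]
  rw [sum_add_distrib, sum_sub_distrib, sum_neg_distrib, ← mul_sum, ← mul_sum, ← mul_sum, sum_boole,
    sum_boole, sum_boole]
  have h5 := mul_le_mul_of_nonneg_left h2 hα0
  have h6 := mul_le_mul_of_nonneg_left h3 hα0
  have h7 := mul_le_mul_of_nonneg_left h4 (sq_nonneg α)
  nlinarith

theorem window_balanced (A : Finset ℕ) (N X : ℕ) (α β : ℝ) (t : ℕ) :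
    window (balanced A N α) X β t =
      ∑ z ∈ winSet A X t, ee (-(z * β)) - α * ∑ z ∈ winSet (Icc 1 N) X t, ee (-(z * β)) := by
  have h : ∀ B : Finset ℕ, ∑ z ∈ winSet B X t, ee (-(z * β)) =
      ∑ z ∈ (range X).filter (· ≤ t), if t - z ∈ B then ee (-(z * β)) else 0 := by
    intro B
    rw [← sum_filter, filter_filter]
    rfl
  rw [h, h, window, mul_sum, ← sum_sub_distrib]
  refine sum_congr rfl fun z _ => ?_
  rw [balanced]
  split_ifs <;> push_cast <;> ring

theorem norm_sum_ee_neg (B : Finset ℕ) (β : ℝ) :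
    ‖∑ z ∈ B, ee (-(z * β))‖ = ‖expSum B β‖ := by
  rw [expSum, ← Complex.norm_conj, map_sum]
  simp_rw [conj_ee, neg_neg]

theorem norm_expSum_winSet_Icc_le (N X t : ℕ) {q a : ℕ} (hq : 2 ≤ q) (ha : a ∈ units q) :
    ‖expSum (winSet (Icc 1 N) X t) (a / q)‖ ≤ q / 2 := by
  have hq' : (0 : ℝ) < q := by exact_mod_cast (by omega : 0 < q)
  rw [mem_units] at ha
  have h1 : winSet (Icc 1 N) X t = Ico (t - N) (min X t) := by
    ext z
    rw [mem_winSet, mem_Icc, mem_Ico]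
    omega
  rw [h1, expSum, sum_Ico_eq_sum_range]
  have h2 : ∀ k : ℕ, ee ((t - N + k : ℕ) * (a / q : ℝ)) =
      ee ((t - N : ℕ) * (a / q : ℝ)) * ee (k * (a / q : ℝ)) := fun k => by
    rw [← ee_add]
    congr 1
    push_cast
    ring
  simp_rw [h2]
  rw [← mul_sum, norm_mul, norm_ee, one_mul]
  have h3 : 1 / (q : ℝ) ≤ |(a : ℝ) / q - round ((a : ℝ) / q)| := by
    set z := round ((a : ℝ) / q)
    have h0 : (a : ℤ) - z * q ≠ 0 := fun h0 => by
      have h4 : (q : ℤ) ∣ a := ⟨z, by linarith⟩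
      have h5 : q ∣ a := by exact_mod_cast h4
      have h6 := Nat.Coprime.eq_one_of_dvd ha.2.symm h5
      omega
    have h4 : (1 : ℝ) ≤ |(a - z * q : ℝ)| := by exact_mod_cast Int.one_le_abs h0
    rw [show (a : ℝ) / q - z = (a - z * q) / q by field_simp, abs_div, abs_of_pos hq']
    gcongr
  refine (norm_sum_ee_le _ (by positivity) h3 _).trans (le_of_eq ?_)
  field_simp

theorem norm_window_balanced_sq_le {A : Finset ℕ} {N X : ℕ} {α : ℝ} (hα : 0 ≤ α) {t q a : ℕ}
    (hq : 2 ≤ q) (ha : a ∈ units q) : ‖window (balanced A N α) X (a / q) t‖ ^ 2 ≤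
      2 * ‖expSum (winSet A X t) (a / q)‖ ^ 2 + α ^ 2 * q ^ 2 / 2 := by
  have h1 := norm_expSum_winSet_Icc_le N X t hq ha
  rw [window_balanced]
  have h2 := norm_sub_le (∑ z ∈ winSet A X t, ee (-(z * (a / q : ℝ))))
    (α * ∑ z ∈ winSet (Icc 1 N) X t, ee (-(z * (a / q : ℝ))))
  rw [norm_mul, norm_sum_ee_neg, norm_sum_ee_neg, Complex.norm_real, Real.norm_of_nonneg hα] at h2
  have h3 : α * ‖expSum (winSet (Icc 1 N) X t) (a / q)‖ ≤ α * (q / 2) := by gcongr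
  have h4 := h2.trans (add_le_add_right h3 _)
  calc _ ≤ (‖expSum (winSet A X t) (a / q)‖ + α * (q / 2)) ^ 2 := by gcongr
    _ ≤ _ := by nlinarith [sq_nonneg (‖expSum (winSet A X t) (a / q)‖ - α * (q / 2))]

theorem norm_window_balanced_zero_sq (A : Finset ℕ) (N X : ℕ) (α : ℝ) (t : ℕ) :
    ‖window (balanced A N α) X 0 t‖ ^ 2 =
      (((winSet A X t).card : ℝ) - α * (winSet (Icc 1 N) X t).card) ^ 2 := by
  rw [window_balanced]
  simp only [mul_zero, neg_zero, ee_zero, sum_const, nsmul_eq_mul, mul_one]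
  rw [← sq_abs (((winSet A X t).card : ℝ) - α * (winSet (Icc 1 N) X t).card),
    ← Real.norm_eq_abs, ← Complex.norm_real]
  push_cast
  rfl

theorem sum_sq_card_winSet_sub_le {A : Finset ℕ} {N X : ℕ} {α β ε : ℝ} (hA : A ⊆ Icc 1 N)
    (hα0 : 0 ≤ α) (hα : (A.card : ℝ) = α * N) (hβ : β ≤ (1 + 2 * ε) * α) (hε : ε ≤ 1 / 2)
    (hs : ∀ t, ((winSet A X t).card : ℝ) ≤ β * X) (hX : (X : ℝ) ≤ ε * N) :
    ∑ t ∈ range (N + X), (((winSet A X t).card : ℝ) - α * (winSet (Icc 1 N) X t).card) ^ 2 ≤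
      6 * ε * (α ^ 2 * N * X ^ 2) := by
  have h1 : ∑ t ∈ range (N + X), ((winSet A X t).card : ℝ) = α * N * X := by
    rw [← hα]; exact_mod_cast sum_card_winSet hA
  have h2 : ∑ t ∈ range (N + X), ((winSet (Icc 1 N) X t).card : ℝ) = N * X := by
    have := sum_card_winSet (X := X) (Subset.refl (Icc 1 N))
    rw [Nat.card_Icc, Nat.add_sub_cancel] at this
    exact_mod_cast this
  have h3 : ∀ t, (((winSet A X t).card : ℝ) - α * (winSet (Icc 1 N) X t).card) ^ 2 ≤
      (β * X - 2 * α * X) * (winSet A X t).card +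
        2 * α * (β * X) * (X - (winSet (Icc 1 N) X t).card) +
        α ^ 2 * X * (winSet (Icc 1 N) X t).card := by
    intro t
    have h4 : ((winSet (Icc 1 N) X t).card : ℝ) ≤ X := by exact_mod_cast card_winSet_le _ _ _
    have h5 := hs t
    set s := ((winSet A X t).card : ℝ)
    set w := ((winSet (Icc 1 N) X t).card : ℝ)
    have hs0 : 0 ≤ s := Nat.cast_nonneg _
    have hw0 : 0 ≤ w := Nat.cast_nonneg _
    have e1 : 0 ≤ s * (β * X - s) := mul_nonneg hs0 (by linarith)
    have e2 : 0 ≤ 2 * α * ((β * X - s) * (X - w)) :=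
      mul_nonneg (by positivity) (mul_nonneg (by linarith) (by linarith))
    have e3 : 0 ≤ α ^ 2 * (w * (X - w)) := mul_nonneg (by positivity) (mul_nonneg hw0 (by linarith))
    nlinarith
  refine (sum_le_sum fun t _ => h3 t).trans ?_
  rw [sum_add_distrib, sum_add_distrib, ← mul_sum, ← mul_sum, ← mul_sum, sum_sub_distrib, h1, h2,
    sum_const, card_range, nsmul_eq_mul]
  push_cast
  have hX0 : (0 : ℝ) ≤ X := Nat.cast_nonneg _
  have hN0 : (0 : ℝ) ≤ N := Nat.cast_nonneg _
  have e1 : 0 ≤ ((1 + 2 * ε) * α - β) * (α * N * X ^ 2) := mul_nonneg (by linarith) (by positivity)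
  have e2 : 0 ≤ ((1 + 2 * ε) * α - β) * (2 * α * X ^ 3) := mul_nonneg (by linarith) (by positivity)
  have e3 : 0 ≤ (1 - 2 * ε) * (2 * α ^ 2 * X ^ 3) := mul_nonneg (by linarith) (by positivity)
  have e4 : 0 ≤ (ε * N - X) * (4 * α ^ 2 * X ^ 2) := mul_nonneg (by linarith) (by positivity)
  nlinarith

theorem sum_card_winSet_mul_le {A : Finset ℕ} {N X : ℕ} {α β ε : ℝ} (hA : A ⊆ Icc 1 N)
    (hα0 : 0 ≤ α) (hα : (A.card : ℝ) = α * N) (hβ : β ≤ (1 + 2 * ε) * α)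
    (hN : 0 < N) (hX : (X : ℝ) ≤ ε * N) :
    ∑ t ∈ range (N + X), ((winSet A X t).card : ℝ) * (β * X - (winSet A X t).card) ≤
      3 * ε * (α ^ 2 * N * X ^ 2) := by
  have h1 : ∑ t ∈ range (N + X), ((winSet A X t).card : ℝ) = α * N * X := by
    rw [← hα]; exact_mod_cast sum_card_winSet hA
  have hX0 : (0 : ℝ) ≤ X := Nat.cast_nonneg _
  have hN0 : (0 : ℝ) < N := by exact_mod_cast hN
  have h2 : (α * N * X) ^ 2 ≤ (N + X) * ∑ t ∈ range (N + X), ((winSet A X t).card : ℝ) ^ 2 := by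
    have := sq_sum_le_card_mul_sum_sq (s := range (N + X)) (f := fun t => ((winSet A X t).card : ℝ))
    rw [h1, card_range] at this
    exact_mod_cast this
  have h3 : α ^ 2 * X ^ 2 * (N - X) ≤ ∑ t ∈ range (N + X), ((winSet A X t).card : ℝ) ^ 2 := by
    have h4 : (N + X : ℝ) * (α ^ 2 * X ^ 2 * (N - X)) ≤
        (N + X) * ∑ t ∈ range (N + X), ((winSet A X t).card : ℝ) ^ 2 := by
      refine le_trans ?_ h2
      nlinarith [mul_nonneg (sq_nonneg α) (pow_nonneg hX0 4)]
    exact le_of_mul_le_mul_left h4 (by positivity)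
  simp_rw [mul_sub, ← sq]
  rw [sum_sub_distrib, ← sum_mul, h1]
  have e1 : 0 ≤ ((1 + 2 * ε) * α - β) * (α * N * X ^ 2) := mul_nonneg (by linarith) (by positivity)
  have e4 : 0 ≤ (ε * N - X) * (α ^ 2 * X ^ 2) := mul_nonneg (by linarith) (by positivity)
  nlinarith

theorem window_eq_zero {f : ℕ → ℝ} {N X t : ℕ} (hf : ∀ y, N < y → f y = 0) (ht : N + X ≤ t)
    (β : ℝ) : window f X β t = 0 := by
  refine sum_eq_zero fun z hz => ?_
  rw [mem_filter, mem_range] at hz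
  rw [hf (t - z) (by omega)]
  simp

set_option maxHeartbeats 1000000 in
theorem exists_winSet_energy_ge {A : Finset ℕ} {N M K X n₀ : ℕ} {α ε : ℝ} (hA : A ⊆ Icc 1 N)
    (hsq : NoSquareDiff A) (hα0 : 0 < α) (hα1 : α ≤ 1) (hα : (A.card : ℝ) = α * N)
    (hN : 0 < N) (hε0 : 0 < ε) (hε : ε ≤ 1 / 1000) (hprog : ProgBound A n₀ ((1 + ε) * α))
    (hM8 : 8 * M ^ 2 ≤ N) (hM : 62208 ≤ (α / 4) ^ 4 * M) (hn₀ : n₀ ≤ N / 8)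
    (hK : 288 ≤ K * (α / 4) ^ 2) (hX : 0 < X) (hXM : 128 * X ≤ (α / 4) ^ 4 * M ^ 2)
    (hXN : (X : ℝ) ≤ ε * N) (hn₀X : n₀ * (2 * K) ^ 2 ≤ X) (hKX : 8 * (K : ℝ) ^ 2 ≤ ε * X) :
    ∃ B ⊆ range X, ClassBound B X (2 * K) ((1 + 2 * ε) * α) ∧ ∃ ρ, ε ≤ ρ ∧
      (∀ q ∈ Icc 2 (2 * K), energy B X q ≤ ρ * α ^ 2) ∧
      ρ * α ^ 2 ≤ 1000 * ε * ∑ q ∈ Icc 2 K, (√q)⁻¹ * energy B X q := by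
  have hN' : (0 : ℝ) < N := by exact_mod_cast hN
  have hX' : (0 : ℝ) < X := by exact_mod_cast hX
  have hM0 : (0 : ℝ) < M := by
    by_contra hM0
    nlinarith [sq_nonneg ((α / 4) ^ 2)]
  have hK1 : 1 ≤ K := by
    rcases Nat.eq_zero_or_pos K with h | h
    · rw [h] at hK
      norm_num at hK
    · exact h
  have hK1' : (1 : ℝ) ≤ K := by exact_mod_cast hK1
  have hXNn : X ≤ N := by
    have : (X : ℝ) ≤ N := by nlinarith
    exact_mod_cast this
  set β := (1 + 2 * ε) * α with hβ
  have hcls : ∀ t, ClassBound (winSet A X t) X (2 * K) β := fun t =>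
    hprog.classBound (by positivity) hn₀X (by
      push_cast
      rw [hβ]
      have : (1 + ε) * (X + (2 * (K : ℝ)) ^ 2) ≤ (1 + 2 * ε) * X := by nlinarith [sq_nonneg (K : ℝ)]
      nlinarith) t
  have hcard : ∀ t, ((winSet A X t).card : ℝ) ≤ β * X := fun t => (hcls t).card_le (by omega)
  have hf : ∀ y, N < y → balanced A N α y = 0 := fun y => balanced_eq_zero hA
  -- the circle method inequality
  have hmain := neg_sum_mul_le_sum_window (balanced A N α) (P := 4 * N) hf
    (by omega) (by omega) (by positivity : 0 < α / 4) (by linarith) hM hK hX hXM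
  have hT : M * (α ^ 2 * N / 2) ≤ -∑ n ∈ range M, ∑ x ∈ range (N + 1),
      balanced A N α x * balanced A N α (x + (n + 1) ^ 2) := by
    rw [le_neg, ← mul_neg]
    refine (sum_le_card_nsmul (range M) _ (-(α ^ 2 * N / 2)) fun n hn => ?_).trans ?_
    · rw [mem_range] at hn
      have hn2 : (n + 1) ^ 2 ≤ M ^ 2 := Nat.pow_le_pow_left hn 2
      exact sum_balanced_mul_balanced_le hA hα0.le hα hprog (by nlinarith)
        (fun a ha ha' => hsq _ ha' a ha (n + 1) (by omega) rfl) (m := N / 8) (by omega) hn₀ (by omega)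
    · rw [card_range, nsmul_eq_mul]
  have hsqs := sum_balanced_sq_le hA hα
  have hP : ∀ b : ℝ, ∑ t ∈ range (4 * N), ‖window (balanced A N α) X b t‖ ^ 2 =
      ∑ t ∈ range (N + X), ‖window (balanced A N α) X b t‖ ^ 2 := by
    intro b
    refine (sum_subset (range_subset_range.2 (by omega)) fun t _ ht => ?_).symm
    rw [mem_range, not_lt] at ht
    rw [window_eq_zero hf ht]
    simp
  simp_rw [hP] at hmain
  set W := ∑ q ∈ Icc 1 K, (√q)⁻¹ * ∑ a ∈ units q, ∑ t ∈ range (N + X),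
    ‖window (balanced A N α) X (a / q) t‖ ^ 2 with hW
  have hWge : α ^ 2 * N * X ^ 2 / 48 ≤ W := by
    have h1 : M * (α ^ 2 * N / 4) ≤ M * (12 / X ^ 2 * W) := by
      have e1 : α / 4 * M * ∑ y ∈ range (N + 1), balanced A N α y ^ 2 ≤ α / 4 * M * (α * N) := by
        gcongr
      have e2 : 12 * (M : ℝ) / X ^ 2 * W = M * (12 / X ^ 2 * W) := by ring
      rw [e2] at hmain
      nlinarith
    have h2 := le_of_mul_le_mul_left h1 hM0
    rw [div_mul_eq_mul_div, le_div_iff₀ (by positivity)] at h2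
    linarith
  set E : ℕ → ℝ := fun t => ∑ q ∈ Icc 2 K, (√q)⁻¹ * energy (winSet A X t) X q with hE
  have hWle : W ≤ 6 * ε * (α ^ 2 * N * X ^ 2) +
      (2 * X ^ 2 * ∑ t ∈ range (N + X), E t + α ^ 2 * N * X ^ 2 / 1000) := by
    have hsplit : Icc 1 K = insert 1 (Icc 2 K) := by
      ext q
      simp only [mem_insert, mem_Icc]
      omega
    rw [hW, hsplit, sum_insert (by simp)]
    refine add_le_add ?_ ?_
    · have hu : units 1 = {0} := by decide
      rw [hu, sum_singleton]
      simp only [Nat.cast_one, Real.sqrt_one, inv_one, one_mul, Nat.cast_zero, zero_div]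
      simp_rw [norm_window_balanced_zero_sq]
      exact sum_sq_card_winSet_sub_le hA hα0.le hα le_rfl (by linarith) hcard hXN
    · have h1 : ∀ q ∈ Icc 2 K, (√q)⁻¹ * ∑ a ∈ units q, ∑ t ∈ range (N + X),
          ‖window (balanced A N α) X (a / q) t‖ ^ 2 ≤
          2 * X ^ 2 * ∑ t ∈ range (N + X), (√q)⁻¹ * energy (winSet A X t) X q +
            α ^ 2 * N * K ^ 3 := by
        intro q hq
        rw [mem_Icc] at hq
        have hq2 : (2 : ℝ) ≤ q := by exact_mod_cast hq.1
        have hqK : (q : ℝ) ≤ K := by exact_mod_cast hq.2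
        have hsq1 : (√q)⁻¹ ≤ 1 := inv_le_one_of_one_le₀ (Real.one_le_sqrt.2 (by linarith))
        have h2 : ∑ a ∈ units q, ∑ t ∈ range (N + X),
            ‖window (balanced A N α) X (a / q) t‖ ^ 2 ≤
            ∑ a ∈ units q, ∑ t ∈ range (N + X),
              (2 * ‖expSum (winSet A X t) (a / q)‖ ^ 2 + α ^ 2 * q ^ 2 / 2) :=
          sum_le_sum fun a ha => sum_le_sum fun t _ => norm_window_balanced_sq_le hα0.le hq.1 ha
        have h3 : ∑ a ∈ units q, ∑ t ∈ range (N + X),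
              (2 * ‖expSum (winSet A X t) (a / q)‖ ^ 2 + α ^ 2 * q ^ 2 / 2) =
            2 * X ^ 2 * ∑ t ∈ range (N + X), energy (winSet A X t) X q +
              (units q).card * ((N + X) * (α ^ 2 * q ^ 2 / 2)) := by
          simp_rw [sum_add_distrib, sum_const, card_range, nsmul_eq_mul]
          push_cast
          congr 1
          rw [sum_comm, mul_sum]
          refine sum_congr rfl fun t _ => ?_
          rw [energy, ← mul_sum]
          field_simp
        have h4 : ((units q).card : ℝ) ≤ K := by
          have : (units q).card ≤ q := (card_filter_le _ _).trans (card_range q).le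
          exact_mod_cast this.trans hq.2
        have h5 : (units q).card * ((N + X) * (α ^ 2 * q ^ 2 / 2)) ≤ α ^ 2 * N * (K : ℝ) ^ 3 := by
          have hXN' : (X : ℝ) ≤ N := by exact_mod_cast hXNn
          calc _ ≤ (K : ℝ) * ((N + N) * (α ^ 2 * K ^ 2 / 2)) := by gcongr
            _ = _ := by ring
        calc _ ≤ (√q)⁻¹ * (2 * X ^ 2 * ∑ t ∈ range (N + X), energy (winSet A X t) X q +
              (units q).card * ((N + X) * (α ^ 2 * q ^ 2 / 2))) := by
              rw [← h3]; gcongr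
          _ ≤ (√q)⁻¹ * (2 * X ^ 2 * ∑ t ∈ range (N + X), energy (winSet A X t) X q) +
              1 * (α ^ 2 * N * (K : ℝ) ^ 3) := by
              rw [mul_add]; gcongr
          _ = _ := by rw [one_mul, ← mul_sum]; ring
      refine (sum_le_sum h1).trans ?_
      rw [sum_add_distrib, ← mul_sum, sum_comm, sum_const, nsmul_eq_mul]
      refine add_le_add le_rfl ?_
      have h2 : ((Icc 2 K).card : ℝ) ≤ K := by
        have : (Icc 2 K).card ≤ K := by rw [Nat.card_Icc]; omega
        exact_mod_cast this
      have h3 : 8000 * (K : ℝ) ^ 2 ≤ X := by nlinarith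
      calc ((Icc 2 K).card : ℝ) * (α ^ 2 * N * K ^ 3) ≤ K * (α ^ 2 * N * K ^ 3) := by gcongr
        _ = α ^ 2 * N * (K ^ 2) ^ 2 := by ring
        _ ≤ α ^ 2 * N * (X / 8000) ^ 2 := by gcongr; linarith
        _ ≤ α ^ 2 * N * X ^ 2 / 1000 := by
          have : 0 ≤ α ^ 2 * N * (X : ℝ) ^ 2 := by positivity
          nlinarith
  have hEge : α ^ 2 * N / 200 ≤ ∑ t ∈ range (N + X), E t := by
    have h1 : (α ^ 2 * N * X ^ 2) * (6 * ε) ≤ (α ^ 2 * N * X ^ 2) * (6 / 1000) := by gcongr; linarith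
    have h2 : 2 * (X : ℝ) ^ 2 * (α ^ 2 * N / 200) ≤ 2 * X ^ 2 * ∑ t ∈ range (N + X), E t := by
      have h3 : 0 ≤ α ^ 2 * N * (X : ℝ) ^ 2 := by positivity
      have h4 : 2 * (X : ℝ) ^ 2 * (α ^ 2 * N / 200) = α ^ 2 * N * X ^ 2 / 100 := by ring
      rw [h4]
      linarith
    exact le_of_mul_le_mul_left h2 (by positivity)
  set R : ℕ → ℝ := fun t => ((winSet A X t).card : ℝ) * (β * X - (winSet A X t).card) with hR
  have hRle : ∑ t ∈ range (N + X), R t ≤ 3 * ε * (α ^ 2 * N * X ^ 2) :=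
    sum_card_winSet_mul_le hA hα0.le hα le_rfl hN hXN
  have hR0 : ∀ t, 0 ≤ R t := fun t => mul_nonneg (Nat.cast_nonneg _) (by linarith [hcard t])
  obtain ⟨t, -, ht⟩ : ∃ t ∈ range (N + X), R t / X ^ 2 + ε * α ^ 2 ≤ 1000 * ε * E t := by
    by_contra! hcon
    have h1 := sum_lt_sum_of_nonempty (nonempty_range_iff.2 (by omega)) hcon
    rw [← mul_sum, sum_add_distrib, ← sum_div, sum_const, card_range, nsmul_eq_mul] at h1
    push_cast at h1
    have h2 : (∑ t ∈ range (N + X), R t) / (X : ℝ) ^ 2 ≤ 3 * ε * (α ^ 2 * N) := by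
      rw [div_le_iff₀ (by positivity)]
      linarith
    have hXN' : (X : ℝ) ≤ N := by exact_mod_cast hXNn
    have h3 : (N + X : ℝ) * (ε * α ^ 2) ≤ (N + N) * (ε * α ^ 2) := by gcongr
    have h4 := mul_le_mul_of_nonneg_left hEge (by positivity : 0 ≤ 1000 * ε)
    nlinarith
  refine ⟨winSet A X t, winSet_subset_range A X t, hcls t, R t / X ^ 2 / α ^ 2 + ε, ?_, ?_, ?_⟩
  · have := hR0 t
    have : 0 ≤ R t / X ^ 2 / α ^ 2 := by positivity
    linarith
  · intro q hq
    rw [mem_Icc] at hq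
    refine (energy_le (hcls t) hq.1 hq.2).trans ?_
    rw [add_mul, div_mul_cancel₀ _ (by positivity)]
    exact le_add_of_nonneg_right (by positivity)
  · rw [add_mul, div_mul_cancel₀ _ (by positivity)]
    exact ht

/-- One of the dyadic blocks carries its share of a weighted sum. -/
theorem exists_dyadic_sum_ge {μ : ℕ → ℝ} (hμ : ∀ q, 0 ≤ μ q) {K : ℕ} (hK : 2 ≤ K) :
    ∃ Q, 2 ≤ Q ∧ Q ≤ K ∧ √Q * ∑ q ∈ Icc 2 K, (√q)⁻¹ * μ q ≤
      Nat.log 2 K * ∑ q ∈ (Icc 2 K).filter (· ∈ Ico Q (2 * Q)), μ q := by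
  have hJ : 1 ≤ Nat.log 2 K := Nat.log_pos (by norm_num) hK
  have hmaps : ∀ q ∈ Icc 2 K, Nat.log 2 q ∈ Icc 1 (Nat.log 2 K) := by
    intro q hq
    rw [mem_Icc] at hq ⊢
    exact ⟨Nat.log_pos (by norm_num) hq.1, Nat.log_mono_right hq.2⟩
  obtain ⟨j, hj, hjs⟩ := exists_le_sum_fiber_of_maps_to_of_nsmul_le_sum
    (s := Icc 2 K) (t := Icc 1 (Nat.log 2 K)) (f := Nat.log 2) (w := fun q => (√q)⁻¹ * μ q)
    (b := (∑ q ∈ Icc 2 K, (√q)⁻¹ * μ q) / Nat.log 2 K) hmaps (by simpa using hJ) (by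
      rw [Nat.card_Icc, Nat.add_sub_cancel, nsmul_eq_mul, mul_div_cancel₀]
      positivity)
  rw [mem_Icc] at hj
  have hj2 : 2 ≤ 2 ^ j := by
    calc 2 = 2 ^ 1 := rfl
      _ ≤ 2 ^ j := Nat.pow_le_pow_right (by norm_num) hj.1
  refine ⟨2 ^ j, hj2, ?_, ?_⟩
  · exact (Nat.pow_le_pow_right (by norm_num) hj.2).trans (Nat.pow_log_le_self 2 (by omega))
  · rw [div_le_iff₀ (by positivity)] at hjs
    have hfil : (Icc 2 K).filter (fun q => Nat.log 2 q = j) =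
        (Icc 2 K).filter (· ∈ Ico (2 ^ j) (2 * 2 ^ j)) := by
      refine filter_congr fun q hq => ?_
      rw [mem_Icc] at hq
      rw [Nat.log_eq_iff (Or.inl (by omega)), mem_Ico, pow_succ, mul_comm (2 ^ j) 2]
    rw [hfil] at hjs
    refine (mul_le_mul_of_nonneg_left hjs (Real.sqrt_nonneg _)).trans ?_
    rw [sum_mul, mul_sum, mul_sum]
    refine sum_le_sum fun q hq => ?_
    rw [mem_filter, mem_Ico] at hq
    have h1 : √((2 ^ j : ℕ) : ℝ) * (√q)⁻¹ ≤ 1 := by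
      rw [← div_eq_mul_inv]
      exact div_le_one_of_le₀ (Real.sqrt_le_sqrt (by exact_mod_cast hq.2.1)) (Real.sqrt_nonneg _)
    calc √((2 ^ j : ℕ) : ℝ) * ((√q)⁻¹ * μ q * Nat.log 2 K)
        = √((2 ^ j : ℕ) : ℝ) * (√q)⁻¹ * (Nat.log 2 K * μ q) := by ring
      _ ≤ 1 * (Nat.log 2 K * μ q) :=
          mul_le_mul_of_nonneg_right h1 (mul_nonneg (Nat.cast_nonneg _) (hμ q))
      _ = _ := one_mul _

theorem mul_pow_le_of_energy_le {B 𝒬 : Finset ℕ} {X Q k : ℕ} {α r s : ℝ} (hα : 0 < α)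
    (h : ClassBound B X (2 * Q) (2 * α)) (hX : 0 < X) (hQ : 1 ≤ Q) (hB : B ⊆ range X)
    (h𝒬 : 𝒬 ⊆ Ico Q (2 * Q)) (hr : ∀ q ∈ 𝒬, energy B X q ≤ r * α ^ 2) (hr0 : 0 ≤ r)
    (hs0 : 0 ≤ s) (hs : √Q * (s * α ^ 2) ≤ ∑ q ∈ 𝒬, energy B X q) (hk : 1 ≤ k) :
    2 * α * (s ^ 2) ^ k ≤ (8 * r) ^ k * (1 + k * Real.log (2 * Q)) ^ 4 ^ k +
      (1024 * (Q : ℝ) ^ 5) ^ k / X := by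
  have hQ' : (0 : ℝ) < Q := by exact_mod_cast hQ
  have hX' : (0 : ℝ) < X := by exact_mod_cast hX
  have h1 := sum_energy_pow_le_of_energy_le (by positivity) h hX (by omega) hB
    (fun q hq => by have := mem_Ico.1 (h𝒬 hq); omega)
    (fun q hq => (mem_Ico.1 (h𝒬 hq)).2.le) hr (by positivity) hk
  have h2 := (pow_le_pow_left₀ (by positivity) hs (2 * k)).trans h1
  push_cast at h2
  set F := (1 + k * Real.log (2 * Q)) ^ 4 ^ k
  have h3 : (√Q * (s * α ^ 2)) ^ (2 * k) = (Q : ℝ) ^ k * (s ^ 2) ^ k * (α ^ 4) ^ k := by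
    rw [pow_mul, mul_pow, Real.sq_sqrt hQ'.le, ← mul_pow, ← mul_pow]
    congr 1
    ring
  rw [h3] at h2
  have h4 : (2 * α) * (2 * α) ^ (2 * k - 1) = (4 * α ^ 2) ^ k := by
    rw [← pow_succ', show 2 * k - 1 + 1 = 2 * k by omega, pow_mul]
    ring
  have h5 := mul_le_mul_of_nonneg_left h2 (by positivity : 0 ≤ 2 * α)
  rw [← mul_assoc (2 * α) ((2 * α) ^ (2 * k - 1)), h4] at h5
  have h6 : (4 * α ^ 2) ^ k * ((2 * Q * (r * α ^ 2)) ^ k * F +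
      (2 * (Q : ℝ)) ^ (4 * k) * (2 * Q * (2 * α)) ^ (2 * k) / X) =
      ((Q : ℝ) ^ k * (α ^ 4) ^ k) * ((8 * r) ^ k * F + (1024 * (Q : ℝ) ^ 5) ^ k / X) := by
    have e1 : (4 * α ^ 2) ^ k * (2 * Q * (r * α ^ 2)) ^ k =
        (Q : ℝ) ^ k * (α ^ 4) ^ k * (8 * r) ^ k := by
      rw [← mul_pow, ← mul_pow, ← mul_pow]
      ring
    have e2 : (4 * α ^ 2) ^ k * ((2 * (Q : ℝ)) ^ (4 * k) * (2 * Q * (2 * α)) ^ (2 * k)) =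
        (Q : ℝ) ^ k * (α ^ 4) ^ k * (1024 * (Q : ℝ) ^ 5) ^ k := by
      rw [pow_mul, pow_mul, ← mul_pow, ← mul_pow, ← mul_pow, ← mul_pow]
      ring
    linear_combination F * e1 + e2 / X
  rw [h6] at h5
  refine le_of_mul_le_mul_left ?_ (by positivity : 0 < (Q : ℝ) ^ k * (α ^ 4) ^ k)
  linarith

theorem mul_pow_le_of_le_energy {B 𝒬 : Finset ℕ} {X Q T k n : ℕ} {α v : ℝ} (hα : 0 < α)
    (h : ClassBound B X (2 * Q) (2 * α)) (hX : 0 < X) (hQ : 1 ≤ Q) (hB : B ⊆ range X)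
    (h𝒬 : 𝒬 ⊆ Ico Q (2 * Q)) (h𝒬0 : 𝒬.Nonempty) (hv0 : 0 ≤ v)
    (hv : ∀ q ∈ 𝒬, v * α ^ 2 ≤ energy B X q) (hT : ∀ q ∈ 𝒬, q.divisors.card ≤ T)
    {G : ℝ} (hG : √Q ≤ G * 𝒬.card) (hk : k = 12 * n) (hn : 1 ≤ n) :
    2 * α * (v ^ 2) ^ k ≤ 16 ^ k * (T : ℝ) ^ (2 * k) *
      ((T : ℝ) ^ (2 * k) ^ 2 * (2 * G) ^ (4 * n) / (Q : ℝ) ^ n + (2 * (Q : ℝ)) ^ (2 * k) / X) := by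
  have hQ' : (0 : ℝ) < Q := by exact_mod_cast hQ
  have hX' : (0 : ℝ) < X := by exact_mod_cast hX
  have hG0 : 0 ≤ G := by
    by_contra! hG0
    have h1 : G * 𝒬.card ≤ 0 := mul_nonpos_of_nonpos_of_nonneg hG0.le (Nat.cast_nonneg _)
    have := Real.sqrt_pos.2 hQ'
    linarith
  obtain ⟨d, hd, hne, hcard, hadm⟩ := exists_dvd_card_admissible_le (s := 1 / 4) (by norm_num)
    h𝒬0 hQ' (fun q hq => by exact_mod_cast (mem_Ico.1 (h𝒬 hq)).1) hT
  set 𝒟 := 𝒬.filter fun q => d ∣ q with h𝒟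
  have h𝒟s : ∀ q ∈ 𝒟, q ∈ 𝒬 := fun q hq => (mem_filter.1 hq).1
  have hd' : (0 : ℝ) < d := by exact_mod_cast hd
  have hcd : (𝒟.card : ℝ) * d ≤ 2 * Q := by
    have h1 : 𝒟.card ≤ 2 * Q / d := by
      calc 𝒟.card ≤ ((Ioc 0 (2 * Q)).filter (d ∣ ·)).card := by
            refine card_le_card fun q hq => ?_
            have h2 := mem_Ico.1 (h𝒬 (h𝒟s q hq))
            rw [mem_filter, mem_Ioc]
            exact ⟨by omega, (mem_filter.1 hq).2⟩
        _ = 2 * Q / d := Nat.Ioc_filter_dvd_card_eq_div _ _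
    have h2 : 𝒟.card * d ≤ 2 * Q := (Nat.mul_le_mul_right d h1).trans (Nat.div_mul_le_self _ _)
    exact_mod_cast h2
  set w : ℝ := Q / d with hw
  have hw0 : 0 < w := by positivity
  have hQw : (Q : ℝ) ≤ (2 * G) ^ 4 * w ^ 3 := by
    have h1 : √Q * d ≤ 2 * G * Q * (d : ℝ) ^ (1 / 4 : ℝ) := by
      calc √Q * d ≤ G * 𝒬.card * d := by gcongr
        _ ≤ G * (𝒟.card * (d : ℝ) ^ (1 / 4 : ℝ)) * d := by gcongr
        _ = G * (d : ℝ) ^ (1 / 4 : ℝ) * (𝒟.card * d) := by ring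
        _ ≤ G * (d : ℝ) ^ (1 / 4 : ℝ) * (2 * Q) := by gcongr
        _ = _ := by ring
    have h2 := pow_le_pow_left₀ (by positivity) h1 4
    have h3 : ((d : ℝ) ^ (1 / 4 : ℝ)) ^ 4 = d := by
      rw [← Real.rpow_natCast, ← Real.rpow_mul hd'.le]
      norm_num
    have h4 : √(Q : ℝ) ^ 4 = (Q : ℝ) ^ 2 := by
      rw [show 4 = 2 * 2 by rfl, pow_mul, Real.sq_sqrt hQ'.le]
    rw [mul_pow, mul_pow _ _ 4, h3, h4] at h2
    rw [hw, div_pow, mul_div_assoc', le_div_iff₀ (by positivity)]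
    refine le_of_mul_le_mul_left ?_ (by positivity : 0 < (Q : ℝ) * d)
    linarith
  have hwk : (w ^ k) ^ (1 / 4 : ℝ) = w ^ (3 * n) := by
    rw [hk, ← Real.rpow_natCast, ← Real.rpow_natCast, ← Real.rpow_mul hw0.le]
    congr 1
    push_cast
    ring
  have hQn : (Q : ℝ) ^ n ≤ (2 * G) ^ (4 * n) * w ^ (3 * n) := by
    rw [pow_mul, pow_mul, ← mul_pow]
    gcongr
  have hadm' := hadm k
  rw [hwk] at hadm'
  set a : ℝ := (((Fintype.piFinset fun _ : Fin (2 * k) => 𝒟).filter Admissible).card : ℝ) with ha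
  have ha0 : 0 ≤ a := Nat.cast_nonneg _
  have hale : a ≤ (𝒟.card : ℝ) ^ (2 * k) *
      ((T : ℝ) ^ (2 * k) ^ 2 * (2 * G) ^ (4 * n) / (Q : ℝ) ^ n) := by
    rw [mul_div_assoc', le_div_iff₀ (by positivity)]
    calc a * (Q : ℝ) ^ n ≤ a * ((2 * G) ^ (4 * n) * w ^ (3 * n)) := by gcongr
      _ = a * w ^ (3 * n) * (2 * G) ^ (4 * n) := by ring
      _ ≤ (𝒟.card : ℝ) ^ (2 * k) * (T : ℝ) ^ (2 * k) ^ 2 * (2 * G) ^ (4 * n) := by gcongr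
      _ = _ := by ring
  have h1 := sum_energy_pow_le_card_admissible (𝒬 := 𝒟) (by positivity) h hX (by omega) hB
    (fun q hq => by have := mem_Ico.1 (h𝒬 (h𝒟s q hq)); omega)
    (fun q hq => (mem_Ico.1 (h𝒬 (h𝒟s q hq))).2.le) (fun q hq => hT q (h𝒟s q hq))
    (by omega : 1 ≤ k)
  have hsum : 𝒟.card * (v * α ^ 2) ≤ ∑ q ∈ 𝒟, energy B X q := by
    rw [← nsmul_eq_mul]
    exact card_nsmul_le_sum _ _ _ fun q hq => hv q (h𝒟s q hq)
  have h2 := (pow_le_pow_left₀ (by positivity) hsum (2 * k)).trans h1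
  rw [← ha] at h2
  have hc0 : (0 : ℝ) < 𝒟.card := by exact_mod_cast hne.card_pos
  set R := (T : ℝ) ^ (2 * k) ^ 2 * (2 * G) ^ (4 * n) / (Q : ℝ) ^ n
  have h4 : (2 * α) * (2 * α) ^ (2 * k - 1) = (4 * α ^ 2) ^ k := by
    rw [← pow_succ', show 2 * k - 1 + 1 = 2 * k by omega, pow_mul]
    ring
  have h5 := mul_le_mul_of_nonneg_left h2 (by positivity : 0 ≤ 2 * α)
  rw [← mul_assoc (2 * α) ((2 * α) ^ (2 * k - 1)), h4] at h5
  have h6 : (4 * α ^ 2) ^ k * (a * (T * (2 * α)) ^ (2 * k) +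
      (𝒟.card : ℝ) ^ (2 * k) * ((2 * Q : ℕ) : ℝ) ^ (2 * k) * (T * (2 * α)) ^ (2 * k) / X) ≤
      (4 * α ^ 2) ^ k * ((𝒟.card : ℝ) ^ (2 * k) * R * (T * (2 * α)) ^ (2 * k) +
      (𝒟.card : ℝ) ^ (2 * k) * ((2 * Q : ℕ) : ℝ) ^ (2 * k) * (T * (2 * α)) ^ (2 * k) / X) := by
    gcongr
  have h7 : (4 * α ^ 2) ^ k * ((𝒟.card : ℝ) ^ (2 * k) * R * (T * (2 * α)) ^ (2 * k) +
      (𝒟.card : ℝ) ^ (2 * k) * ((2 * Q : ℕ) : ℝ) ^ (2 * k) * (T * (2 * α)) ^ (2 * k) / X) =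
      ((𝒟.card : ℝ) ^ (2 * k) * (α ^ 4) ^ k) *
        (16 ^ k * (T : ℝ) ^ (2 * k) * (R + (2 * (Q : ℝ)) ^ (2 * k) / X)) := by
    have e1 : (T * (2 * α)) ^ (2 * k) = (T : ℝ) ^ (2 * k) * (4 * α ^ 2) ^ k := by
      rw [mul_pow, pow_mul (2 * α)]
      ring
    have e2 : (4 * α ^ 2) ^ k * (4 * α ^ 2) ^ k = 16 ^ k * (α ^ 4) ^ k := by
      rw [← mul_pow, ← mul_pow]
      ring
    rw [e1]
    push_cast
    linear_combination ((𝒟.card : ℝ) ^ (2 * k) * (T : ℝ) ^ (2 * k) *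
      (R + (2 * (Q : ℝ)) ^ (2 * k) / X)) * e2
  have h8 : 2 * α * (𝒟.card * (v * α ^ 2)) ^ (2 * k) =
      ((𝒟.card : ℝ) ^ (2 * k) * (α ^ 4) ^ k) * (2 * α * (v ^ 2) ^ k) := by
    rw [mul_pow, pow_mul (v * α ^ 2), mul_pow v, mul_pow (v ^ 2)]
    ring
  rw [h8] at h5
  rw [h7] at h6
  exact le_of_mul_le_mul_left (h5.trans h6) (by positivity)

theorem eventually_mul_pow_le_exp (a : ℝ) {b : ℝ} (hb : 0 < b) (n : ℕ) :
    ∀ᶠ x : ℝ in Filter.atTop, a * x ^ n ≤ Real.exp (b * x) := by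
  have h := (isLittleO_pow_exp_pos_mul_atTop n hb).bound
    (by positivity : 0 < (|a| + 1)⁻¹)
  filter_upwards [h, Filter.eventually_ge_atTop 0] with x hx hx0
  rw [Real.norm_of_nonneg (by positivity), Real.norm_of_nonneg (by positivity), inv_mul_eq_div,
    le_div_iff₀ (by positivity)] at hx
  have h1 : a * x ^ n ≤ (|a| + 1) * x ^ n := by
    gcongr
    linarith [le_abs_self a]
  linarith

theorem eventually_card_divisors_pow_le (m : ℕ) : ∀ᶠ x : ℝ in Filter.atTop, ∀ n : ℕ, 1 ≤ n →
    (n : ℝ) ≤ Real.exp (7 * x) → (n.divisors.card : ℝ) ^ m ≤ Real.exp (2 * x) := by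
  filter_upwards [eventually_mul_pow_le_exp (8 ^ 2 ^ (m * 4)) one_pos (2 ^ (m * 4)),
    Filter.eventually_ge_atTop 1] with x hx hx1 n hn hnx
  have hn' : (0 : ℝ) < n := by exact_mod_cast hn
  have hlog : Real.log n ≤ 7 * x := by
    rw [← Real.log_exp (7 * x)]
    exact Real.log_le_log hn' hnx
  have hlog0 : 0 ≤ Real.log n := Real.log_nonneg (by exact_mod_cast hn)
  refine le_of_pow_le_pow_left₀ (n := 4) (by norm_num) (by positivity) ?_
  rw [← pow_mul, ← Real.exp_nat_mul]
  calc (n.divisors.card : ℝ) ^ (m * 4) ≤ n * (1 + Real.log n) ^ 2 ^ (m * 4) :=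
        card_divisors_pow_le _ _ hn
    _ ≤ Real.exp (7 * x) * (8 * x) ^ 2 ^ (m * 4) := by
        gcongr
        linarith
    _ ≤ Real.exp (7 * x) * Real.exp (1 * x) := by
        rw [mul_pow]
        gcongr
    _ = Real.exp ((4 : ℕ) * (2 * x)) := by
        rw [← Real.exp_add]
        congr 1
        push_cast
        ring

theorem one_add_mul_log_le {Q k : ℕ} {x : ℝ} (hQ : 1 ≤ Q) (hk : 1 ≤ k) (hx : 1 ≤ x)
    (hQx : (Q : ℝ) ≤ Real.exp (6 * x)) : 1 + k * Real.log (2 * Q) ≤ 8 * k * x := by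
  have hQ' : (0 : ℝ) < Q := by exact_mod_cast hQ
  have hk' : (1 : ℝ) ≤ k := by exact_mod_cast hk
  have h1 : Real.log (2 * Q) ≤ 7 * x := by
    rw [Real.log_mul (by norm_num) hQ'.ne']
    have h2 := Real.log_le_log hQ' hQx
    rw [Real.log_exp] at h2
    have := Real.log_two_lt_d9
    linarith
  nlinarith [mul_le_mul_of_nonneg_left h1 (by positivity : (0 : ℝ) ≤ k)]

set_option maxHeartbeats 1000000 in
/-- A dyadic block with large energy lies at a small height. -/
theorem exists_forall_le_exp {κ : ℝ} (hκ : 0 < κ) : ∃ L₁ P : ℝ, ∀ L ≥ L₁,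
    ∀ (B 𝒬 : Finset ℕ) (X Q : ℕ) (ε ρ : ℝ), ClassBound B X (2 * Q) (2 * Real.exp (-L)) → 0 < X →
      1 ≤ Q → B ⊆ range X → 𝒬 ⊆ Ico Q (2 * Q) → (Q : ℝ) ≤ Real.exp (6 * L) → 0 < ε →
      ε ≤ 1 / 1000 → ε ≤ ρ → (∀ q ∈ 𝒬, energy B X q ≤ ρ * Real.exp (-L) ^ 2) →
      √Q * (ρ * Real.exp (-L) ^ 2) ≤ 9000 * L * ε * ∑ q ∈ 𝒬, energy B X q →
      Real.exp (P * L) ≤ X → (Q : ℝ) ≤ Real.exp (κ * L) := by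
  obtain ⟨n, hn⟩ := exists_nat_ge (9 / κ + 1)
  have hn1 : 1 ≤ n := by
    have : (1 : ℝ) ≤ n := le_trans (by linarith [div_pos (by norm_num : (0 : ℝ) < 9) hκ]) hn
    exact_mod_cast this
  have hn9 : 9 ≤ κ * n := by
    have h1 : 9 / κ ≤ n := by linarith
    rw [div_le_iff₀ hκ] at h1
    linarith
  obtain ⟨k, hk⟩ : ∃ k, k = 12 * n := ⟨_, rfl⟩
  have hk1 : 1 ≤ k := by omega
  have hev := ((eventually_mul_pow_le_exp ((8 * 18000 ^ 2) ^ k * (8 * k) ^ 4 ^ k)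
    (by norm_num : (0 : ℝ) < 1 / 2) (2 * k + 4 ^ k)).and
    ((eventually_mul_pow_le_exp ((1024 * 18000 ^ 2) ^ k) one_pos (2 * k)).and
    ((eventually_mul_pow_le_exp (16 ^ k * 36 ^ (4 * n)) one_pos (4 * n)).and
    ((eventually_card_divisors_pow_le ((2 * k) ^ 2 + 2 * k)).and
    ((Filter.eventually_ge_atTop (1 : ℝ)))))))
  obtain ⟨L₁, hL₁⟩ := Filter.eventually_atTop.1 hev
  refine ⟨L₁, 44 * k + 12, fun L hL B 𝒬 X Q ε ρ hcls hX hQ hB h𝒬 hQL hε0 hε hερ hle hsum hPX => ?_⟩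
  obtain ⟨ha, hb, hc, hT, hL1⟩ := hL₁ L hL
  by_contra! hQκ
  have hQ' : (0 : ℝ) < Q := by exact_mod_cast hQ
  have hX' : (0 : ℝ) < X := by exact_mod_cast hX
  have hk1' : (1 : ℝ) ≤ k := by exact_mod_cast hk1
  have hL0 : 0 < L := by linarith
  have hρ0 : 0 < ρ := by linarith
  set α := Real.exp (-L) with hα
  have hα0 : 0 < α := Real.exp_pos _
  set v := Real.exp (-(2 * L / k)) with hv
  have hv0 : 0 < v := Real.exp_pos _
  have hvk : v ^ k = α ^ 2 := by
    rw [hv, hα, ← Real.exp_nat_mul, ← Real.exp_nat_mul]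
    congr 1
    push_cast
    field_simp
  set S := ∑ q ∈ 𝒬, energy B X q with hS
  have hS0 : 0 ≤ S := sum_nonneg fun q _ => energy_nonneg B X q
  have hsplit := sum_filter_add_sum_filter_not 𝒬 (fun q => energy B X q < v * α ^ 2) (energy B X)
  set Ss := ∑ q ∈ 𝒬 with energy B X q < v * α ^ 2, energy B X q
  have hSs : Ss < S / 2 := by
    by_contra! hcon
    have hs : √Q * ((18000 * L)⁻¹ * α ^ 2) ≤ Ss := by
      have h1 : ρ * (√Q * α ^ 2) ≤ ρ * (9000 * L * S) := by
        calc ρ * (√Q * α ^ 2) = √Q * (ρ * α ^ 2) := by ring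
          _ ≤ 9000 * L * ε * S := hsum
          _ ≤ 9000 * L * ρ * S := by gcongr
          _ = _ := by ring
      have h2 := le_of_mul_le_mul_left h1 hρ0
      rw [show √Q * ((18000 * L)⁻¹ * α ^ 2) = √Q * α ^ 2 / (18000 * L) by field_simp,
        div_le_iff₀ (by positivity)]
      nlinarith
    have h1 := mul_pow_le_of_energy_le (k := k) hα0 hcls hX hQ hB
      ((filter_subset _ _).trans h𝒬) (fun q hq => (mem_filter.1 hq).2.le) hv0.le (by positivity)
      hs hk1
    have h2 : (1 + k * Real.log (2 * Q)) ^ 4 ^ k ≤ (8 * k * L) ^ 4 ^ k := by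
      have : 0 ≤ Real.log (2 * Q) := Real.log_nonneg (by
        have : (1 : ℝ) ≤ Q := by exact_mod_cast hQ
        linarith)
      gcongr
      exact one_add_mul_log_le hQ hk1 hL1 hQL
    have h3 : (8 * v) ^ k * (1 + k * Real.log (2 * Q)) ^ 4 ^ k * ((18000 * L) ^ 2) ^ k ≤
        Real.exp (-(3 / 2) * L) := by
      calc _ ≤ (8 * v) ^ k * (8 * k * L) ^ 4 ^ k * ((18000 * L) ^ 2) ^ k := by gcongr
        _ = α ^ 2 * ((8 * 18000 ^ 2) ^ k * (8 * k) ^ 4 ^ k * L ^ (2 * k + 4 ^ k)) := by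
          rw [← hvk, pow_add, pow_mul]
          simp only [mul_pow]
          ring
        _ ≤ α ^ 2 * Real.exp (1 / 2 * L) := by gcongr
        _ = _ := by
          rw [hα, ← Real.exp_nat_mul, ← Real.exp_add]
          congr 1
          push_cast
          ring
    have h4 : (1024 * (Q : ℝ) ^ 5) ^ k / X * ((18000 * L) ^ 2) ^ k ≤ Real.exp (-(3 / 2) * L) := by
      rw [div_mul_eq_mul_div, div_le_iff₀ hX']
      calc (1024 * (Q : ℝ) ^ 5) ^ k * ((18000 * L) ^ 2) ^ k
          ≤ (1024 * Real.exp (6 * L) ^ 5) ^ k * ((18000 * L) ^ 2) ^ k := by gcongr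
        _ = Real.exp (6 * L) ^ (5 * k) * ((1024 * 18000 ^ 2) ^ k * L ^ (2 * k)) := by
          rw [pow_mul, pow_mul]
          simp only [mul_pow]
          ring
        _ ≤ Real.exp (6 * L) ^ (5 * k) * Real.exp (1 * L) := by gcongr
        _ = Real.exp ((30 * k + 1) * L) := by
          rw [← Real.exp_nat_mul, ← Real.exp_add]
          congr 1
          push_cast
          ring
        _ ≤ Real.exp (-(3 / 2) * L) * Real.exp ((44 * k + 12) * L) := by
          rw [← Real.exp_add]
          refine Real.exp_le_exp.2 ?_
          nlinarith [mul_nonneg (by positivity : (0 : ℝ) ≤ k) hL0.le]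
        _ ≤ _ := by gcongr
    have h5 := mul_le_mul_of_nonneg_right h1 (by positivity : 0 ≤ ((18000 * L) ^ 2) ^ k)
    rw [mul_assoc, ← mul_pow, ← mul_pow, inv_mul_cancel₀ (by positivity), one_pow, one_pow, mul_one,
      add_mul] at h5
    have h6 : Real.exp (-(3 / 2) * L) < α := Real.exp_lt_exp.2 (by linarith)
    linarith
  set 𝒯 := 𝒬.filter (fun q => ¬ energy B X q < v * α ^ 2) with h𝒯
  have h𝒯le : ∑ q ∈ 𝒯, energy B X q ≤ 𝒯.card * (ρ * α ^ 2) := by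
    rw [← nsmul_eq_mul]
    exact sum_le_card_nsmul _ _ _ fun q hq => hle q (mem_filter.1 hq).1
  have hG : √Q ≤ 18 * L * 𝒯.card := by
    have h1 : S ≤ 2 * (𝒯.card * (ρ * α ^ 2)) := by linarith
    have h2 : (ρ * α ^ 2) * √Q ≤ (ρ * α ^ 2) * (18 * L * 𝒯.card) := by
      calc (ρ * α ^ 2) * √Q ≤ 9000 * L * ε * S := by linarith
        _ ≤ 9000 * L * (1 / 1000) * (2 * (𝒯.card * (ρ * α ^ 2))) := by gcongr
        _ = _ := by ring
    exact le_of_mul_le_mul_left h2 (by positivity)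
  have h𝒯0 : 𝒯.Nonempty := by
    rw [nonempty_iff_ne_empty]
    intro h0
    rw [h0, card_empty, Nat.cast_zero, mul_zero] at hG
    have := Real.sqrt_pos.2 hQ'
    linarith
  obtain ⟨q₀, hq₀, hTq⟩ := exists_mem_eq_sup 𝒯 h𝒯0 (fun q => q.divisors.card)
  set T := 𝒯.sup fun q => q.divisors.card with hTdef
  have h𝒯s : 𝒯 ⊆ Ico Q (2 * Q) := (filter_subset _ _).trans h𝒬
  have hmem := mem_Ico.1 (h𝒯s hq₀)
  have hT1 : (1 : ℝ) ≤ T := by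
    have h1 : 1 ≤ q₀.divisors.card := card_pos.2 ⟨1, Nat.one_mem_divisors.2 (by omega)⟩
    rw [hTq]
    exact_mod_cast h1
  have h2Q : 2 * (Q : ℝ) ≤ Real.exp (7 * L) := by
    calc 2 * (Q : ℝ) ≤ Real.exp L * Real.exp (6 * L) := by
          gcongr
          linarith [Real.add_one_le_exp L]
      _ = Real.exp (7 * L) := by rw [← Real.exp_add]; congr 1; ring
  have hTle : (T : ℝ) ^ ((2 * k) ^ 2 + 2 * k) ≤ Real.exp (2 * L) := by
    rw [hTq]
    refine hT q₀ (by omega) (le_trans ?_ h2Q)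
    exact_mod_cast hmem.2.le
  have hmain := mul_pow_le_of_le_energy hα0 hcls hX hQ hB h𝒯s h𝒯0 hv0.le
    (fun q hq => not_lt.1 (mem_filter.1 hq).2) (fun q hq => le_sup (f := fun q => q.divisors.card) hq)
    hG hk hn1
  rw [← hTdef, mul_add] at hmain
  have hfirst : 16 ^ k * (T : ℝ) ^ (2 * k) *
      ((T : ℝ) ^ (2 * k) ^ 2 * (2 * (18 * L)) ^ (4 * n) / (Q : ℝ) ^ n) ≤ Real.exp (-6 * L) := by
    rw [mul_div_assoc', div_le_iff₀ (by positivity)]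
    calc 16 ^ k * (T : ℝ) ^ (2 * k) * ((T : ℝ) ^ (2 * k) ^ 2 * (2 * (18 * L)) ^ (4 * n))
        = (16 ^ k * 36 ^ (4 * n) * L ^ (4 * n)) * (T : ℝ) ^ ((2 * k) ^ 2 + 2 * k) := by
          rw [show 2 * (18 * L) = 36 * L by ring, mul_pow 36 L, pow_add]
          ring
      _ ≤ Real.exp (1 * L) * Real.exp (2 * L) := by gcongr
      _ = Real.exp (-6 * L) * Real.exp (9 * L) := by
          rw [← Real.exp_add, ← Real.exp_add]
          congr 1
          ring
      _ ≤ Real.exp (-6 * L) * Real.exp (κ * L) ^ n := by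
          rw [← Real.exp_nat_mul]
          refine mul_le_mul_of_nonneg_left (Real.exp_le_exp.2 ?_) (Real.exp_pos _).le
          nlinarith
      _ ≤ _ := by gcongr
  have hsecond : 16 ^ k * (T : ℝ) ^ (2 * k) * ((2 * (Q : ℝ)) ^ (2 * k) / X) ≤
      Real.exp (-6 * L) := by
    rw [mul_div_assoc', div_le_iff₀ hX']
    have h1 : (T : ℝ) ^ (2 * k) ≤ Real.exp (2 * L) :=
      (pow_le_pow_right₀ hT1 (by omega)).trans hTle
    have h2 : (16 : ℝ) ^ k ≤ Real.exp (1 * L) := by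
      refine le_trans ?_ hc
      rw [mul_assoc, ← mul_pow]
      refine le_mul_of_one_le_right (by positivity) (one_le_pow₀ (by linarith))
    calc 16 ^ k * (T : ℝ) ^ (2 * k) * (2 * (Q : ℝ)) ^ (2 * k)
        ≤ Real.exp (1 * L) * Real.exp (2 * L) * Real.exp (7 * L) ^ (2 * k) := by gcongr
      _ = Real.exp ((14 * k + 3) * L) := by
          rw [← Real.exp_nat_mul, ← Real.exp_add, ← Real.exp_add]
          congr 1
          push_cast
          ring
      _ ≤ Real.exp (-6 * L) * Real.exp ((44 * k + 12) * L) := by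
          rw [← Real.exp_add]
          refine Real.exp_le_exp.2 ?_
          nlinarith [mul_nonneg (by positivity : (0 : ℝ) ≤ k) hL0.le]
      _ ≤ _ := by gcongr
  have hlhs : 2 * α * (v ^ 2) ^ k = 2 * Real.exp (-5 * L) := by
    rw [← pow_mul, mul_comm 2 k, pow_mul, hvk, hα, ← pow_mul, ← Real.exp_nat_mul, mul_assoc,
      ← Real.exp_add]
    congr 2
    push_cast
    ring
  have hlt : Real.exp (-6 * L) < Real.exp (-5 * L) := Real.exp_lt_exp.2 (by linarith)
  linarith

/-- Large energy on a dyadic block is incompatible with a small upper bound for each energy. -/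
theorem false_of_dyadic_energy {B 𝒬 : Finset ℕ} {X Q k : ℕ} {L ε ρ : ℝ} (hL : 1 ≤ L)
    (hcls : ClassBound B X (2 * Q) (2 * Real.exp (-L))) (hX : 0 < X) (hQ : 1 ≤ Q)
    (hB : B ⊆ range X) (h𝒬 : 𝒬 ⊆ Ico Q (2 * Q)) (hQL : (Q : ℝ) ≤ Real.exp (6 * L)) (hε : 0 < ε)
    (hερ : ε ≤ ρ) (hle : ∀ q ∈ 𝒬, energy B X q ≤ ρ * Real.exp (-L) ^ 2)
    (hsum : √Q * (ρ * Real.exp (-L) ^ 2) ≤ 9000 * L * ε * ∑ q ∈ 𝒬, energy B X q) (hk : 1 ≤ k)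
    (hmain : (648000000 * L ^ 2 * ε) ^ k * (8 * k * L) ^ 4 ^ k < Real.exp (-L))
    (herr : (82944000000 * L ^ 2 * (Q : ℝ) ^ 5) ^ k < Real.exp (-L) * X) : False := by
  have hρ0 : 0 < ρ := by linarith
  have hQ' : (1 : ℝ) ≤ Q := by exact_mod_cast hQ
  have hX' : (0 : ℝ) < X := by exact_mod_cast hX
  set s := ρ / (9000 * L * ε) with hs
  have hs0 : 0 < s := by positivity
  have h1 := mul_pow_le_of_energy_le (s := s) (Real.exp_pos _) hcls hX hQ hB h𝒬 hle hρ0.le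
    hs0.le (by
      rw [hs, show √Q * (ρ / (9000 * L * ε) * Real.exp (-L) ^ 2) =
        √Q * (ρ * Real.exp (-L) ^ 2) / (9000 * L * ε) by ring, div_le_iff₀ (by positivity)]
      linarith) hk
  have hs2 : s ^ 2 * (81000000 * L ^ 2 * ε ^ 2) = ρ ^ 2 := by
    rw [hs]
    field_simp
    ring
  have h2 : 8 * ρ ≤ s ^ 2 * (648000000 * L ^ 2 * ε) := by
    refine le_of_mul_le_mul_left ?_ hε
    nlinarith
  have h3 : 1024 * (Q : ℝ) ^ 5 ≤ s ^ 2 * (82944000000 * L ^ 2 * (Q : ℝ) ^ 5) := by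
    have h4 : 1 ≤ s ^ 2 * (81000000 * L ^ 2) := by
      refine le_of_mul_le_mul_left ?_ (by positivity : 0 < ε ^ 2)
      nlinarith
    nlinarith [mul_le_mul_of_nonneg_left h4 (by positivity : 0 ≤ 1024 * (Q : ℝ) ^ 5)]
  have hlog : 0 ≤ Real.log (2 * Q) := Real.log_nonneg (by linarith)
  have h5 : (1 + k * Real.log (2 * Q)) ^ 4 ^ k ≤ (8 * k * L) ^ 4 ^ k := by
    gcongr
    exact one_add_mul_log_le hQ hk hL hQL
  have h6 : (8 * ρ) ^ k * (1 + k * Real.log (2 * Q)) ^ 4 ^ k ≤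
      (s ^ 2) ^ k * ((648000000 * L ^ 2 * ε) ^ k * (8 * k * L) ^ 4 ^ k) := by
    rw [← mul_assoc, ← mul_pow]
    gcongr
  have h7 : (1024 * (Q : ℝ) ^ 5) ^ k / X ≤
      (s ^ 2) ^ k * ((82944000000 * L ^ 2 * (Q : ℝ) ^ 5) ^ k / X) := by
    rw [mul_div_assoc', ← mul_pow]
    gcongr
  have h8 : (82944000000 * L ^ 2 * (Q : ℝ) ^ 5) ^ k / X < Real.exp (-L) := by
    rwa [div_lt_iff₀ hX']
  have h9 : (s ^ 2) ^ k * (2 * Real.exp (-L)) ≤ (s ^ 2) ^ k *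
      ((648000000 * L ^ 2 * ε) ^ k * (8 * k * L) ^ 4 ^ k +
        (82944000000 * L ^ 2 * (Q : ℝ) ^ 5) ^ k / X) := by
    rw [mul_add]
    linarith
  have h10 := le_of_mul_le_mul_left h9 (by positivity)
  linarith

theorem progBound_of_forall_card_le {A : Finset ℕ} (hA : NoSquareDiff A) {n₀ : ℕ} {β : ℝ}
    (h : ∀ n, n₀ ≤ n → ∀ A' : Finset ℕ, A' ⊆ Icc 1 n → NoSquareDiff A' → (A'.card : ℝ) ≤ β * n) :
    ProgBound A n₀ β := by
  classical
  intro d hd x n hn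
  refine h n hn _ (filter_subset _ _) fun i hi j hj m hm hij => ?_
  obtain ⟨-, a, ha, hax⟩ := mem_filter.1 hi
  obtain ⟨-, b, hb, hbx⟩ := mem_filter.1 hj
  refine hA a ha b hb (d * m) (by positivity) ?_
  have h1 : (a : ℤ) = b + (d * m) ^ 2 := by
    rw [hax, hbx, hij]
    push_cast
    ring
  exact_mod_cast h1

theorem sq_le_four_mul_exp {x : ℝ} (hx : 0 ≤ x) : x ^ 2 ≤ 4 * Real.exp x := by
  have h1 : x / 2 ≤ Real.exp (x / 2) := by linarith [Real.add_one_le_exp (x / 2)]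
  have h2 : Real.exp x = Real.exp (x / 2) ^ 2 := by
    rw [← Real.exp_nat_mul]
    congr 1
    push_cast
    ring
  rw [h2]
  nlinarith

theorem le_exp_of_le_pow {a : ℝ} {n : ℕ} (h : a ≤ 2.7 ^ n) : a ≤ Real.exp n := by
  have h1 : Real.exp n = Real.exp 1 ^ n := by rw [← Real.exp_nat_mul, mul_one]
  rw [h1]
  refine h.trans ?_
  gcongr
  linarith [Real.exp_one_gt_d9]

theorem moment_main_term_lt {c L : ℝ} (hc : 2000 ≤ c) (hL : Real.exp 1 ≤ L) {k : ℕ}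
    (hk : k = ⌈2 * Real.log L / c⌉₊) :
    (648000000 * L ^ 2 * (Real.exp (-c * L / Real.log L) / 20)) ^ k * (8 * k * L) ^ 4 ^ k <
      Real.exp (-L) := by
  have hL0 : 0 < L := (Real.exp_pos 1).trans_le hL
  obtain ⟨l, hl⟩ : ∃ l, l = Real.log L := ⟨_, rfl⟩
  have hLl : L = Real.exp l := by rw [hl, Real.exp_log hL0]
  have hl1 : 1 ≤ l := by
    rw [hLl] at hL
    exact Real.exp_le_exp.1 hL
  rw [← hl] at hk ⊢
  have hk1 : 1 ≤ k := by
    rw [hk]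
    exact Nat.one_le_ceil_iff.2 (by positivity)
  have hk1' : (1 : ℝ) ≤ k := by exact_mod_cast hk1
  have hkge : 2 * l / c ≤ k := by rw [hk]; exact Nat.le_ceil _
  have hklt : (k : ℝ) ≤ 2 * l / c + 1 := by
    rw [hk]
    exact (Nat.ceil_lt_add_one (by positivity)).le
  have hlc : 2 * l / c ≤ l / 1000 := by
    rw [div_le_div_iff₀ (by positivity) (by norm_num)]
    nlinarith
  have h4 : (4 : ℝ) ^ k ≤ 4 * Real.exp (l / 4) := by
    have e1 : (4 : ℝ) = Real.exp (Real.log 4) := (Real.exp_log (by norm_num)).symm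
    have e2 : Real.log 4 ≤ 2 := by
      rw [Real.log_le_iff_le_exp (by norm_num)]
      have := le_exp_of_le_pow (a := 4) (n := 2) (by norm_num)
      exact_mod_cast this
    have e3 : 0 ≤ Real.log 4 := Real.log_nonneg (by norm_num)
    calc (4 : ℝ) ^ k = Real.exp (k * Real.log 4) := by
          rw [Real.exp_nat_mul, ← e1]
      _ ≤ Real.exp (Real.log 4 + l / 4) := by
          refine Real.exp_le_exp.2 ?_
          nlinarith
      _ = _ := by rw [Real.exp_add, ← e1]
  have hbase : 648000000 * L ^ 2 * (Real.exp (-c * L / l) / 20) ≤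
      Real.exp (18 + 2 * l - c * L / l) := by
    have e1 : (32400000 : ℝ) ≤ Real.exp 18 := by
      have := le_exp_of_le_pow (a := 32400000) (n := 18) (by norm_num)
      exact_mod_cast this
    have e2 : L ^ 2 = Real.exp (2 * l) := by
      rw [hLl, ← Real.exp_nat_mul]
      norm_num
    rw [show 18 + 2 * l - c * L / l = 18 + 2 * l + (-c * L / l) by ring, Real.exp_add, Real.exp_add,
      e2]
    have e3 : 0 < Real.exp (2 * l) * Real.exp (-c * L / l) := by positivity
    nlinarith
  have hF : 8 * k * L ≤ Real.exp (3 + k + l) := by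
    rw [Real.exp_add, Real.exp_add, ← hLl]
    have : (8 : ℝ) ≤ Real.exp 3 := by
      exact_mod_cast le_exp_of_le_pow (a := 8) (n := 3) (by norm_num)
    have : (k : ℝ) ≤ Real.exp k := by linarith [Real.add_one_le_exp (k : ℝ)]
    gcongr
  have hexp : (648000000 * L ^ 2 * (Real.exp (-c * L / l) / 20)) ^ k * (8 * k * L) ^ 4 ^ k ≤
      Real.exp (k * (18 + 2 * l - c * L / l) + 4 ^ k * (3 + k + l)) := by
    have e1 : ((4 ^ k : ℕ) : ℝ) = 4 ^ k := by push_cast; rfl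
    rw [Real.exp_add, Real.exp_nat_mul, ← e1, Real.exp_nat_mul]
    gcongr
  refine hexp.trans_lt (Real.exp_lt_exp.2 ?_)
  have h5 : (4 : ℝ) ^ k * (3 + k + l) ≤ k * (24 * l * Real.exp (l / 4)) := by
    calc (4 : ℝ) ^ k * (3 + k + l) ≤ 4 * Real.exp (l / 4) * (6 * l) := by
          gcongr
          linarith
      _ = 1 * (24 * l * Real.exp (l / 4)) := by ring
      _ ≤ _ := by gcongr
  have h6 : L ≤ k * (c * L / (2 * l)) := by
    have e1 : 2 * l / c * (c * L / (2 * l)) = L := by field_simp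
    calc L = 2 * l / c * (c * L / (2 * l)) := e1.symm
      _ ≤ _ := by gcongr
  have hexp1 : 1 ≤ Real.exp (l / 4) := Real.one_le_exp (by linarith)
  have h7 : 18 + 2 * l + 24 * l * Real.exp (l / 4) < c * L / (2 * l) := by
    rw [lt_div_iff₀ (by positivity)]
    have e1 : 18 + 2 * l + 24 * l * Real.exp (l / 4) ≤ 44 * l * Real.exp (l / 4) := by nlinarith
    have e2 : l ^ 2 ≤ 16 * Real.exp (l / 2) := by
      have := sq_le_four_mul_exp (x := l / 2) (by linarith)
      nlinarith
    have e3 : Real.exp (l / 2) * Real.exp (l / 4) ≤ L := by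
      rw [hLl, ← Real.exp_add]
      exact Real.exp_le_exp.2 (by linarith)
    calc (18 + 2 * l + 24 * l * Real.exp (l / 4)) * (2 * l)
        ≤ (44 * l * Real.exp (l / 4)) * (2 * l) := by gcongr
      _ = 88 * Real.exp (l / 4) * l ^ 2 := by ring
      _ ≤ 88 * Real.exp (l / 4) * (16 * Real.exp (l / 2)) := by gcongr
      _ ≤ 1408 * L := by linarith
      _ < c * L := by nlinarith
  have h8 : (k : ℝ) * (18 + 2 * l + 24 * l * Real.exp (l / 4)) < k * (c * L / (2 * l)) := by
    gcongr
  have h9 : c * L / l = c * L / (2 * l) + c * L / (2 * l) := by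
    field_simp
    ring
  rw [h9]
  nlinarith

theorem moment_error_le {c L H : ℝ} (hc : 2000 ≤ c) (hL : Real.exp 1 ≤ L) {Q k : ℕ}
    (hk : k = ⌈2 * Real.log L / c⌉₊) (hQ : (Q : ℝ) ≤ Real.exp (6 * L))
    (hQ' : c / 2 ≤ Real.log L → (Q : ℝ) ≤ Real.exp (1 / 40 * L)) (hH0 : 0 ≤ H)
    (hH : L * Real.log L ≤ c * H) :
    (82944000000 * L ^ 2 * (Q : ℝ) ^ 5) ^ k ≤ Real.exp (42 * L + H / 2) := by
  have hL0 : 0 < L := (Real.exp_pos 1).trans_le hL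
  have hLe : 2.7 ≤ L := by linarith [Real.exp_one_gt_d9]
  obtain ⟨l, hl⟩ : ∃ l, l = Real.log L := ⟨_, rfl⟩
  have hLl : L = Real.exp l := by rw [hl, Real.exp_log hL0]
  have hl1 : 1 ≤ l := by
    rw [hLl] at hL
    exact Real.exp_le_exp.1 hL
  rw [← hl] at hk hH hQ'
  have h26 : (82944000000 : ℝ) ≤ Real.exp 26 := by
    have := le_exp_of_le_pow (a := 82944000000) (n := 26) (by norm_num)
    exact_mod_cast this
  have hL2 : L ^ 2 = Real.exp (2 * l) := by
    rw [hLl, ← Real.exp_nat_mul]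
    norm_num
  have hbase : ∀ b : ℝ, (Q : ℝ) ≤ Real.exp b →
      82944000000 * L ^ 2 * (Q : ℝ) ^ 5 ≤ Real.exp (26 + 2 * l + 5 * b) := by
    intro b hb
    have e1 : Real.exp (5 * b) = Real.exp b ^ 5 := by rw [← Real.exp_nat_mul]; norm_num
    rw [Real.exp_add, Real.exp_add, ← hL2, e1]
    gcongr
  have hlL : l ≤ L := by linarith [Real.add_one_le_exp l]
  rcases lt_or_ge l (c / 2) with h | h
  · have hk1 : k = 1 := by
      rw [hk, Nat.ceil_eq_iff (by norm_num)]
      constructor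
      · simp only [tsub_self, Nat.cast_zero]
        positivity
      · rw [Nat.cast_one, div_le_one (by positivity)]
        linarith
    rw [hk1, pow_one]
    refine (hbase _ hQ).trans (Real.exp_le_exp.2 ?_)
    linarith
  · have hkle : (k : ℝ) ≤ 4 * l / c := by
      have h1 : (k : ℝ) ≤ 2 * l / c + 1 := by
        rw [hk]
        exact (Nat.ceil_lt_add_one (by positivity)).le
      have h2 : 1 ≤ 2 * l / c := by
        rw [one_le_div (by positivity)]
        linarith
      have h3 : 4 * l / c = 2 * l / c + 2 * l / c := by ring
      linarith
    calc (82944000000 * L ^ 2 * (Q : ℝ) ^ 5) ^ k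
        ≤ Real.exp (26 + 2 * l + 5 * (1 / 40 * L)) ^ k := by
          gcongr
          exact hbase _ (hQ' h)
      _ = Real.exp (k * (26 + 2 * l + 5 * (1 / 40 * L))) := (Real.exp_nat_mul _ _).symm
      _ ≤ Real.exp (42 * L + H / 2) := by
          refine Real.exp_le_exp.2 ?_
          calc (k : ℝ) * (26 + 2 * l + 5 * (1 / 40 * L))
              ≤ 4 * l / c * (28 * l + L / 8) := by
                gcongr <;> linarith
            _ = (112 * l ^ 2 + (L * l) / 2) / c := by ring
            _ ≤ _ := by
                rw [div_le_iff₀ (by positivity)]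
                have e1 := sq_le_four_mul_exp (x := l) (by linarith)
                rw [← hLl] at e1
                nlinarith

theorem le_exp_mul {a L : ℝ} (n : ℕ) {b : ℝ} (hb : 0 ≤ b) (hL : 2.7 ≤ L) (h : a ≤ 2.7 ^ n)
    (hn : n ≤ 2.7 * b) : a ≤ Real.exp (b * L) :=
  (le_exp_of_le_pow h).trans (Real.exp_le_exp.2 (by nlinarith))

/-- The parameters of the circle method argument, for `α = exp (-L)`. -/
theorem exists_parameters {L ε c P : ℝ} {N : ℕ} (hL : 2.7 ≤ L) (hc : 2000 ≤ c) (hP : 0 ≤ P)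
    (hε : Real.exp (-(c + 2) * L) ≤ ε) (hN : Real.exp ((2 * c + P + 120) * L) ≤ N) :
    ∃ M K X n₀ : ℕ, 8 * M ^ 2 ≤ N ∧ 62208 ≤ (Real.exp (-L) / 4) ^ 4 * M ∧ n₀ ≤ N / 8 ∧
      288 ≤ K * (Real.exp (-L) / 4) ^ 2 ∧ 0 < X ∧
      128 * X ≤ (Real.exp (-L) / 4) ^ 4 * M ^ 2 ∧ (X : ℝ) ≤ ε * N ∧ n₀ * (2 * K) ^ 2 ≤ X ∧
      8 * (K : ℝ) ^ 2 ≤ ε * X ∧ 2 ≤ K ∧ (K : ℝ) ≤ Real.exp (6 * L) ∧ 0 < n₀ ∧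
      Real.exp (-(c + 24) * L) * N ≤ n₀ ∧ Real.exp (-(c + 10) * L) * N / 2 ≤ X := by
  have hL0 : 0 < L := by linarith
  have hN0 : (0 : ℝ) < N := (Real.exp_pos _).trans_le hN
  have hshift : ∀ a b : ℝ, b + a ≤ 2 * c + P + 120 → Real.exp (b * L) ≤ Real.exp (-a * L) * N := by
    intro a b hab
    calc Real.exp (b * L) ≤ Real.exp (-a * L) * Real.exp ((2 * c + P + 120) * L) := by
          rw [← Real.exp_add]
          refine Real.exp_le_exp.2 ?_
          nlinarith
      _ ≤ _ := by gcongr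
  have hmono : ∀ a b d : ℝ, a ≤ Real.exp (d * L) → b + d ≤ 2 * c + P + 120 →
      a * Real.exp (b * L) ≤ N := by
    intro a b d had hbd
    calc a * Real.exp (b * L) ≤ Real.exp (d * L) * Real.exp (b * L) := by gcongr
      _ ≤ Real.exp ((2 * c + P + 120) * L) := by
          rw [← Real.exp_add]
          refine Real.exp_le_exp.2 ?_
          nlinarith
      _ ≤ N := hN
  have h16 : (16 : ℝ) ≤ Real.exp (2 * L) :=
    le_exp_mul 3 (by norm_num) hL (by norm_num) (by norm_num)
  -- the bound for the denominators
  set K := ⌈4608 * Real.exp (2 * L)⌉₊ with hK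
  have hKge : 4608 * Real.exp (2 * L) ≤ K := Nat.le_ceil _
  have hK6 : (K : ℝ) ≤ Real.exp (6 * L) := by
    have h1 : (K : ℝ) ≤ 4608 * Real.exp (2 * L) + 1 := (Nat.ceil_lt_add_one (by positivity)).le
    have h2 : (4609 : ℝ) ≤ Real.exp (4 * L) :=
      le_exp_mul 10 (by norm_num) hL (by norm_num) (by norm_num)
    have h3 : Real.exp (6 * L) = Real.exp (4 * L) * Real.exp (2 * L) := by
      rw [← Real.exp_add]
      congr 1
      ring
    rw [h3]
    nlinarith [Real.exp_pos (2 * L)]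
  have hK12 : (K : ℝ) ^ 2 ≤ Real.exp (12 * L) := by
    calc (K : ℝ) ^ 2 ≤ Real.exp (6 * L) ^ 2 := by gcongr
      _ = Real.exp (12 * L) := by
          rw [← Real.exp_nat_mul]
          congr 1
          push_cast
          ring
  have hK2 : 2 ≤ K := by
    have : (2 : ℝ) ≤ K := by linarith
    exact_mod_cast this
  -- the length of the windows
  set y := Real.exp (-(c + 10) * L) * N with hy
  set X := ⌊y⌋₊ with hX
  have hy0 : 0 < y := by positivity
  have hXle : (X : ℝ) ≤ y := Nat.floor_le hy0.le
  have hXge : y / 2 ≤ X := by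
    have h1 : y < X + 1 := Nat.lt_floor_add_one y
    have h2 : Real.exp (2 * L) ≤ y := hshift _ _ (by linarith)
    linarith
  have hX0 : 0 < X := by
    have : (0 : ℝ) < X := by linarith
    exact_mod_cast this
  have hyN : ∀ a b d : ℝ, a ≤ Real.exp (d * L) → d ≤ c + 10 - b →
      a * y ≤ Real.exp (-b * L) * N := by
    intro a b d had hd
    calc a * y ≤ Real.exp (d * L) * (Real.exp (-(c + 10) * L) * N) := by gcongr
      _ = Real.exp (d * L) * Real.exp (-(c + 10) * L) * N := by ring
      _ ≤ Real.exp (-b * L) * N := by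
          rw [← Real.exp_add]
          gcongr
          nlinarith
  -- the number of squares
  set M := Nat.sqrt (N / 8) with hM
  have hM8 : 8 * M ^ 2 ≤ N := by
    have : M ^ 2 ≤ N / 8 := Nat.sqrt_le' (N / 8)
    omega
  have hN8 : 8 ≤ N := by
    have : (8 : ℝ) ≤ N := by
      have := hmono 8 0 2 (by linarith) (by linarith)
      simpa using this
    exact_mod_cast this
  have hM1 : 1 ≤ M := Nat.sqrt_pos.2 (by omega)
  have hM32 : (N : ℝ) ≤ 32 * (M : ℝ) ^ 2 := by
    have h1 : N / 8 < (M + 1) ^ 2 := Nat.lt_succ_sqrt' _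
    have h2 : (M + 1) ^ 2 ≤ (2 * M) ^ 2 := Nat.pow_le_pow_left (by omega) 2
    have h3 : N ≤ 32 * M ^ 2 := by
      rw [mul_pow] at h2
      omega
    exact_mod_cast h3
  have hα4 : (Real.exp (-L) / 4) ^ 4 = Real.exp (-4 * L) / 256 := by
    rw [div_pow, ← Real.exp_nat_mul]
    norm_num
  have hMb : 15925248 * Real.exp (4 * L) ≤ M := by
    refine le_of_sq_le_sq ?_ (by positivity)
    have h1 : 8115633 * 10 ^ 9 * Real.exp (8 * L) ≤ N :=
      hmono _ _ 15 (le_exp_mul 40 (by norm_num) hL (by norm_num) (by norm_num)) (by linarith)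
    have h2 : Real.exp (8 * L) = Real.exp (4 * L) ^ 2 := by
      rw [← Real.exp_nat_mul]
      congr 1
      push_cast
      ring
    rw [mul_pow, ← h2]
    nlinarith [Real.exp_pos (8 * L)]
  -- the length of the progressions
  set n₀ := X / (2 * K) ^ 2 with hn₀
  have hn₀ge : Real.exp (-(c + 24) * L) * N ≤ n₀ := by
    have h1 : (X : ℝ) ≤ (2 * K) ^ 2 * (n₀ + 1) := by
      exact_mod_cast (Nat.lt_mul_div_succ X (show 0 < (2 * K) ^ 2 by positivity)).le
    set z := Real.exp (-(c + 22) * L) * N with hz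
    have h2 : y = z * Real.exp (12 * L) := by
      rw [hy, hz, mul_right_comm, ← Real.exp_add]
      congr 2
      ring
    have h3 : z * Real.exp (12 * L) ≤ 8 * (n₀ + 1) * Real.exp (12 * L) := by
      have : (2 * (K : ℝ)) ^ 2 * (n₀ + 1) ≤ 4 * Real.exp (12 * L) * (n₀ + 1) := by
        rw [mul_pow]
        gcongr
        norm_num
      linarith
    have h4 : z ≤ 8 * (n₀ + 1) := le_of_mul_le_mul_right h3 (Real.exp_pos _)
    have h5 : Real.exp (2 * L) ≤ z := hshift _ _ (by linarith)
    have h6 : z = Real.exp (2 * L) * (Real.exp (-(c + 24) * L) * N) := by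
      rw [hz, ← mul_assoc, ← Real.exp_add]
      congr 2
      ring
    have h7 : 0 < Real.exp (-(c + 24) * L) * N := by positivity
    nlinarith
  refine ⟨M, K, X, n₀, hM8, ?_, ?_, ?_, hX0, ?_, ?_, Nat.div_mul_le_self _ _, ?_, hK2, hK6, ?_,
    hn₀ge, hXge⟩
  · rw [hα4]
    have h1 : Real.exp (-4 * L) * Real.exp (4 * L) = 1 := by
      rw [← Real.exp_add, ← Real.exp_zero]
      congr 1
      ring
    have h2 := mul_le_mul_of_nonneg_left hMb (Real.exp_pos (-4 * L)).le
    nlinarith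
  · have h1 : X ≤ N / 8 := by
      have h2 : 8 * y ≤ Real.exp (-0 * L) * N := hyN 8 0 2 (by linarith) (by linarith)
      have h3 : (8 * X : ℝ) ≤ N := by
        simp only [neg_zero, zero_mul, Real.exp_zero, one_mul] at h2
        linarith
      have h4 : 8 * X ≤ N := by exact_mod_cast h3
      omega
    exact (Nat.div_le_self _ _).trans h1
  · have h1 : (Real.exp (-L) / 4) ^ 2 = Real.exp (-2 * L) / 16 := by
      rw [div_pow, ← Real.exp_nat_mul]
      norm_num
    have h2 : Real.exp (-2 * L) * Real.exp (2 * L) = 1 := by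
      rw [← Real.exp_add, ← Real.exp_zero]
      congr 1
      ring
    have h3 := mul_le_mul_of_nonneg_left hKge (Real.exp_pos (-2 * L)).le
    rw [h1]
    nlinarith
  · have h1 : 1048576 * y ≤ Real.exp (-4 * L) * N :=
      hyN _ _ 6 (le_exp_mul 16 (by norm_num) hL (by norm_num) (by norm_num)) (by linarith)
    have h2 : Real.exp (-4 * L) * N ≤ Real.exp (-4 * L) * (32 * (M : ℝ) ^ 2) := by gcongr
    rw [hα4]
    linarith
  · have h1 : 1 * y ≤ Real.exp (-(c + 2) * L) * N :=
      hyN 1 (c + 2) 2 (by linarith) (by linarith)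
    have h2 : Real.exp (-(c + 2) * L) * N ≤ ε * N := by gcongr
    linarith
  · have h1 : 16 * Real.exp ((12 + (2 * c + 12)) * L) ≤ N := hmono _ _ 2 h16 (by linarith)
    have h2 : Real.exp (-(2 * c + 12) * L) * (16 * Real.exp ((12 + (2 * c + 12)) * L)) ≤
        Real.exp (-(2 * c + 12) * L) * N := by gcongr
    have h3 : Real.exp (-(2 * c + 12) * L) * (16 * Real.exp ((12 + (2 * c + 12)) * L)) =
        16 * Real.exp (12 * L) := by
      rw [mul_left_comm, ← Real.exp_add]
      congr 2
      ring
    have h4 : Real.exp (-(c + 2) * L) * y = Real.exp (-(2 * c + 12) * L) * N := by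
      rw [hy, ← mul_assoc, ← Real.exp_add]
      congr 2
      ring
    have hε0 : 0 < ε := (Real.exp_pos _).trans_le hε
    have h5 : Real.exp (-(c + 2) * L) * (y / 2) ≤ ε * X := by gcongr
    linarith
  · have : (0 : ℝ) < n₀ := lt_of_lt_of_le (by positivity) hn₀ge
    exact_mod_cast this

theorem natLog_two_le {K : ℕ} {L : ℝ} (hK : K ≠ 0) (hKL : (K : ℝ) ≤ Real.exp (6 * L)) :
    (Nat.log 2 K : ℝ) ≤ 9 * L := by
  have h1 : ((2 : ℝ) ^ Nat.log 2 K) ≤ Real.exp (6 * L) :=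
    le_trans (by exact_mod_cast Nat.pow_log_le_self 2 hK) hKL
  have h2 := Real.log_le_log (by positivity) h1
  rw [Real.log_pow, Real.log_exp] at h2
  have h3 := Real.log_two_gt_d9
  have h4 : (0 : ℝ) ≤ Nat.log 2 K := by positivity
  nlinarith

theorem exists_nat_forall_log_log_ge (T : ℝ) :
    ∃ N₀ : ℕ, ∀ N : ℕ, N₀ ≤ N → 1 ≤ N ∧ 0 < Real.log N ∧ T ≤ Real.log (Real.log N) := by
  have h1 : Filter.Tendsto (fun N : ℕ => Real.log N) Filter.atTop Filter.atTop :=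
    Real.tendsto_log_atTop.comp tendsto_natCast_atTop_atTop
  have h2 := Real.tendsto_log_atTop.comp h1
  obtain ⟨N₀, h⟩ := Filter.eventually_atTop.1 ((Filter.eventually_ge_atTop 1).and
    ((h1.eventually_gt_atTop 0).and (h2.eventually_ge_atTop T)))
  exact ⟨N₀, h⟩

/-- A density increment for sets of density `exp (-L)` without square differences, as long as
`exp (-L)` is not too small. -/
theorem false_of_forall_card_le {c L L₁ P : ℝ} {N : ℕ} {A : Finset ℕ} (hc : 2000 ≤ c)
    (hcL₁ : 2 * L₁ ≤ c) (hP : 0 ≤ P) (hL : Real.exp 1 ≤ L)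
    (hlarge : L₁ ≤ L →
      ∀ (B 𝒬 : Finset ℕ) (X Q : ℕ) (ε ρ : ℝ), ClassBound B X (2 * Q) (2 * Real.exp (-L)) →
        0 < X → 1 ≤ Q → B ⊆ range X → 𝒬 ⊆ Ico Q (2 * Q) → (Q : ℝ) ≤ Real.exp (6 * L) → 0 < ε →
        ε ≤ 1 / 1000 → ε ≤ ρ → (∀ q ∈ 𝒬, energy B X q ≤ ρ * Real.exp (-L) ^ 2) →
        √Q * (ρ * Real.exp (-L) ^ 2) ≤ 9000 * L * ε * ∑ q ∈ 𝒬, energy B X q →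
        Real.exp (P * L) ≤ X → (Q : ℝ) ≤ Real.exp (1 / 40 * L))
    (hN : 1 ≤ N) (hNL : (2 * c + P + 120) * L ≤ Real.log N) (hLN : L * Real.log L ≤ c * Real.log N)
    (hA : A ⊆ Icc 1 N) (hsq : NoSquareDiff A) (hcard : (A.card : ℝ) = Real.exp (-L) * N)
    (h : ∀ n : ℕ, Real.exp (-(c + 24) * L) * N ≤ n → 0 < n → ∀ A' : Finset ℕ, A' ⊆ Icc 1 n →
      NoSquareDiff A' →
        (A'.card : ℝ) ≤ (1 + Real.exp (-c * L / Real.log L) / 20) * Real.exp (-L) * n) :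
    False := by
  have hL27 : 2.7 ≤ L := by linarith [Real.exp_one_gt_d9]
  have hL0 : 0 < L := by linarith
  have hl1 : 1 ≤ Real.log L := by rwa [Real.le_log_iff_exp_le hL0]
  have hlL : Real.log L ≤ L := by linarith [Real.log_le_sub_one_of_pos hL0]
  have hN0 : (0 : ℝ) < N := by exact_mod_cast hN
  have hNexp : (N : ℝ) = Real.exp (Real.log N) := (Real.exp_log hN0).symm
  obtain ⟨ε, hε⟩ : ∃ ε, ε = Real.exp (-c * L / Real.log L) / 20 := ⟨_, rfl⟩
  have hε0 : 0 < ε := by rw [hε]; positivity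
  have hεge : Real.exp (-(c + 2) * L) ≤ ε := by
    have h20 : (20 : ℝ) ≤ Real.exp (2 * L) :=
      le_exp_mul 4 (by norm_num) hL27 (by norm_num) (by norm_num)
    have h1 : Real.exp (-(c + 2) * L) * 20 ≤ Real.exp (-c * L) := by
      calc Real.exp (-(c + 2) * L) * 20 ≤ Real.exp (-(c + 2) * L) * Real.exp (2 * L) := by gcongr
        _ = Real.exp (-c * L) := by rw [← Real.exp_add]; congr 1; ring
    have h2 : Real.exp (-c * L) ≤ Real.exp (-c * L / Real.log L) := by
      refine Real.exp_le_exp.2 ?_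
      rw [le_div_iff₀ (by linarith)]
      have : 0 ≤ c * L * (Real.log L - 1) :=
        mul_nonneg (by positivity) (by linarith)
      linarith
    rw [hε, le_div_iff₀ (by norm_num)]
    linarith
  have hεle : ε ≤ 1 / 1000 := by
    have h1 : Real.exp (-c * L / Real.log L) ≤ Real.exp (-4) := by
      refine Real.exp_le_exp.2 ?_
      rw [div_le_iff₀ (by linarith)]
      nlinarith
    have h2 : Real.exp (-4) ≤ 1 / 50 := by
      have h3 : (50 : ℝ) ≤ Real.exp (4 : ℕ) := le_exp_of_le_pow (by norm_num)
      rw [Real.exp_neg, ← one_div]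
      exact one_div_le_one_div_of_le (by norm_num) (by exact_mod_cast h3)
    rw [hε]
    linarith
  have hNexp' : Real.exp ((2 * c + P + 120) * L) ≤ N := by
    rw [hNexp]
    exact Real.exp_le_exp.2 hNL
  obtain ⟨M, K, X, n₀, hM8, hM, hn₀, hK, hX, hXM, hXN, hn₀X, hKX, hK2, hK6, hn₀0, hn₀N, hXge⟩ :=
    exists_parameters hL27 hc hP hεge hNexp'
  have hprog : ProgBound A n₀ ((1 + ε) * Real.exp (-L)) := by
    refine progBound_of_forall_card_le hsq fun n hn A' hA' hsq' => ?_
    rw [hε]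
    exact h n (hn₀N.trans (by exact_mod_cast hn)) (by omega) A' hA' hsq'
  have hα1 : Real.exp (-L) ≤ 1 := Real.exp_le_one_iff.2 (by linarith)
  obtain ⟨B, hB, hcls, ρ, hερ, hle, hsum⟩ := exists_winSet_energy_ge hA hsq (Real.exp_pos _) hα1
    hcard hN hε0 hεle hprog hM8 hM hn₀ hK hX hXM hXN hn₀X hKX
  obtain ⟨Q, hQ2, hQK, hQ⟩ := exists_dyadic_sum_ge (energy_nonneg B X) hK2
  set 𝒬 := (Icc 2 K).filter (· ∈ Ico Q (2 * Q)) with h𝒬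
  have h𝒬sub : 𝒬 ⊆ Ico Q (2 * Q) := fun q hq => (mem_filter.1 hq).2
  have hclsQ : ClassBound B X (2 * Q) (2 * Real.exp (-L)) := by
    intro d hd hdQ x
    refine (hcls d hd (hdQ.trans (by omega)) x).trans ?_
    gcongr
    linarith
  have hleQ : ∀ q ∈ 𝒬, energy B X q ≤ ρ * Real.exp (-L) ^ 2 := fun q hq => by
    have := mem_Icc.1 (mem_filter.1 hq).1
    exact hle q (mem_Icc.2 ⟨this.1, by omega⟩)
  have hQ6 : (Q : ℝ) ≤ Real.exp (6 * L) := le_trans (by exact_mod_cast hQK) hK6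
  have hsumQ : √Q * (ρ * Real.exp (-L) ^ 2) ≤ 9000 * L * ε * ∑ q ∈ 𝒬, energy B X q := by
    have hlog := natLog_two_le (by omega) hK6
    have hS : 0 ≤ ∑ q ∈ 𝒬, energy B X q := sum_nonneg fun q _ => energy_nonneg B X q
    calc √Q * (ρ * Real.exp (-L) ^ 2)
        ≤ √Q * (1000 * ε * ∑ q ∈ Icc 2 K, (√q)⁻¹ * energy B X q) := by gcongr
      _ = 1000 * ε * (√Q * ∑ q ∈ Icc 2 K, (√q)⁻¹ * energy B X q) := by ring
      _ ≤ 1000 * ε * (9 * L * ∑ q ∈ 𝒬, energy B X q) := by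
          exact mul_le_mul_of_nonneg_left (hQ.trans (by gcongr)) (by positivity)
      _ = _ := by ring
  have hXexp : ∀ a : ℝ, a + 1 ≤ Real.log N - (c + 10) * L → Real.exp a ≤ X := by
    intro a ha
    have h1 : 2 * Real.exp a ≤ Real.exp (-(c + 10) * L) * N := by
      have h2 : (2 : ℝ) ≤ Real.exp 1 := by linarith [Real.exp_one_gt_d9]
      calc 2 * Real.exp a ≤ Real.exp 1 * Real.exp a := by gcongr
        _ ≤ Real.exp (-(c + 10) * L) * Real.exp (Real.log N) := by
            rw [← Real.exp_add, ← Real.exp_add]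
            refine Real.exp_le_exp.2 ?_
            linarith
        _ = _ := by rw [← hNexp]
    linarith
  have hcL : 0 ≤ c * L := by positivity
  have hPL : 0 ≤ P * L := by positivity
  obtain ⟨k, hk⟩ : ∃ k, k = ⌈2 * Real.log L / c⌉₊ := ⟨_, rfl⟩
  have hk1 : 1 ≤ k := by
    rw [hk]
    exact Nat.ceil_pos.2 (by positivity)
  have herr := moment_error_le hc hL hk hQ6 (fun hlog => hlarge (by linarith) B 𝒬 X Q ε ρ hclsQ hX
    (by omega) hB h𝒬sub hQ6 hε0 hεle hερ hleQ hsumQ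
    (hXexp _ (by linarith))) (by linarith) hLN
  have hmain := moment_main_term_lt hc hL hk
  rw [← hε] at hmain
  refine false_of_dyadic_energy (by linarith) hclsQ hX (by omega) hB h𝒬sub hQ6 hε0 hερ hleQ hsumQ
    hk1 hmain (herr.trans_lt ?_)
  calc Real.exp (42 * L + Real.log N / 2) < Real.exp (-L) * Real.exp (44 * L + Real.log N / 2) := by
        rw [← Real.exp_add]
        exact Real.exp_lt_exp.2 (by linarith)
    _ ≤ Real.exp (-L) * X := by
        gcongr
        exact hXexp _ (by linarith)

theorem statement_12 :
    ∃ c > (0 : ℝ), ∃ C > (0 : ℝ), ∃ N₀ : ℕ, ∀ N : ℕ, N₀ ≤ N →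
      ∀ A : Finset ℕ, A ⊆ Finset.Icc 1 N → NoSquareDiff A →
      ∀ α : ℝ, α = (A.card : ℝ) / N → 0 < α → α ≤ Real.exp (-Real.exp 1) →
      ∀ ν : ℝ, ν = Real.exp (-c * Real.log (1 / α) / Real.log (Real.log (1 / α))) →
      -- (1) A is sparse
      (c * Real.log N / Real.log (Real.log N) ≤ Real.log (1 / α)) ∨
      -- (2) there is a density increment
      (∃ N' : ℕ, c * α ^ C * N ≤ (N' : ℝ) ∧
        ∃ A' : Finset ℕ, A' ⊆ Finset.Icc 1 N' ∧ NoSquareDiff A' ∧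
          (1 + ν / 20) * α ≤ (A'.card : ℝ) / N') := by
  obtain ⟨L₁, P, hlarge⟩ := exists_forall_le_exp (κ := 1 / 40) (by norm_num)
  obtain ⟨c, hc, hcL₁⟩ : ∃ c : ℝ, 2000 ≤ c ∧ 2 * L₁ ≤ c :=
    ⟨max 2000 (2 * L₁), le_max_left _ _, le_max_right _ _⟩
  obtain ⟨P', hP'0, hP'⟩ : ∃ P' : ℝ, 0 ≤ P' ∧ P ≤ P' := ⟨max 0 P, le_max_left _ _, le_max_right _ _⟩
  obtain ⟨N₀, hN₀⟩ := exists_nat_forall_log_log_ge (c * (2 * c + P' + 120))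
  refine ⟨c, by linarith, 2 * c + 24, by linarith, N₀, fun N hN A hA hsq α hα hα0 hαe ν hν => ?_⟩
  obtain ⟨hN1, hlogN, hloglogN⟩ := hN₀ N hN
  by_contra! hcon
  obtain ⟨hsparse, hincr⟩ := hcon
  have hN0 : (0 : ℝ) < N := by exact_mod_cast hN1
  obtain ⟨L, hLdef⟩ : ∃ L, L = Real.log (1 / α) := ⟨_, rfl⟩
  have hαL : α = Real.exp (-L) := by
    rw [hLdef, one_div, Real.log_inv, neg_neg, Real.exp_log hα0]
  have hL : Real.exp 1 ≤ L := by
    rw [hαL, Real.exp_le_exp] at hαe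
    linarith
  have hL1 : 1 ≤ L := by linarith [Real.exp_one_gt_d9]
  rw [← hLdef] at hsparse hν
  have hT1 : 1 ≤ c * (2 * c + P' + 120) := by nlinarith
  rw [lt_div_iff₀ (by linarith)] at hsparse
  have hNL : (2 * c + P' + 120) * L ≤ Real.log N := by
    have h1 : L * (c * (2 * c + P' + 120)) ≤ L * Real.log (Real.log N) := by gcongr
    have h2 : c * ((2 * c + P' + 120) * L) ≤ c * Real.log N := by linarith
    exact le_of_mul_le_mul_left h2 (by linarith)
  have hLN : L * Real.log L ≤ c * Real.log N := by
    have h1 : L ≤ Real.log N := by nlinarith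
    have h2 : L * Real.log L ≤ L * Real.log (Real.log N) := by gcongr
    linarith
  refine false_of_forall_card_le hc hcL₁ hP'0 hL ?_ hN1 hNL hLN hA hsq ?_ ?_
  · intro hLL₁ B 𝒬 X Q ε ρ h1 h2 h3 h4 h5 h6 h7 h8 h9 h10 h11 h12
    exact hlarge L hLL₁ B 𝒬 X Q ε ρ h1 h2 h3 h4 h5 h6 h7 h8 h9 h10 h11
      (le_trans (Real.exp_le_exp.2 (by gcongr)) h12)
  · rw [← hαL, hα, div_mul_cancel₀ _ hN0.ne']
  · intro n hn hn0 A' hA' hsq'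
    have hn0' : (0 : ℝ) < n := by exact_mod_cast hn0
    have h1 : c * α ^ (2 * c + 24) ≤ Real.exp (-(c + 24) * L) := by
      have h2 : c ≤ Real.exp (c * L) := by nlinarith [Real.add_one_le_exp (c * L)]
      rw [hαL, ← Real.exp_mul]
      calc c * Real.exp (-L * (2 * c + 24))
          ≤ Real.exp (c * L) * Real.exp (-L * (2 * c + 24)) := by gcongr
        _ ≤ _ := by
            rw [← Real.exp_add]
            refine Real.exp_le_exp.2 ?_
            nlinarith
    have h3 := hincr n (le_trans (by gcongr) hn) A' hA' hsq'
    rw [div_lt_iff₀ hn0', hν, hαL] at h3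
    exact h3.le
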